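/- For every convex body K in R^d, if P_m(K) denotes the set of convex polytopes with vertices in the lattice (1/m)Z^d contained in K, and n is the number of points of (1/m)Z^d in K, then there exist constants c_1, c_2 > 0 depending only on d with c_1 · n^{(d-1)/(d+1)} ≤ log |P_m(K)| ≤ c_2 · n^{(d-1)/(d+1)} for all sufficiently large m. -/

import Mathlib

/-! Both bounds are affine invariant, so `K` may be taken to be comparable to a ball or a cube and
`(1/m)ℤ^d` to be an arbitrary lattice.

For the lower bound, consider a thin shell of a large ball. If `x` lies in the shell, then a lattice
translate `x + z` in the ball with `⟪x, z⟫ ≥ 0` must have `z` short, and there are few such `z`.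
Deleting from the shell the thin slabs `{x | |⟪z, x⟫| ≤ const}` for these `z` keeps half of its
volume. By averaging over translates, what is left contains as many points of some translate of the
lattice as its volume predicts, and they are convex independent. Distinct nonempty subsets of a
convex independent set have distinct convex hulls.

For the upper bound, look at a polytope from each of the `2 d` coordinate directions. Its lower
envelope over a hyperplane is determined up to a constant by the distribution of its gradient, that
is, by the normals of the facets weighted by their volumes (a form of Minkowski's uniqueness
theorem). For lattice polytopes these normals, suitably scaled, are lattice vectors, and the sum of
their lengths is at most a multiple of the surface area. The finite sets of lattice vectors with
such a bound on the sum of the lengths are counted like partitions into distinct parts, by a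
Chernoff bound, which yields the exponent `(d - 1) / (d + 1)`. -/

open MeasureTheory Set Filter
noncomputable section

/-- Euclidean space `ℝ^d`. -/
abbrev E (d : ℕ) := EuclideanSpace ℝ (Fin d)

/-- The scaled integer lattice `(1/m)ℤ^d` in `ℝ^d`. -/
def scaledLattice (d m : ℕ) : Set (E d) := {v | ∀ i, ∃ z : ℤ, v i = z / m}

/-- `𝒫_m(K)`: the collection of (nonempty) convex polytopes contained in `K` all of whose
vertices lie in the lattice `(1/m)ℤ^d`. -/
def latticePolytopes (d m : ℕ) (K : Set (E d)) : Set (Set (E d)) :=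
  {P | P.Nonempty ∧ P ⊆ K ∧
    ∃ F : Finset (E d), (↑F : Set (E d)) ⊆ scaledLattice d m ∧ P = convexHull ℝ (↑F : Set (E d))}

section LatticeCounting

open scoped Pointwise

variable {V ι : Type*} [NormedAddCommGroup V] [NormedSpace ℝ V] [Finite ι]
  (b : Module.Basis ι ℝ V)

theorem finite_closedBall_inter_span (x : V) (r : ℝ) :
    (Metric.closedBall x r ∩ (Submodule.span ℤ (range b) : Set V)).Finite :=
  haveI := Module.Finite.of_basis b
  haveI := FiniteDimensional.proper ℝ V
  ZSpan.setFinite_inter b Metric.isBounded_closedBall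

variable [MeasurableSpace V] [BorelSpace V] (μ : Measure V) [μ.IsAddHaarMeasure]

theorem measureReal_fundamentalDomain_pos : 0 < μ.real (ZSpan.fundamentalDomain b) :=
  haveI := Module.Finite.of_basis b
  haveI := FiniteDimensional.proper ℝ V
  ENNReal.toReal_pos (ZSpan.measure_fundamentalDomain_ne_zero b)
    (ZSpan.fundamentalDomain_isBounded b).measure_lt_top.ne

omit [Finite ι] in
theorem card_mul_measureReal_fundamentalDomain_le [Fintype ι] {T : Finset V} {r : ℝ}
    (hT : ↑T ⊆ Metric.closedBall (0 : V) r ∩ (Submodule.span ℤ (range b) : Set V)) (hr : 0 ≤ r) :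
    T.card * μ.real (ZSpan.fundamentalDomain b) ≤
      (r + ∑ i, ‖b i‖) ^ Module.finrank ℝ V * μ.real (Metric.ball 0 1) := by
  have := Module.Finite.of_basis b
  have := FiniteDimensional.proper ℝ V
  set F := ZSpan.fundamentalDomain b
  have disjoint_translates : (T : Set V).PairwiseDisjoint fun z ↦ z +ᵥ F := by
    intro z hz w hw hzw
    refine Set.disjoint_left.2 fun x hxz hxw ↦ hzw ?_
    have mem_neg {u : V} (hu : u ∈ T) (hx : x ∈ u +ᵥ F) :
        (-⟨u, (hT hu).2⟩ : Submodule.span ℤ (range b)) +ᵥ x ∈ F := by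
      simpa [Submodule.vadd_def, mem_vadd_set_iff_neg_vadd_mem] using hx
    have := (ZSpan.exist_unique_vadd_mem_fundamentalDomain b x).unique (mem_neg hz hxz)
      (mem_neg hw hxw)
    simpa using this
  have translates_subset : ⋃ z ∈ T, z +ᵥ F ⊆ Metric.closedBall (0 : V) (r + ∑ i, ‖b i‖) := by
    refine iUnion₂_subset fun z hz ↦ ?_
    rintro _ ⟨y, hy, rfl⟩
    have hz' : ‖z‖ ≤ r := by simpa using (hT hz).1
    have hy' : ‖y‖ ≤ ∑ i, ‖b i‖ := by
      simpa [ZSpan.fract_eq_self.2 hy] using ZSpan.norm_fract_le b y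
    simpa using (norm_add_le z y).trans (add_le_add hz' hy')
  calc T.card * μ.real F = ∑ z ∈ T, μ.real (z +ᵥ F) := by simp [measureReal_def]
    _ = μ.real (⋃ z ∈ T, z +ᵥ F) := by
      refine (measureReal_biUnion_finset disjoint_translates
        (fun z _ ↦ (ZSpan.fundamentalDomain_measurableSet b).const_vadd z) fun z _ ↦ ?_).symm
      simpa using (ZSpan.fundamentalDomain_isBounded b).measure_lt_top.ne
    _ ≤ μ.real (Metric.closedBall (0 : V) (r + ∑ i, ‖b i‖)) :=
      measureReal_mono translates_subset measure_closedBall_lt_top.ne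
    _ = _ := Measure.addHaar_real_closedBall μ 0
      (add_nonneg hr (Finset.sum_nonneg fun i _ ↦ norm_nonneg _))

theorem lintegral_fundamentalDomain_tsum_indicator {G : Set V} (hG : MeasurableSet G) :
    ∫⁻ x in ZSpan.fundamentalDomain b,
      ∑' z : Submodule.span ℤ (range b), (-z +ᵥ G).indicator 1 x ∂μ = μ G := by
  have : VAddInvariantMeasure (Submodule.span ℤ (range b)) V μ :=
    inferInstanceAs (VAddInvariantMeasure (Submodule.span ℤ (range b)).toAddSubgroup V μ)
  rw [lintegral_tsum fun z ↦ ((measurable_one.indicator (hG.const_vadd _)).aemeasurable),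
    (ZSpan.isAddFundamentalDomain b μ).measure_eq_tsum G, ← (Equiv.neg _).tsum_eq]
  refine tsum_congr fun z ↦ ?_
  rw [lintegral_indicator_one (hG.const_vadd _), Measure.restrict_apply (hG.const_vadd _),
    Equiv.neg_apply, neg_neg]

theorem exists_translate_card_ge {G : Set V} (hG : MeasurableSet G) (hGb : Bornology.IsBounded G) :
    ∃ x ∈ ZSpan.fundamentalDomain b, ∃ T : Finset V,
      ↑T ⊆ (Submodule.span ℤ (range b) : Set V) ∧ (∀ z ∈ T, x + z ∈ G) ∧
      μ.real G ≤ T.card * μ.real (ZSpan.fundamentalDomain b) := by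
  classical
  have := Module.Finite.of_basis b
  have := FiniteDimensional.proper ℝ V
  let L := Submodule.span ℤ (range b)
  let count : V → ENNReal := fun x ↦ ∑' z : L, (-z +ᵥ G).indicator 1 x
  have lintegral_count : ∫⁻ x in ZSpan.fundamentalDomain b, count x ∂μ = μ G :=
    lintegral_fundamentalDomain_tsum_indicator b μ hG
  obtain ⟨x, hxF, hx⟩ := exists_setLAverage_le (f := count) (μ := μ)
    (ZSpan.measure_fundamentalDomain_ne_zero b)
    (ZSpan.fundamentalDomain_measurableSet b).nullMeasurableSet
    (lintegral_count ▸ hGb.measure_lt_top.ne)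
  have finite_count : {z : L | x + z ∈ G}.Finite := by
    refine Finite.of_finite_image ((ZSpan.setFinite_inter b (hGb.vadd (-x))).subset ?_)
      Subtype.val_injective.injOn
    rintro _ ⟨z, hz, rfl⟩
    exact ⟨⟨x + z, hz, by simp⟩, z.2⟩
  have count_eq : count x = finite_count.toFinset.card := by
    have : ∀ z : L, (-z +ᵥ G).indicator (1 : V → ENNReal) x =
        if z ∈ finite_count.toFinset then 1 else 0 := fun z ↦ by
      simp [indicator_apply, mem_vadd_set_iff_neg_vadd_mem, Submodule.vadd_def, add_comm]
    simp only [count, this]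
    rw [tsum_eq_sum fun z hz ↦ if_neg hz, Finset.sum_congr rfl fun z hz ↦ if_pos hz]
    simp
  refine ⟨x, hxF, finite_count.toFinset.map (Function.Embedding.subtype _), ?_, ?_, ?_⟩
  · intro z hz
    simp only [Finset.coe_map, mem_image, Function.Embedding.subtype_apply] at hz
    obtain ⟨z, -, rfl⟩ := hz
    exact z.2
  · simp only [Finset.mem_map, Finite.mem_toFinset]
    rintro _ ⟨z, hz, rfl⟩
    exact hz
  · rw [count_eq, setLAverage_eq, lintegral_count, ENNReal.div_le_iff
      (ZSpan.measure_fundamentalDomain_ne_zero b)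
      (ZSpan.fundamentalDomain_isBounded b).measure_lt_top.ne] at hx
    simpa [Measure.real] using ENNReal.toReal_mono (ENNReal.mul_ne_top (by simp)
      (ZSpan.fundamentalDomain_isBounded b).measure_lt_top.ne) hx

end LatticeCounting

section InverseNormSum

theorem sum_inv_norm_le_of_half_lt {V : Type*} [SeminormedAddCommGroup V] {T : Finset V} {A r : ℝ}
    {k : ℕ} (hr : 0 < r) (hT : ∀ z ∈ T, r / 2 < ‖z‖) (hcard : T.card ≤ A * r ^ (k + 1)) :
    ∑ z ∈ T, ‖z‖⁻¹ ≤ 2 * A * r ^ k :=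
  calc ∑ z ∈ T, ‖z‖⁻¹ ≤ ∑ _z ∈ T, (r / 2)⁻¹ := by
        refine Finset.sum_le_sum fun z hz ↦ ?_
        have := (hT z hz).le
        gcongr
    _ = T.card * (r / 2)⁻¹ := by rw [Finset.sum_const, nsmul_eq_mul]
    _ ≤ A * r ^ (k + 1) * (r / 2)⁻¹ := by gcongr
    _ = 2 * A * r ^ k := by field_simp; ring

theorem sum_inv_norm_le_of_card_le {V : Type*} [SeminormedAddCommGroup V] {s : Set V} {D A : ℝ}
    {k : ℕ} (hD : 0 < D) (hA₀ : 0 ≤ A) (hs : (Metric.closedBall 0 D ∩ s).Finite)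
    (hA : ∀ r, D ≤ r → ∀ T : Finset V, ↑T ⊆ Metric.closedBall 0 r ∩ s → T.card ≤ A * r ^ (k + 2))
    {r : ℝ} (hr : 0 < r) {T : Finset V} (hT : ↑T ⊆ Metric.closedBall 0 r ∩ s) :
    ∑ z ∈ T, ‖z‖⁻¹ ≤ ∑ z ∈ hs.toFinset, ‖z‖⁻¹ + 4 * A * r ^ (k + 1) := by
  obtain ⟨j, hj⟩ := pow_unbounded_of_one_lt (r / D) one_lt_two
  replace hj : r ≤ 2 ^ j * D := ((div_lt_iff₀ hD).1 hj).le
  induction j generalizing r T with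
  | zero =>
    have hTD : T ⊆ hs.toFinset := fun z hz ↦ by
      rw [Finite.mem_toFinset]
      exact inter_subset_inter_left s (Metric.closedBall_subset_closedBall (by simpa using hj))
        (hT hz)
    have := Finset.sum_le_sum_of_subset_of_nonneg hTD fun z _ _ ↦ inv_nonneg.2 (norm_nonneg z)
    have : 0 ≤ 4 * A * r ^ (k + 1) := by positivity
    linarith
  | succ j ih =>
    by_cases hrj : r ≤ 2 ^ j * D
    · exact ih hr hT hrj
    have inner := ih (r := r / 2) (T := T.filter (‖·‖ ≤ r / 2)) (by positivity)
      (fun z hz ↦ by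
        have := Finset.mem_filter.1 hz
        exact ⟨by simpa using this.2, (hT this.1).2⟩)
      (by rw [pow_succ] at hj; linarith)
    have outer : ∑ z ∈ T with ¬ ‖z‖ ≤ r / 2, ‖z‖⁻¹ ≤ 2 * A * r ^ (k + 1) := by
      have hDr : D ≤ r := (le_mul_of_one_le_left hD.le (one_le_pow₀ one_le_two)).trans
        (not_le.1 hrj).le
      refine sum_inv_norm_le_of_half_lt hr (fun z hz ↦ not_le.1 (Finset.mem_filter.1 hz).2)
        (hA r hDr _ ?_)
      exact (Finset.coe_subset.2 (Finset.filter_subset _ _)).trans hT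
    have half_pow : (r / 2) ^ (k + 1) ≤ r ^ (k + 1) / 2 := by
      rw [div_pow]
      gcongr
      exact le_self_pow₀ one_le_two (by simp)
    have := mul_le_mul_of_nonneg_left half_pow (mul_nonneg zero_le_four hA₀)
    rw [← Finset.sum_filter_add_sum_filter_not T (‖·‖ ≤ r / 2)]
    linarith

variable {V ι : Type*} [NormedAddCommGroup V] [NormedSpace ℝ V] [MeasurableSpace V] [BorelSpace V]
  [Finite ι] (b : Module.Basis ι ℝ V) (μ : Measure V) [μ.IsAddHaarMeasure]

theorem eventually_card_le :
    ∀ᶠ r : ℝ in atTop, ∀ T : Finset V,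
      ↑T ⊆ Metric.closedBall (0 : V) r ∩ (Submodule.span ℤ (range b) : Set V) →
      (T.card : ℝ) ≤ (2 * r) ^ Module.finrank ℝ V * μ.real (Metric.ball 0 1) /
        μ.real (ZSpan.fundamentalDomain b) := by
  have := Fintype.ofFinite ι
  filter_upwards [eventually_ge_atTop 0, eventually_ge_atTop (∑ i, ‖b i‖)] with r hr₀ hr T hT
  rw [le_div_iff₀ (measureReal_fundamentalDomain_pos b μ)]
  refine (card_mul_measureReal_fundamentalDomain_le b μ hT hr₀).trans ?_
  have : 0 ≤ ∑ i, ‖b i‖ := Finset.sum_nonneg fun i _ ↦ norm_nonneg _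
  gcongr
  linarith

theorem eventually_sum_inv_norm_le (hn : 2 ≤ Module.finrank ℝ V) :
    ∀ᶠ r : ℝ in atTop, ∀ T : Finset V,
      ↑T ⊆ Metric.closedBall (0 : V) r ∩ (Submodule.span ℤ (range b) : Set V) →
      ∑ z ∈ T, ‖z‖⁻¹ ≤ 8 * 2 ^ Module.finrank ℝ V * μ.real (Metric.ball 0 1) /
        μ.real (ZSpan.fundamentalDomain b) * r ^ (Module.finrank ℝ V - 1) := by
  have := Module.Finite.of_basis b
  obtain ⟨k, hk⟩ := Nat.exists_eq_add_of_le' hn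
  obtain ⟨D, hD⟩ := eventually_atTop.1 ((eventually_gt_atTop 0).and (eventually_card_le b μ))
  set A := 2 ^ (k + 2) * μ.real (Metric.ball (0 : V) 1) / μ.real (ZSpan.fundamentalDomain b)
  have hA : 0 < A := by
    have := measureReal_fundamentalDomain_pos b μ
    have : 0 < μ.real (Metric.ball (0 : V) 1) :=
      ENNReal.toReal_pos (Metric.measure_ball_pos μ 0 one_pos).ne' measure_ball_lt_top.ne
    positivity
  have card_le : ∀ r, D ≤ r → ∀ T : Finset V,
      ↑T ⊆ Metric.closedBall (0 : V) r ∩ (Submodule.span ℤ (range b) : Set V) →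
      T.card ≤ A * r ^ (k + 2) := fun r hr T hT ↦ by
    convert (hD r hr).2 T hT using 1
    simp only [A, hk]
    ring
  have hs := finite_closedBall_inter_span b 0 D
  filter_upwards [eventually_ge_atTop 1,
    eventually_ge_atTop ((∑ z ∈ hs.toFinset, ‖z‖⁻¹) / (4 * A))] with r hr₁ hr T hT
  have base_le : ∑ z ∈ hs.toFinset, ‖z‖⁻¹ ≤ 4 * A * r ^ (k + 1) := by
    rw [div_le_iff₀' (by positivity)] at hr
    exact hr.trans (by gcongr; exact le_self_pow₀ hr₁ (by simp))
  have := sum_inv_norm_le_of_card_le (hD D le_rfl).1 hA.le hs card_le (one_pos.trans_le hr₁) hT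
  rw [hk, show k + 2 - 1 = k + 1 by omega]
  calc ∑ z ∈ T, ‖z‖⁻¹ ≤ 8 * A * r ^ (k + 1) := by linarith
    _ = _ := by simp only [A]; ring

end InverseNormSum

section Shell

variable {V : Type*} [NormedAddCommGroup V] [InnerProductSpace ℝ V] [FiniteDimensional ℝ V]
  [MeasurableSpace V] [BorelSpace V]

theorem volume_closedBall_inter_slab_le {u : V} (hu : ‖u‖ = 1) {R s : ℝ} (hR : 0 ≤ R)
    (hs : 0 ≤ s) :
    volume.real (Metric.closedBall 0 R ∩ {x | |inner ℝ u x| ≤ s}) ≤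
      2 * s * (2 * R) ^ (Module.finrank ℝ V - 1) := by
  classical
  have : Nontrivial V := ⟨u, 0, fun h ↦ by simp [h] at hu⟩
  have hpos : 0 < Module.finrank ℝ V := Module.finrank_pos
  let i₀ : Fin (Module.finrank ℝ V) := ⟨0, hpos⟩
  obtain ⟨e, he⟩ := Orthonormal.exists_orthonormalBasis_extension_of_card_eq
    (𝕜 := ℝ) (E := V) (ι := Fin (Module.finrank ℝ V)) (by simp) (v := fun _ ↦ u) (s := {i₀})
    (by simp [hu])
  replace he : e i₀ = u := he i₀ rfl
  let w : Fin (Module.finrank ℝ V) → ℝ := Function.update (fun _ ↦ R) i₀ s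
  have hw : ∀ i, 0 ≤ w i := fun i ↦ by
    rcases eq_or_ne i i₀ with rfl | hi <;> simp [w, *]
  have hmp : MeasurePreserving (fun x ↦ WithLp.ofLp (e.repr x)) volume volume :=
    (EuclideanSpace.volume_preserving_symm_measurableEquiv_toLp _).comp e.measurePreserving_repr
  have subset_box : Metric.closedBall 0 R ∩ {x | |inner ℝ u x| ≤ s} ⊆
      (fun x ↦ WithLp.ofLp (e.repr x)) ⁻¹' Icc (-w) w := by
    rintro x ⟨hxR, hxs⟩
    have : ∀ i, |e.repr x i| ≤ w i := fun i ↦ by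
      rw [e.repr_apply_apply]
      rcases eq_or_ne i i₀ with rfl | hi
      · simpa [w, he] using hxs
      · simpa [w, hi] using (abs_real_inner_le_norm _ _).trans (by simpa using hxR)
    exact ⟨fun i ↦ (abs_le.1 (this i)).1, fun i ↦ (abs_le.1 (this i)).2⟩
  calc _ ≤ volume.real ((fun x ↦ WithLp.ofLp (e.repr x)) ⁻¹' Icc (-w) w) :=
        measureReal_mono subset_box (by
          rw [hmp.measure_preimage measurableSet_Icc.nullMeasurableSet]
          exact isCompact_Icc.measure_lt_top.ne)
    _ = ∏ i, 2 * w i := by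
      rw [measureReal_def, hmp.measure_preimage measurableSet_Icc.nullMeasurableSet,
        Real.volume_Icc_pi_toReal (fun i ↦ by simpa using hw i)]
      exact Finset.prod_congr rfl fun i _ ↦ by simp; ring
    _ = 2 * s * (2 * R) ^ (Module.finrank ℝ V - 1) := by
      rw [← Finset.mul_prod_erase _ _ (Finset.mem_univ i₀), Finset.prod_congr rfl
        (g := fun _ ↦ 2 * R) fun i hi ↦ by simp [w, Finset.ne_of_mem_erase hi]]
      simp [w]

/-- The spherical shell of outer radius `R` and thickness `δ` around the origin. -/
def shell (V : Type*) [SeminormedAddCommGroup V] (R δ : ℝ) : Set V :=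
  Metric.closedBall 0 R \ Metric.closedBall 0 (R - δ)

omit [InnerProductSpace ℝ V] [FiniteDimensional ℝ V] in
theorem measurableSet_shell (R δ : ℝ) : MeasurableSet (shell V R δ) :=
  measurableSet_closedBall.diff measurableSet_closedBall

theorem volume_shell_inter_cone {C : Set V} (hC : MeasurableSet C)
    (hsmul : ∀ a : ℝ, 0 < a → ∀ x, a • x ∈ C ↔ x ∈ C) {R δ : ℝ} (hR : 0 < R) (hδ : 0 ≤ δ)
    (hδR : δ < R) :
    volume.real (shell V R δ ∩ C) =
      (1 - (1 - δ / R) ^ Module.finrank ℝ V) * volume.real (Metric.closedBall 0 R ∩ C) := by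
  have ha : 0 < 1 - δ / R := by rw [sub_pos, div_lt_one hR]; exact hδR
  have inner_eq : Metric.closedBall 0 (R - δ) ∩ C =
      (fun x ↦ (1 - δ / R)⁻¹ • x) ⁻¹' (Metric.closedBall (0 : V) R ∩ C) := by
    ext x
    have : (1 - δ / R)⁻¹ * ‖x‖ ≤ R ↔ ‖x‖ ≤ R - δ := by
      rw [inv_mul_le_iff₀ ha]
      field_simp
    simp [hsmul _ (inv_pos.2 ha), norm_smul, abs_of_pos ha, this]
  have inner_volume : volume.real (Metric.closedBall 0 (R - δ) ∩ C) =
      (1 - δ / R) ^ Module.finrank ℝ V * volume.real (Metric.closedBall 0 R ∩ C) := by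
    rw [inner_eq, measureReal_def, Measure.addHaar_preimage_smul _ (inv_pos.2 ha).ne']
    simp [measureReal_def, abs_of_pos ha, (pow_pos ha _).le]
  have shell_eq : shell V R δ ∩ C =
      (Metric.closedBall 0 R ∩ C) \ (Metric.closedBall 0 (R - δ) ∩ C) := by
    ext x
    simp only [shell, mem_inter_iff, Set.mem_sdiff]
    tauto
  have finite_volume : volume (Metric.closedBall 0 R ∩ C) ≠ ⊤ :=
    (Metric.isBounded_closedBall.subset inter_subset_left).measure_lt_top.ne
  rw [shell_eq, measureReal_sdiff (inter_subset_inter_left C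
    (Metric.closedBall_subset_closedBall (by linarith))) (measurableSet_closedBall.inter hC)
    finite_volume, inner_volume]
  ring

theorem le_volume_shell (hn : 1 ≤ Module.finrank ℝ V) {R δ : ℝ} (hR : 0 < R) (hδ : 0 ≤ δ)
    (hδR : δ < R) :
    δ * R ^ (Module.finrank ℝ V - 1) * volume.real (Metric.ball (0 : V) 1) ≤
      volume.real (shell V R δ) := by
  have h := volume_shell_inter_cone (V := V) MeasurableSet.univ (by simp) hR hδ hδR
  simp only [inter_univ] at h
  rw [h, Measure.addHaar_real_closedBall _ _ hR.le]
  have pow_le : (1 - δ / R) ^ Module.finrank ℝ V ≤ 1 - δ / R :=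
    pow_le_of_le_one (by rw [sub_nonneg, div_le_one hR]; exact hδR.le)
      (sub_le_self _ (by positivity)) (by omega)
  calc _ = δ / R * (R ^ Module.finrank ℝ V * volume.real (Metric.ball (0 : V) 1)) := by
        rw [← mul_pow_sub_one (by omega : Module.finrank ℝ V ≠ 0) R]
        field_simp
    _ ≤ _ := by gcongr; linarith

theorem volume_shell_inter_unit_slab_le {u : V} (hu : ‖u‖ = 1) {R δ s : ℝ} (hR : 0 < R)
    (hδ : 0 ≤ δ) (hδR : δ ≤ R / 2) (hs : 0 ≤ s) :
    volume.real (shell V R δ ∩ {x | |inner ℝ u x| ≤ s}) ≤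
      Module.finrank ℝ V * (δ / R) * (4 * s * (2 * R) ^ (Module.finrank ℝ V - 1)) := by
  let C : Set V := {x | |inner ℝ u x| ≤ 2 * s / R * ‖x‖}
  have hC : MeasurableSet C := measurableSet_le (by fun_prop) (by fun_prop)
  have subset_cone : shell V R δ ∩ {x | |inner ℝ u x| ≤ s} ⊆ shell V R δ ∩ C := by
    rintro x ⟨hx, hxs⟩
    refine ⟨hx, hxs.out.trans ?_⟩
    have : R / 2 ≤ ‖x‖ := by
      have := hx.2
      simp only [mem_closedBall_zero_iff, not_le] at this
      linarith
    calc s = 2 * s / R * (R / 2) := by field_simp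
      _ ≤ _ := by gcongr
  have cone_subset_slab : Metric.closedBall 0 R ∩ C ⊆
      Metric.closedBall 0 R ∩ {x | |inner ℝ u x| ≤ 2 * s} := by
    rintro x ⟨hx, hxC⟩
    refine ⟨hx, hxC.out.trans ?_⟩
    rw [mem_closedBall_zero_iff] at hx
    calc 2 * s / R * ‖x‖ ≤ 2 * s / R * R := by gcongr
      _ = 2 * s := by field_simp
  have bernoulli : 1 - (1 - δ / R) ^ Module.finrank ℝ V ≤ Module.finrank ℝ V * (δ / R) := by
    have h2 : δ / R ≤ 1 := by rw [div_le_one hR]; linarith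
    have := one_add_mul_le_pow (a := -(δ / R)) (by linarith) (Module.finrank ℝ V)
    rw [← sub_eq_add_neg] at this
    linarith
  calc _ ≤ volume.real (shell V R δ ∩ C) := measureReal_mono subset_cone
        (Metric.isBounded_closedBall.subset
          (inter_subset_left.trans sdiff_subset)).measure_lt_top.ne
    _ = (1 - (1 - δ / R) ^ Module.finrank ℝ V) * volume.real (Metric.closedBall 0 R ∩ C) := by
      refine volume_shell_inter_cone hC (fun a ha x ↦ ?_) hR hδ (by linarith)
      simp only [C, mem_ofPred_eq, inner_smul_right, abs_mul, norm_smul, abs_of_pos ha,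
        Real.norm_eq_abs]
      rw [mul_left_comm, mul_le_mul_iff_right₀ ha]
    _ ≤ Module.finrank ℝ V * (δ / R) *
        volume.real (Metric.closedBall 0 R ∩ {x | |inner ℝ u x| ≤ 2 * s}) := by
      gcongr
      exact (Metric.isBounded_closedBall.subset inter_subset_left).measure_lt_top.ne
    _ ≤ _ := by
      gcongr
      refine (volume_closedBall_inter_slab_le hu hR.le (by positivity)).trans_eq ?_
      ring

theorem volume_shell_inter_slab_le {z : V} (hz : z ≠ 0) {R δ s : ℝ} (hR : 0 < R) (hδ : 0 ≤ δ)
    (hδR : δ ≤ R / 2) (hs : 0 ≤ s) :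
    volume.real (shell V R δ ∩ {x | |inner ℝ z x| ≤ s}) ≤
      Module.finrank ℝ V * (δ / R) * (4 * (s * ‖z‖⁻¹) * (2 * R) ^ (Module.finrank ℝ V - 1)) := by
  have slab_eq : {x | |inner ℝ z x| ≤ s} = {x | |inner ℝ (‖z‖⁻¹ • z) x| ≤ s * ‖z‖⁻¹} := by
    ext x
    rw [mem_ofPred_eq, mem_ofPred_eq, real_inner_smul_left, abs_mul, abs_inv, abs_norm,
      mul_comm _ |_|, mul_le_mul_iff_left₀ (inv_pos.2 (norm_pos_iff.2 hz))]
  rw [slab_eq]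
  exact volume_shell_inter_unit_slab_le (norm_smul_inv_norm (𝕜 := ℝ) hz) hR hδ hδR (by positivity)

end Shell

theorem convexIndependent_of_inner_neg {V : Type*} [NormedAddCommGroup V] [InnerProductSpace ℝ V]
    {T : Set V} (n : V → V) (h : ∀ z ∈ T, ∀ w ∈ T, w ≠ z → inner ℝ (n z) (w - z) < 0) :
    ConvexIndependent ℝ ((↑) : T → V) := by
  rw [convexIndependent_set_iff_notMem_convexHull_sdiff]
  intro z hz hmem
  have subset_halfspace : T \ {z} ⊆ {w | innerSL ℝ (n z) w < inner ℝ (n z) z} := fun w hw ↦ by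
    have := h z hz w hw.1 hw.2
    rw [inner_sub_right] at this
    simpa using this
  have := convexHull_min subset_halfspace
    (convex_halfSpace_lt (innerSL ℝ (n z)).isLinear _) hmem
  simp at this

section CurvedShell

variable {V : Type*} [NormedAddCommGroup V] [InnerProductSpace ℝ V] [FiniteDimensional ℝ V]
  [MeasurableSpace V] [BorelSpace V]

/-- The points of the shell at which the inner product with each vector of `T` has large absolute
value. When `T` contains all short vectors of a lattice, these points are strictly exposed
among their lattice translates lying in the ball. -/
def exposedShell (R δ : ℝ) (T : Finset V) : Set V :=
  shell V R δ \ ⋃ z ∈ T, {x | |inner ℝ z x| ≤ R * δ}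

omit [FiniteDimensional ℝ V] in
theorem measurableSet_exposedShell (R δ : ℝ) (T : Finset V) :
    MeasurableSet (exposedShell R δ T) :=
  (measurableSet_shell R δ).diff <| T.measurableSet_biUnion fun _ _ ↦
    measurableSet_le (by fun_prop) (by fun_prop)

omit [FiniteDimensional ℝ V] [MeasurableSpace V] [BorelSpace V] in
theorem inner_neg_of_mem_exposedShell {R δ : ℝ} {T : Finset V} {x z : V}
    (hδ : 0 ≤ δ) (hδR : δ ≤ R) (hx : x ∈ exposedShell R δ T) (hxz : ‖x + z‖ ≤ R)
    (hT : ‖z‖ ^ 2 ≤ 2 * R * δ → z ∈ T) : inner ℝ x z < 0 := by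
  by_contra! hinner
  have : 0 ≤ R := hδ.trans hδR
  have norm_sq_le : ‖x‖ ^ 2 + 2 * inner ℝ x z + ‖z‖ ^ 2 ≤ R ^ 2 := by
    rw [← norm_add_sq_real]
    gcongr
  have le_norm_sq : R ^ 2 - 2 * R * δ ≤ ‖x‖ ^ 2 := by
    have : R - δ < ‖x‖ := by simpa using hx.1.2
    nlinarith
  refine hx.2 (mem_biUnion (hT (by linarith)) ?_)
  rw [mem_ofPred_eq, real_inner_comm, abs_of_nonneg hinner]
  nlinarith [sq_nonneg ‖z‖]

theorem le_volume_exposedShell (hn : 1 ≤ Module.finrank ℝ V) {R δ : ℝ} {T : Finset V} (hR : 0 < R)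
    (hδ : 0 ≤ δ) (hδR : δ ≤ R / 2) (hT : 0 ∉ T)
    (hsum : Module.finrank ℝ V * 2 ^ (Module.finrank ℝ V + 2) * δ * ∑ z ∈ T, ‖z‖⁻¹ ≤
      volume.real (Metric.ball (0 : V) 1)) :
    δ * R ^ (Module.finrank ℝ V - 1) * volume.real (Metric.ball (0 : V) 1) / 2 ≤
      volume.real (exposedShell R δ T) := by
  set n := Module.finrank ℝ V
  have slab_le : ∀ z ∈ T, volume.real (shell V R δ ∩ {x | |inner ℝ z x| ≤ R * δ}) ≤
      n * 2 ^ (n + 1) * δ ^ 2 * R ^ (n - 1) * ‖z‖⁻¹ := fun z hz ↦ by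
    refine (volume_shell_inter_slab_le (ne_of_mem_of_not_mem hz hT) hR hδ hδR
      (by positivity)).trans_eq ?_
    rw [pow_succ, ← mul_pow_sub_one (by omega : n ≠ 0) 2, mul_pow]
    field_simp
    ring
  have union_le : volume.real (shell V R δ ∩ ⋃ z ∈ T, {x | |inner ℝ z x| ≤ R * δ}) ≤
      δ * R ^ (n - 1) * volume.real (Metric.ball (0 : V) 1) / 2 := by
    rw [inter_iUnion₂]
    calc _ ≤ ∑ z ∈ T, n * 2 ^ (n + 1) * δ ^ 2 * R ^ (n - 1) * ‖z‖⁻¹ :=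
          (measureReal_biUnion_finset_le _ _).trans (Finset.sum_le_sum slab_le)
      _ = δ * R ^ (n - 1) * (n * 2 ^ (n + 2) * δ * ∑ z ∈ T, ‖z‖⁻¹) / 2 := by
          rw [← Finset.mul_sum]; ring
      _ ≤ _ := by gcongr
  have shell_le := le_volume_shell hn hR hδ (by linarith : δ < R)
  have := measureReal_sdiff_add_inter (μ := volume) (s := shell V R δ)
    (T.measurableSet_biUnion fun z _ ↦
      (measurableSet_le (by fun_prop) (by fun_prop) : MeasurableSet {x | |inner ℝ z x| ≤ R * δ}))
    (Metric.isBounded_closedBall.subset sdiff_subset).measure_lt_top.ne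
  rw [exposedShell]
  linarith

theorem exists_convexIndependent_subset_closedBall (hn : 1 ≤ Module.finrank ℝ V) {ι : Type*}
    [Fintype ι] (b : Module.Basis ι ℝ V) {R δ : ℝ} (hR : 0 < R) (hδ : 0 ≤ δ) (hδR : δ ≤ R / 2)
    (hsum : ∀ T : Finset V, ↑T ⊆ Metric.closedBall 0 √(2 * R * δ) ∩
      (Submodule.span ℤ (range b) : Set V) → Module.finrank ℝ V *
        2 ^ (Module.finrank ℝ V + 2) * δ * ∑ z ∈ T, ‖z‖⁻¹ ≤ volume.real (Metric.ball (0 : V) 1))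
    (p : V) :
    ∃ T : Finset V, ↑T ⊆ Metric.closedBall p (R + ∑ i, ‖b i‖) ∩
        (Submodule.span ℤ (range b) : Set V) ∧ ConvexIndependent ℝ ((↑) : T → V) ∧
      δ * R ^ (Module.finrank ℝ V - 1) * volume.real (Metric.ball (0 : V) 1) / 2 ≤
        T.card * volume.real (ZSpan.fundamentalDomain b) := by
  classical
  have finite_short := finite_closedBall_inter_span b 0 √(2 * R * δ)
  let Z := finite_short.toFinset.erase 0
  have hZ : ↑Z ⊆ Metric.closedBall 0 √(2 * R * δ) ∩ (Submodule.span ℤ (range b) : Set V) :=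
    fun z hz ↦ by simpa using Finset.mem_of_mem_erase hz
  let G : Set V := (fun x ↦ x - p) ⁻¹' exposedShell R δ Z
  have hG : MeasurableSet G := (measurableSet_exposedShell R δ Z).preimage (by fun_prop)
  have norm_le : ∀ x ∈ G, ‖x - p‖ ≤ R := fun x hx ↦ by simpa using hx.1.1
  have hGb : Bornology.IsBounded G := Metric.isBounded_closedBall.subset fun x hx ↦
    mem_closedBall_iff_norm.2 (norm_le x hx)
  obtain ⟨x, hx, T, hTL, hTG, hcard⟩ := exists_translate_card_ge b volume hG hGb
  refine ⟨T, fun z hz ↦ ⟨?_, hTL hz⟩, ?_, ?_⟩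
  · have hx' : ‖x‖ ≤ ∑ i, ‖b i‖ := by
      simpa [ZSpan.fract_eq_self.2 hx] using ZSpan.norm_fract_le b x
    rw [mem_closedBall_iff_norm, show z - p = (x + z - p) - x by abel]
    exact (norm_sub_le _ _).trans (add_le_add (norm_le _ (hTG z hz)) hx')
  · refine convexIndependent_of_inner_neg (fun z ↦ x + z - p) fun z hz w hw hwz ↦ ?_
    refine inner_neg_of_mem_exposedShell hδ (by linarith) (hTG z hz) ?_ fun hshort ↦ ?_
    · rw [show x + z - p + (w - z) = x + w - p by abel]
      exact norm_le _ (hTG w hw)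
    · refine Finset.mem_erase.2 ⟨sub_ne_zero.2 hwz, finite_short.mem_toFinset.2 ⟨?_,
        sub_mem (hTL hw) (hTL hz)⟩⟩
      exact mem_closedBall_zero_iff.2 (Real.le_sqrt_of_sq_le hshort)
  · refine (le_volume_exposedShell hn hR hδ hδR (Finset.notMem_erase 0 _) (hsum Z hZ)).trans
      (le_of_eq_of_le ?_ hcard)
    rw [measureReal_def, measureReal_def, (measurePreserving_sub_right volume p).measure_preimage
      (measurableSet_exposedShell R δ Z).nullMeasurableSet]

/-- The shell has thickness `δ = ρ ^ 2 / (2 * R)`, so that `√(2 * R * δ) = ρ`. -/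
theorem exists_card_ge_of_pow_eq (hn : 1 ≤ Module.finrank ℝ V) {ι : Type*}
    [Fintype ι] (b : Module.Basis ι ℝ V) {R ρ : ℝ} (hR : 0 < R) (hρ : 0 < ρ) (hρR : ρ ≤ R)
    (hpow : Module.finrank ℝ V * 4 ^ (Module.finrank ℝ V + 2) * ρ ^ (Module.finrank ℝ V + 1) =
      R * volume.real (ZSpan.fundamentalDomain b))
    (hsum : ∀ T : Finset V, ↑T ⊆ Metric.closedBall (0 : V) ρ ∩
      (Submodule.span ℤ (range b) : Set V) → ∑ z ∈ T, ‖z‖⁻¹ ≤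
        8 * 2 ^ Module.finrank ℝ V * volume.real (Metric.ball (0 : V) 1) /
        volume.real (ZSpan.fundamentalDomain b) * ρ ^ (Module.finrank ℝ V - 1)) (p : V) :
    ∃ T : Finset V, ↑T ⊆ Metric.closedBall p (R + ∑ i, ‖b i‖) ∩
        (Submodule.span ℤ (range b) : Set V) ∧ ConvexIndependent ℝ ((↑) : T → V) ∧
      volume.real (Metric.ball (0 : V) 1) / (Module.finrank ℝ V * 4 ^ (Module.finrank ℝ V + 3)) *
        (R / ρ) ^ (Module.finrank ℝ V - 1) ≤ T.card := by
  obtain ⟨k, hk⟩ := Nat.exists_eq_add_of_le' hn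
  have hv := measureReal_fundamentalDomain_pos b (volume : Measure V)
  have sqrt_eq : √(2 * R * (ρ ^ 2 / (2 * R))) = ρ := by
    rw [mul_div_cancel₀ _ (by positivity), Real.sqrt_sq hρ.le]
  have sum_le : ∀ T : Finset V, ↑T ⊆ Metric.closedBall 0 √(2 * R * (ρ ^ 2 / (2 * R))) ∩
      (Submodule.span ℤ (range b) : Set V) → Module.finrank ℝ V * 2 ^ (Module.finrank ℝ V + 2) *
        (ρ ^ 2 / (2 * R)) * ∑ z ∈ T, ‖z‖⁻¹ ≤ volume.real (Metric.ball (0 : V) 1) := by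
    intro T hT
    rw [sqrt_eq] at hT
    refine (mul_le_mul_of_nonneg_left (hsum T hT) (by positivity)).trans_eq ?_
    simp only [hk, Nat.add_sub_cancel] at hpow ⊢
    rw [eq_div_of_mul_eq hR.ne' ((mul_comm _ _).trans hpow.symm),
      show (4 : ℝ) = 2 ^ 2 by norm_num, ← pow_mul]
    field_simp
    ring
  obtain ⟨T, hT, hconv, hcard⟩ := exists_convexIndependent_subset_closedBall hn b
    (δ := ρ ^ 2 / (2 * R)) hR (by positivity)
    (by rw [div_le_div_iff₀ (by positivity) two_pos]; nlinarith) sum_le p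
  refine ⟨T, hT, hconv, le_of_mul_le_mul_right (le_of_eq_of_le ?_ hcard) hv⟩
  simp only [hk, Nat.add_sub_cancel] at hpow ⊢
  rw [eq_div_of_mul_eq hR.ne' ((mul_comm _ _).trans hpow.symm), div_pow]
  field_simp
  ring

theorem eventually_exists_pow_eq (hn : 2 ≤ Module.finrank ℝ V) {ι : Type*} [Finite ι]
    (b : Module.Basis ι ℝ V) :
    ∀ᶠ R : ℝ in atTop, ∃ ρ, 0 < ρ ∧ ρ ≤ R ∧
      Module.finrank ℝ V * 4 ^ (Module.finrank ℝ V + 2) * ρ ^ (Module.finrank ℝ V + 1) =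
        R * volume.real (ZSpan.fundamentalDomain b) ∧
      ∀ T : Finset V, ↑T ⊆ Metric.closedBall (0 : V) ρ ∩ (Submodule.span ℤ (range b) : Set V) →
        ∑ z ∈ T, ‖z‖⁻¹ ≤ 8 * 2 ^ Module.finrank ℝ V * volume.real (Metric.ball (0 : V) 1) /
          volume.real (ZSpan.fundamentalDomain b) * ρ ^ (Module.finrank ℝ V - 1) := by
  have sum_le := eventually_sum_inv_norm_le b volume hn
  generalize Module.finrank ℝ V = n at *
  generalize hv : volume.real (ZSpan.fundamentalDomain b) = v at *
  have hv₀ : 0 < v := hv ▸ measureReal_fundamentalDomain_pos b volume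
  have hn₁ : (1 : ℝ) ≤ n := by exact_mod_cast one_le_two.trans hn
  set a : ℝ := n * 4 ^ (n + 2)
  have ha : 1 ≤ a := one_le_mul_of_one_le_of_one_le hn₁ (one_le_pow₀ (by norm_num))
  let ρ : ℝ → ℝ := fun R ↦ (R * v / a) ^ ((n : ℝ) + 1)⁻¹
  have tendsto_ρ : Tendsto ρ atTop atTop := (tendsto_rpow_atTop (by positivity)).comp <|
    (tendsto_id.atTop_mul_const hv₀).atTop_div_const (by positivity)
  filter_upwards [tendsto_ρ.eventually sum_le, tendsto_ρ.eventually_gt_atTop 0,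
    eventually_ge_atTop 1, eventually_ge_atTop v] with R hsum hρ hR hRv
  have ρ_pow : ρ R ^ (n + 1) = R * v / a := by
    rw [← Real.rpow_natCast, ← Real.rpow_mul (by positivity)]
    simp [show (n : ℝ) + 1 ≠ 0 by positivity]
  refine ⟨ρ R, hρ, ?_, by rw [ρ_pow]; field_simp, hsum⟩
  refine (pow_le_pow_iff_left₀ hρ.le (by positivity) n.succ_ne_zero).1 ?_
  calc ρ R ^ (n + 1) ≤ R * v := ρ_pow ▸ div_le_self (by positivity) ha
    _ ≤ R * R := by gcongr
    _ = R ^ 2 := (sq R).symm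
    _ ≤ R ^ (n + 1) := pow_le_pow_right₀ hR (by omega)

theorem pow_succ_rpow_div {n : ℕ} (hn : 1 ≤ n) {x : ℝ} (hx : 0 ≤ x) :
    (x ^ (n + 1)) ^ (((n : ℝ) - 1) / (n + 1)) = x ^ (n - 1) := by
  rw [← Real.rpow_natCast, ← Real.rpow_mul hx, ← Real.rpow_natCast, Nat.cast_sub hn]
  congr 1
  push_cast
  field_simp

theorem eventually_exists_convexIndependent (hn : 2 ≤ Module.finrank ℝ V) {ι : Type*}
    [Finite ι] (b : Module.Basis ι ℝ V) :
    ∀ᶠ R : ℝ in atTop, ∀ p : V, ∃ T : Finset V,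
      ↑T ⊆ Metric.closedBall p (2 * R) ∩ (Submodule.span ℤ (range b) : Set V) ∧
      ConvexIndependent ℝ ((↑) : T → V) ∧
      volume.real (Metric.ball (0 : V) 1) / (Module.finrank ℝ V * 4 ^ (Module.finrank ℝ V + 3)) *
        (R ^ Module.finrank ℝ V / volume.real (ZSpan.fundamentalDomain b)) ^
        (((Module.finrank ℝ V : ℝ) - 1) / (Module.finrank ℝ V + 1)) ≤ T.card := by
  have := Fintype.ofFinite ι
  filter_upwards [eventually_exists_pow_eq hn b, eventually_gt_atTop 0,
    eventually_ge_atTop (∑ i, ‖b i‖)] with R ⟨ρ, hρ, hρR, hpow, hsum⟩ hR hRb p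
  obtain ⟨T, hT, hconv, hcard⟩ :=
    exists_card_ge_of_pow_eq (one_le_two.trans hn) b hR hρ hρR hpow hsum p
  refine ⟨T, hT.trans (inter_subset_inter_left _ (Metric.closedBall_subset_closedBall
    (by linarith))), hconv, le_trans ?_ hcard⟩
  have hv := measureReal_fundamentalDomain_pos b (volume : Measure V)
  generalize Module.finrank ℝ V = n at *
  have hn₁ : (1 : ℝ) ≤ n := by exact_mod_cast one_le_two.trans hn
  gcongr
  rw [← pow_succ_rpow_div (one_le_two.trans hn) (by positivity)]
  refine Real.rpow_le_rpow (by positivity) ?_ (div_nonneg (by linarith) (by positivity))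
  rw [eq_div_of_mul_eq hR.ne' ((mul_comm _ _).trans hpow.symm), div_pow, pow_succ R n]
  have : (1 : ℝ) ≤ n * 4 ^ (n + 2) :=
    one_le_mul_of_one_le_of_one_le hn₁ (one_le_pow₀ (by norm_num))
  rw [div_div_eq_mul_div]
  gcongr
  exact le_mul_of_one_le_left (by positivity) this

end CurvedShell

section Box

variable {V ι : Type*} [NormedAddCommGroup V] [NormedSpace ℝ V] [Fintype ι] [DecidableEq ι]

theorem det_sub_const_add_smul (e : Module.Basis ι ℝ V) (c : V) (ε : ℝ) :
    e.det (fun i ↦ c + ε • e i - c) = ε ^ Fintype.card ι := by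
  simp only [add_sub_cancel_left, ← e.det.coe_multilinearMap]
  rw [MultilinearMap.map_smul_univ]
  simp [e.det_self]

theorem abs_repr_le_one_of_isMaxOn_det (e b : Module.Basis ι ℝ V) {K : Set V} {x₀ : V}
    (hb : ∀ i, x₀ + b i ∈ K)
    (hmax : ∀ v : ι → V, (∀ i, v i ∈ K) → |e.det fun i ↦ v i - x₀| ≤ |e.det b|) {y : V}
    (hy : y ∈ K) (i : ι) : |b.repr (y - x₀) i| ≤ 1 := by
  have hdet : 0 < |e.det b| := abs_pos.2 (e.isUnit_det b).ne_zero
  have cramer : e.det (Function.update b i (y - x₀)) = b.repr (y - x₀) i * e.det b := by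
    have := DFunLike.congr_fun
      (e.det_smul_mk_coord_eq_det_update b.linearIndependent b.span_eq.ge i) (y - x₀)
    have hmk : Module.Basis.mk b.linearIndependent b.span_eq.ge = b := by ext; simp
    simpa [hmk, mul_comm] using this.symm
  have := hmax (Function.update (fun j ↦ x₀ + b j) i y) fun j ↦ by
    rcases eq_or_ne j i with rfl | hj <;> simp [*]
  rw [show (fun j ↦ Function.update (fun j ↦ x₀ + b j) i y j - x₀) =
      Function.update b i (y - x₀) from funext fun j ↦ by
        rcases eq_or_ne j i with rfl | hj <;> simp [*], cramer, abs_mul] at this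
  exact (mul_le_iff_le_one_left hdet).1 this

omit [Fintype ι] [DecidableEq ι] in
/-- Take an affine frame with vertices in `K` of maximal volume. -/
theorem exists_basis_abs_repr_le_one [Finite ι] (e : Module.Basis ι ℝ V) {K : Set V}
    (hK : IsCompact K) (hint : (interior K).Nonempty) :
    ∃ x₀ ∈ K, ∃ b : Module.Basis ι ℝ V, (∀ i, x₀ + b i ∈ K) ∧
      ∀ y ∈ K, ∀ i, |b.repr (y - x₀) i| ≤ 1 := by
  classical
  have := Fintype.ofFinite ι
  have := Module.Finite.of_basis e
  let f : V × (ι → V) → ℝ := fun p ↦ |e.det fun i ↦ p.2 i - p.1|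
  have hf : Continuous f := by
    have hrepr (i : ι) : Continuous fun v : V ↦ e.repr v i :=
      (e.coord i).continuous_of_finiteDimensional
    simp only [f, Module.Basis.det_apply]
    refine continuous_abs.comp (Continuous.matrix_det (continuous_matrix fun i j ↦ ?_))
    exact (hrepr i).comp (by fun_prop)
  obtain ⟨c, hc⟩ := hint
  obtain ⟨⟨x₀, v⟩, ⟨hx₀, hv⟩, hmax⟩ := (hK.prod (isCompact_univ_pi fun _ : ι ↦ hK)).exists_isMaxOn
    ⟨(c, fun _ ↦ c), interior_subset hc, fun _ _ ↦ interior_subset hc⟩ hf.continuousOn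
  have hdet : e.det (fun i ↦ v i - x₀) ≠ 0 := by
    obtain ⟨ε, hε, hKε⟩ : ∃ ε : ℝ, 0 < ε ∧ ∀ i, c + ε • e i ∈ K := by
      have near : ∀ᶠ ε : ℝ in nhdsWithin 0 (Ioi 0), ∀ i, c + ε • e i ∈ K := by
        refine eventually_all.2 fun i ↦ nhdsWithin_le_nhds ?_
        refine ContinuousAt.preimage_mem_nhds (by fun_prop) ?_
        simpa using mem_interior_iff_mem_nhds.1 hc
      obtain ⟨ε, h, hε⟩ := (near.and self_mem_nhdsWithin).exists
      exact ⟨ε, hε, h⟩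
    have := hmax (show (c, fun i ↦ c + ε • e i) ∈ K ×ˢ univ.pi fun _ ↦ K from
      ⟨interior_subset hc, fun i _ ↦ hKε i⟩)
    simp only [mem_ofPred_eq, f, det_sub_const_add_smul] at this
    exact abs_pos.1 ((abs_pos.2 (pow_pos hε _).ne').trans_le this)
  obtain ⟨hli, hspan⟩ := e.is_basis_iff_det.2 (isUnit_iff_ne_zero.2 hdet)
  have hb : ∀ i, x₀ + (Module.Basis.mk hli hspan.ge) i ∈ K := fun i ↦ by simpa using hv i trivial
  refine ⟨x₀, hx₀, _, hb, fun y hy i ↦ abs_repr_le_one_of_isMaxOn_det e _ hb (fun w hw ↦ ?_) hy i⟩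
  simpa [f] using hmax (show (x₀, w) ∈ K ×ˢ univ.pi fun _ ↦ K from ⟨hx₀, fun i _ ↦ hw i⟩)

end Box

section Box

open scoped Pointwise

variable {V ι : Type*} [NormedAddCommGroup V] [NormedSpace ℝ V] [Fintype ι]

theorem add_sum_smul_mem_of_convex {K : Set V} (hK : Convex ℝ K) {x₀ : V} (hx₀ : x₀ ∈ K)
    {v : ι → V} (hv : ∀ i, x₀ + v i ∈ K) {w : ι → ℝ} (hw : ∀ i, 0 ≤ w i) (hw₁ : ∑ i, w i ≤ 1) :
    x₀ + ∑ i, w i • v i ∈ K := by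
  have := hK.sum_mem (t := Finset.univ) (w := fun o : Option ι ↦ o.elim (1 - ∑ i, w i) w)
    (z := fun o ↦ o.elim x₀ fun i ↦ x₀ + v i)
    (by rintro (_ | i) _ <;> simp [hw, hw₁]) (by simp [Fintype.sum_option])
    (by rintro (_ | i) _ <;> simp [hx₀, hv])
  simp only [Fintype.sum_option, Option.elim, smul_add, Finset.sum_add_distrib,
    ← Finset.sum_smul, sub_smul, one_smul] at this
  rwa [← add_assoc, sub_add_cancel] at this

variable [MeasurableSpace V] [BorelSpace V] (μ : Measure V) [μ.IsAddHaarMeasure]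

theorem measureReal_vadd_smul_parallelepiped (b : Module.Basis ι ℝ V) (x : V) (r : ℝ) :
    μ.real (x +ᵥ r • parallelepiped b) =
      |r| ^ Fintype.card ι * μ.real (ZSpan.fundamentalDomain b) := by
  have := Module.Finite.of_basis b
  rw [measureReal_def, measure_vadd, Measure.addHaar_smul, ENNReal.toReal_mul,
    ← measure_congr (ZSpan.fundamentalDomain_ae_parallelepiped b μ), ← measureReal_def,
    ENNReal.toReal_ofReal (abs_nonneg _), abs_pow, Module.finrank_eq_card_basis b]

theorem measureReal_le_two_pow_mul_fundamentalDomain (b : Module.Basis ι ℝ V) {K : Set V} {x₀ : V}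
    (hK : ∀ y ∈ K, ∀ i, |b.repr (y - x₀) i| ≤ 1) :
    μ.real K ≤ 2 ^ Fintype.card ι * μ.real (ZSpan.fundamentalDomain b) := by
  have hsub : K ⊆ (x₀ - ∑ i, b i) +ᵥ (2 : ℝ) • parallelepiped b := fun y hy ↦ by
    refine ⟨(y - x₀) + ∑ i, b i, ⟨(2 : ℝ)⁻¹ • ((y - x₀) + ∑ i, b i), ?_, by simp⟩, by simp⟩
    refine (mem_parallelepiped_iff b _).2
      ⟨fun i ↦ 2⁻¹ * (b.repr (y - x₀) i + 1), ⟨fun i ↦ ?_, fun i ↦ ?_⟩, ?_⟩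
    · have := abs_le.1 (hK y hy i)
      simp only [Pi.zero_apply]; linarith
    · have := abs_le.1 (hK y hy i)
      simp only [Pi.one_apply]; linarith
    · simp only [mul_smul, add_smul, one_smul, ← Finset.smul_sum, Finset.sum_add_distrib,
        b.sum_repr]
  have := Module.Finite.of_basis b
  refine (measureReal_mono hsub ?_).trans_eq ?_
  · rw [measure_vadd, Measure.addHaar_smul]
    exact ENNReal.mul_ne_top ENNReal.ofReal_ne_top
      b.parallelepiped.isCompact.measure_ne_top
  · simp [measureReal_vadd_smul_parallelepiped]

theorem measureReal_fundamentalDomain_le_card_pow_mul [Nonempty ι] (b : Module.Basis ι ℝ V)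
    {K : Set V} (hKc : IsCompact K) (hK : Convex ℝ K) {x₀ : V} (hx₀ : x₀ ∈ K)
    (hb : ∀ i, x₀ + b i ∈ K) :
    μ.real (ZSpan.fundamentalDomain b) ≤ Fintype.card ι ^ Fintype.card ι * μ.real K := by
  have hn : (0 : ℝ) < Fintype.card ι := by exact_mod_cast Fintype.card_pos
  have hsub : x₀ +ᵥ (Fintype.card ι : ℝ)⁻¹ • parallelepiped b ⊆ K := by
    rintro _ ⟨_, ⟨y, hy, rfl⟩, rfl⟩
    obtain ⟨t, ht, rfl⟩ := (mem_parallelepiped_iff b _).1 hy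
    simp only [vadd_eq_add, Finset.smul_sum, smul_smul]
    refine add_sum_smul_mem_of_convex hK hx₀ hb (fun i ↦ mul_nonneg (by positivity) (ht.1 i)) ?_
    rw [← Finset.mul_sum, inv_mul_le_iff₀ hn, mul_one]
    simpa using Finset.sum_le_card_nsmul Finset.univ t 1 fun i _ ↦ ht.2 i
  have := measureReal_mono hsub hKc.measure_ne_top (μ := μ)
  rw [measureReal_vadd_smul_parallelepiped, abs_of_pos (by positivity), inv_pow,
    inv_mul_le_iff₀ (by positivity)] at this
  exact this

omit [Fintype ι] in
theorem measureReal_fundamentalDomain_map [Finite ι] (b : Module.Basis ι ℝ V) (f : V ≃ₗ[ℝ] V) :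
    μ.real (ZSpan.fundamentalDomain (b.map f)) =
      |LinearMap.det (f : V →ₗ[ℝ] V)| * μ.real (ZSpan.fundamentalDomain b) := by
  have := Module.Finite.of_basis b
  rw [← ZSpan.map_fundamentalDomain, measureReal_def, measureReal_def]
  have := Measure.addHaar_image_linearMap μ (f : V →ₗ[ℝ] V) (ZSpan.fundamentalDomain b)
  simp only [LinearEquiv.coe_coe] at this
  rw [this, ENNReal.toReal_mul, ENNReal.toReal_ofReal (abs_nonneg _)]

end Box

section ScaledLattice

open scoped Pointwise

variable {d : ℕ} {K : Set (E d)}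

theorem scaledLattice_eq_inv_smul_span {m : ℕ} (hm : m ≠ 0) :
    scaledLattice d m = (m : ℝ)⁻¹ •
      (Submodule.span ℤ (range (EuclideanSpace.basisFun (Fin d) ℝ).toBasis) : Set (E d)) := by
  have hm' : (m : ℝ) ≠ 0 := Nat.cast_ne_zero.2 hm
  ext v
  simp only [scaledLattice, Set.mem_ofPred_eq, Set.mem_inv_smul_set_iff₀ hm', SetLike.mem_coe,
    Module.Basis.mem_span_iff_repr_mem]
  refine forall_congr' fun i ↦ exists_congr fun z ↦ ?_
  simp [eq_div_iff hm', eq_comm, mul_comm]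

theorem inv_smul_mem_scaledLattice {m : ℕ} (hm : m ≠ 0) {x : E d}
    (hx : x ∈ Submodule.span ℤ (range (EuclideanSpace.basisFun (Fin d) ℝ).toBasis)) :
    (m : ℝ)⁻¹ • x ∈ scaledLattice d m := by
  rw [scaledLattice_eq_inv_smul_span hm]
  exact smul_mem_smul_set hx

theorem finite_inter_scaledLattice {m : ℕ} (hm : m ≠ 0) (hK : Bornology.IsBounded K) :
    (K ∩ scaledLattice d m).Finite := by
  have hm' : (m : ℝ) ≠ 0 := Nat.cast_ne_zero.2 hm
  obtain ⟨r, hr⟩ := (hK.smul₀ (m : ℝ)).subset_closedBall 0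
  refine ((finite_closedBall_inter_span (EuclideanSpace.basisFun (Fin d) ℝ).toBasis
    0 r).image ((m : ℝ)⁻¹ • ·)).subset fun x hx ↦ ?_
  rw [scaledLattice_eq_inv_smul_span hm] at hx
  obtain ⟨y, hy, rfl⟩ := hx.2
  refine ⟨y, ⟨hr ⟨_, hx.1, ?_⟩, hy⟩, rfl⟩
  simp [smul_smul, hm']

theorem convexHull_mem_latticePolytopes {m : ℕ} {F : Finset (E d)} (hK : Convex ℝ K)
    (hF : F.Nonempty) (hFK : ↑F ⊆ K ∩ scaledLattice d m) :
    convexHull ℝ ↑F ∈ latticePolytopes d m K :=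
  ⟨convexHull_nonempty_iff.2 hF, convexHull_min (hFK.trans inter_subset_left) hK, F,
    hFK.trans inter_subset_right, rfl⟩

theorem exists_subset_of_mem_latticePolytopes {m : ℕ} {P : Set (E d)}
    (hP : P ∈ latticePolytopes d m K) :
    ∃ F : Finset (E d), F.Nonempty ∧ ↑F ⊆ K ∩ scaledLattice d m ∧ P = convexHull ℝ ↑F := by
  obtain ⟨hne, hPK, F, hF, rfl⟩ := hP
  exact ⟨F, convexHull_nonempty_iff.1 hne,
    subset_inter ((subset_convexHull ℝ _).trans hPK) hF, rfl⟩

theorem finite_latticePolytopes {m : ℕ} (hm : m ≠ 0) (hK : Bornology.IsBounded K) :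
    (latticePolytopes d m K).Finite := by
  refine ((finite_inter_scaledLattice hm hK).finite_subsets.image (convexHull ℝ)).subset
    fun P hP ↦ ?_
  obtain ⟨F, -, hFK, rfl⟩ := exists_subset_of_mem_latticePolytopes hP
  exact ⟨F, hFK, rfl⟩

theorem convexHull_injOn_of_convexIndependent {V : Type*} [AddCommGroup V] [Module ℝ V] {T : Set V}
    (hT : ConvexIndependent ℝ ((↑) : T → V)) : InjOn (convexHull ℝ) {S | S ⊆ T} := by
  have key {S S' : Set V} (hS : S ⊆ T) (hS' : S' ⊆ T) (h : convexHull ℝ S = convexHull ℝ S') :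
      S ⊆ S' := fun x hx ↦
    convexIndependent_set_iff_inter_convexHull_subset.1 hT S' hS'
      ⟨hS hx, h ▸ subset_convexHull ℝ S hx⟩
  exact fun S hS S' hS' h ↦ (key hS hS' h).antisymm (key hS' hS h.symm)

theorem two_pow_card_sub_one_le_ncard_latticePolytopes {m : ℕ} (hm : m ≠ 0)
    (hKb : Bornology.IsBounded K) (hK : Convex ℝ K) {T : Finset (E d)}
    (hTK : ↑T ⊆ K ∩ scaledLattice d m) (hT : ConvexIndependent ℝ ((↑) : T → E d)) :
    2 ^ T.card - 1 ≤ (latticePolytopes d m K).ncard := by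
  classical
  calc 2 ^ T.card - 1
      = ((T.powerset.erase ∅ : Finset (Finset (E d))) : Set (Finset (E d))).ncard := by
        rw [ncard_coe_finset, Finset.card_erase_of_mem (Finset.empty_mem_powerset T),
          Finset.card_powerset]
    _ ≤ _ := by
        refine ncard_le_ncard_of_injOn (fun S ↦ convexHull ℝ (S : Set (E d))) (fun S hS ↦ ?_)
          (fun S hS S' hS' h ↦ ?_) (finite_latticePolytopes hm hKb)
        · simp only [Finset.coe_erase, Set.mem_sdiff, Finset.mem_coe, Finset.mem_powerset,
            mem_singleton_iff] at hS
          exact convexHull_mem_latticePolytopes hK (Finset.nonempty_iff_ne_empty.2 hS.2)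
            ((Finset.coe_subset.2 hS.1).trans hTK)
        · simp only [Finset.coe_erase, Set.mem_sdiff, Finset.mem_coe, Finset.mem_powerset] at hS hS'
          exact Finset.coe_injective (convexHull_injOn_of_convexIndependent hT
            (Finset.coe_subset.2 hS.1) (Finset.coe_subset.2 hS'.1) h)

theorem div_four_le_log_ncard_latticePolytopes {m : ℕ} (hm : m ≠ 0)
    (hKb : Bornology.IsBounded K) (hK : Convex ℝ K) {T : Finset (E d)}
    (hTK : ↑T ⊆ K ∩ scaledLattice d m) (hT : ConvexIndependent ℝ ((↑) : T → E d))
    (hcard : 2 ≤ T.card) :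
    (T.card : ℝ) / 4 ≤ Real.log (latticePolytopes d m K).ncard := by
  obtain ⟨a, ha⟩ := Nat.exists_eq_add_of_le hcard
  have hpow : 2 ^ (a + 1) ≤ (latticePolytopes d m K).ncard := by
    have := two_pow_card_sub_one_le_ncard_latticePolytopes hm hKb hK hTK hT
    have : 1 ≤ 2 ^ (a + 1) := Nat.one_le_two_pow
    rw [ha, show 2 + a = (a + 1) + 1 by ring, pow_succ 2 (a + 1)] at *
    omega
  have hlog : (T.card : ℝ) / 4 ≤ (a + 1 : ℕ) * Real.log 2 := by
    have := Real.log_two_gt_d9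
    rw [ha]; push_cast
    nlinarith
  rw [← Real.log_pow] at hlog
  exact hlog.trans (Real.log_le_log (by positivity) (by exact_mod_cast hpow))

end ScaledLattice

section LowerBound

variable {d : ℕ} {K : Set (E d)}

theorem add_sum_barycenter_add_mem (hK : Convex ℝ K) {x₀ : E d} (hx₀ : x₀ ∈ K)
    {b : Fin d → E d} (hb : ∀ i, x₀ + b i ∈ K) {v : E d} (hv : ‖v‖ ≤ 1 / (d * (d + 1))) :
    x₀ + ∑ i, ((1 : ℝ) / (d + 1) + v i) • b i ∈ K := by
  have hvi (i : Fin d) : |v i| ≤ 1 / (d * (d + 1)) := (PiLp.norm_apply_le v i).trans hv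
  refine add_sum_smul_mem_of_convex hK hx₀ hb (fun i ↦ ?_) ?_
  · have hd : (1 : ℝ) ≤ d := by exact_mod_cast i.pos
    have : (1 : ℝ) / (d * (d + 1)) ≤ 1 / (d + 1) := by gcongr; nlinarith
    linarith [neg_abs_le (v i), hvi i]
  · rcases Nat.eq_zero_or_pos d with rfl | hd
    · simp
    have : (0 : ℝ) < d := by exact_mod_cast hd
    calc ∑ i, (1 / (d + 1) + v i) ≤ ∑ _i : Fin d, ((1 : ℝ) / (d + 1) + 1 / (d * (d + 1))) :=
          Finset.sum_le_sum fun i _ ↦ by linarith [le_abs_self (v i), hvi i]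
      _ = 1 := by
          simp only [Finset.sum_const, Finset.card_univ, Fintype.card_fin, nsmul_eq_mul]
          field_simp

theorem measureReal_fundamentalDomain_basisFun :
    volume.real (ZSpan.fundamentalDomain (EuclideanSpace.basisFun (Fin d) ℝ).toBasis) = 1 := by
  rw [measureReal_def, measure_congr (ZSpan.fundamentalDomain_ae_parallelepiped _ volume)]
  simp [OrthonormalBasis.volume_parallelepiped]

theorem measureReal_fundamentalDomain_basisFun_map (φ : E d ≃ₗ[ℝ] E d) :
    volume.real (ZSpan.fundamentalDomain ((EuclideanSpace.basisFun (Fin d) ℝ).toBasis.map φ)) =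
      |LinearMap.det (φ : E d →ₗ[ℝ] E d)| := by
  rw [measureReal_fundamentalDomain_map, measureReal_fundamentalDomain_basisFun, mul_one]

theorem exists_linearEquiv_abs_symm_le_one (hd : d ≠ 0) (hKc : IsCompact K) (hK : Convex ℝ K)
    (hint : (interior K).Nonempty) :
    ∃ x₀ ∈ K, ∃ φ : E d ≃ₗ[ℝ] E d, (∀ i, x₀ + φ (EuclideanSpace.basisFun (Fin d) ℝ i) ∈ K) ∧
      (∀ y ∈ K, ∀ i, |φ.symm (y - x₀) i| ≤ 1) ∧
      volume.real K ≤ 2 ^ d * |LinearMap.det (φ : E d →ₗ[ℝ] E d)| ∧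
      |LinearMap.det (φ : E d →ₗ[ℝ] E d)| ≤ d ^ d * volume.real K := by
  have : NeZero d := ⟨hd⟩
  set e := (EuclideanSpace.basisFun (Fin d) ℝ).toBasis
  obtain ⟨x₀, hx₀, b, hb, hKb⟩ := exists_basis_abs_repr_le_one e hKc hint
  set φ : E d ≃ₗ[ℝ] E d := e.equiv b (Equiv.refl _)
  have hφ : e.map φ = b := by simp [φ, Module.Basis.map_equiv]
  have hφi (i : Fin d) : φ (EuclideanSpace.basisFun (Fin d) ℝ i) = b i := by
    rw [← hφ]; simp [e]
  have hvol := measureReal_fundamentalDomain_basisFun_map φ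
  have hle := measureReal_le_two_pow_mul_fundamentalDomain volume b hKb
  have hge := measureReal_fundamentalDomain_le_card_pow_mul volume b hKc hK hx₀ hb
  rw [hφ] at hvol
  rw [hvol, Fintype.card_fin] at hle hge
  refine ⟨x₀, hx₀, φ, fun i ↦ hφi i ▸ hb i, fun y hy i ↦ ?_, hle, hge⟩
  simpa [← hφ, e] using hKb y hy i

theorem convexIndependent_finset_image {V W : Type*} [AddCommGroup V] [Module ℝ V]
    [AddCommGroup W] [Module ℝ W] [DecidableEq W] {T : Finset V}
    (hT : ConvexIndependent ℝ ((↑) : T → V)) (f : V →ₗ[ℝ] W) (hf : Function.Injective f) :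
    ConvexIndependent ℝ ((↑) : ↥(T.image f) → W) := by
  have hfT : ConvexIndependent ℝ fun t : T ↦ f t := fun s t ht ↦ by
    rw [← image_image f, ← f.image_convexHull, hf.mem_set_image] at ht
    exact hT s t ht
  have hrange : range (fun t : T ↦ f t) = ↑(T.image f) := by ext; simp
  have := hfT.range
  rwa [hrange] at this

theorem coe_image_subset_inter_scaledLattice (hK : Convex ℝ K) {x₀ : E d} (hx₀ : x₀ ∈ K)
    {φ : E d ≃ₗ[ℝ] E d} (hφ : ∀ i, x₀ + φ (EuclideanSpace.basisFun (Fin d) ℝ i) ∈ K) {m : ℕ}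
    (hm : m ≠ 0) {T : Set (E d)}
    (hT : T ⊆ Metric.closedBall ((m : ℝ) • (φ.symm x₀ + WithLp.toLp 2 fun _ ↦ (1 : ℝ) / (d + 1)))
        (m * (1 / (d * (d + 1)))) ∩
      (Submodule.span ℤ (range ((EuclideanSpace.basisFun (Fin d) ℝ).toBasis.map φ.symm)) :
        Set (E d))) :
    ((m : ℝ)⁻¹ • φ.toLinearMap) '' T ⊆ K ∩ scaledLattice d m := by
  have hm' : (0 : ℝ) < m := by positivity
  rintro _ ⟨t, ht, rfl⟩
  obtain ⟨hball, hspan⟩ := hT ht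
  refine ⟨?_, inv_smul_mem_scaledLattice hm ?_⟩
  · set c : E d := WithLp.toLp 2 fun _ ↦ (1 : ℝ) / (d + 1)
    set v := (m : ℝ)⁻¹ • (t - (m : ℝ) • (φ.symm x₀ + c)) with hv_def
    have hv : ‖v‖ ≤ 1 / (d * (d + 1)) := by
      rw [norm_smul, norm_inv, Real.norm_of_nonneg hm'.le, inv_mul_le_iff₀ hm']
      exact mem_closedBall_iff_norm.1 hball
    have hsum : φ (c + v) = ∑ i, ((1 : ℝ) / (d + 1) + v i) •
        φ (EuclideanSpace.basisFun (Fin d) ℝ i) := by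
      conv_lhs => rw [← (EuclideanSpace.basisFun (Fin d) ℝ).sum_repr (c + v)]
      simp [c]
    convert! add_sum_barycenter_add_mem hK hx₀ hφ hv using 1
    rw [← hsum, hv_def, smul_sub, inv_smul_smul₀ hm'.ne']
    simp only [map_add, map_sub, LinearEquiv.apply_symm_apply, LinearMap.smul_apply,
      LinearEquiv.coe_coe, map_smul]
    abel
  · rw [SetLike.mem_coe, Module.Basis.mem_span_iff_repr_mem] at hspan
    rw [Module.Basis.mem_span_iff_repr_mem]
    simpa using hspan

theorem eventually_exists_convexIndependent_inter_scaledLattice (hd : 2 ≤ d) :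
    ∃ c : ℝ, 0 < c ∧ ∀ K : Set (E d), IsCompact K → Convex ℝ K → (interior K).Nonempty →
      ∀ᶠ m : ℕ in atTop, ∃ T : Finset (E d), ↑T ⊆ K ∩ scaledLattice d m ∧
        ConvexIndependent ℝ ((↑) : T → E d) ∧
        c * (m ^ d * volume.real K) ^ (((d : ℝ) - 1) / (d + 1)) ≤ T.card := by
  classical
  have hd0 : 0 < d := by omega
  have hball : 0 < volume.real (Metric.ball (0 : E d) 1) :=
    ENNReal.toReal_pos (Metric.measure_ball_pos _ _ one_pos).ne' measure_ball_lt_top.ne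
  set r : ℝ := 1 / (d * (d + 1))
  have : 0 < r := by positivity
  refine ⟨volume.real (Metric.ball (0 : E d) 1) / (d * 4 ^ (d + 3)) *
    ((r / 4) ^ d) ^ (((d : ℝ) - 1) / (d + 1)), by positivity, fun K hKc hK hint ↦ ?_⟩
  set e := (EuclideanSpace.basisFun (Fin d) ℝ).toBasis
  obtain ⟨x₀, hx₀, φ, hφ, -, hvolK, -⟩ := exists_linearEquiv_abs_symm_le_one hd0.ne' hKc hK hint
  have hcovol : volume.real (ZSpan.fundamentalDomain (e.map φ.symm)) =
      |LinearMap.det (φ : E d →ₗ[ℝ] E d)|⁻¹ := by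
    rw [measureReal_fundamentalDomain_basisFun_map, ← abs_inv,
      eq_inv_of_mul_eq_one_left (LinearEquiv.det_symm_mul_det φ)]
  have hR : Tendsto (fun m : ℕ ↦ m * (r / 2)) atTop atTop :=
    tendsto_natCast_atTop_atTop.atTop_mul_const (by positivity)
  filter_upwards [hR.eventually (eventually_exists_convexIndependent (by simpa using hd)
    (e.map φ.symm)), eventually_ne_atTop 0] with m hm hm0
  obtain ⟨T, hT, hconv, hcard⟩ :=
    hm ((m : ℝ) • (φ.symm x₀ + WithLp.toLp 2 fun _ ↦ (1 : ℝ) / (d + 1)))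
  have hinj : Function.Injective ((m : ℝ)⁻¹ • φ.toLinearMap) := fun x y hxy ↦ by
    simpa [hm0] using hxy
  refine ⟨T.image ((m : ℝ)⁻¹ • φ.toLinearMap), ?_,
    convexIndependent_finset_image hconv _ hinj, ?_⟩
  · rw [show 2 * (m * (r / 2)) = m * r by ring] at hT
    simpa using coe_image_subset_inter_scaledLattice hK hx₀ hφ hm0 hT
  · rw [Finset.card_image_of_injective _ hinj]
    refine le_trans ?_ hcard
    rw [hcovol, div_inv_eq_mul, finrank_euclideanSpace_fin, mul_assoc,
      ← Real.mul_rpow (by positivity) (by positivity)]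
    gcongr ?_ * ?_ ^ ?_
    · have : (1 : ℝ) ≤ d := by exact_mod_cast hd0
      exact div_nonneg (by linarith) (by positivity)
    · calc (r / 4) ^ d * (m ^ d * volume.real K)
          ≤ (r / 4) ^ d * (m ^ d * (2 ^ d * |LinearMap.det (φ : E d →ₗ[ℝ] E d)|)) := by gcongr
        _ = (m * (r / 2)) ^ d * |LinearMap.det (φ : E d →ₗ[ℝ] E d)| := by
          rw [mul_pow, show r / 2 = r / 4 * 2 by ring, mul_pow]; ring

theorem exists_forall_eventually_le_log_ncard_latticePolytopes (hd : 2 ≤ d) :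
    ∃ c : ℝ, 0 < c ∧ ∀ K : Set (E d), IsCompact K → Convex ℝ K → (interior K).Nonempty →
      ∀ᶠ m : ℕ in atTop, c * (m ^ d * volume.real K) ^ (((d : ℝ) - 1) / (d + 1)) ≤
        Real.log (latticePolytopes d m K).ncard := by
  obtain ⟨c, hc, hT⟩ := eventually_exists_convexIndependent_inter_scaledLattice hd
  refine ⟨c / 4, by positivity, fun K hKc hK hint ↦ ?_⟩
  have hvol : 0 < volume.real K :=
    ENNReal.toReal_pos (Measure.measure_pos_of_nonempty_interior _ hint).ne' hKc.measure_ne_top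
  have hd' : (2 : ℝ) ≤ d := by exact_mod_cast hd
  have hlim : Tendsto (fun m : ℕ ↦ c * (m ^ d * volume.real K) ^ (((d : ℝ) - 1) / (d + 1)))
      atTop atTop :=
    ((tendsto_rpow_atTop (div_pos (by linarith) (by linarith))).comp
      (((tendsto_pow_atTop (by omega)).comp tendsto_natCast_atTop_atTop).atTop_mul_const
        hvol)).const_mul_atTop hc
  filter_upwards [hT K hKc hK hint, hlim.eventually_gt_atTop 1, eventually_ne_atTop 0]
    with m ⟨T, hTK, hconv, hcard⟩ hgt hm
  have hTcard : 1 < T.card := by exact_mod_cast hgt.trans_le hcard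
  have := div_four_le_log_ncard_latticePolytopes hm hKc.isBounded hK hTK hconv hTcard
  linarith

end LowerBound

section PointCount

variable {d : ℕ} {K : Set (E d)}

theorem tendsto_ncard_inter_scaledLattice_div_pow (hKc : IsCompact K) (hK : Convex ℝ K) :
    Tendsto (fun m : ℕ ↦ ((K ∩ scaledLattice d m).ncard : ℝ) / m ^ d) atTop
      (nhds (volume.real K)) := by
  set e := (EuclideanSpace.basisFun (Fin d) ℝ).toBasis
  have hcovol : ZLattice.covolume (Submodule.span ℤ (range e)) volume = 1 := by
    rw [ZLattice.covolume_eq_measure_fundamentalDomain _ _ (ZSpan.isAddFundamentalDomain e volume)]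
    exact measureReal_fundamentalDomain_basisFun
  have hlim := ZLattice.covolume.tendsto_card_div_pow' (Submodule.span ℤ (range e))
    hKc.isBounded hKc.measurableSet (hK.addHaar_frontier volume)
  rw [hcovol, div_one, finrank_euclideanSpace_fin] at hlim
  refine hlim.congr' ?_
  filter_upwards [eventually_ne_atTop 0] with m hm
  rw [← scaledLattice_eq_inv_smul_span hm, Nat.card_coe_set_eq]

theorem eventually_ncard_inter_scaledLattice_mem_Icc (hKc : IsCompact K) (hK : Convex ℝ K)
    (hint : (interior K).Nonempty) :
    ∀ᶠ m : ℕ in atTop, ((K ∩ scaledLattice d m).ncard : ℝ) ∈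
      Icc (m ^ d * volume.real K / 2) (2 * (m ^ d * volume.real K)) := by
  have hvol : 0 < volume.real K :=
    ENNReal.toReal_pos (Measure.measure_pos_of_nonempty_interior _ hint).ne' hKc.measure_ne_top
  have hlim := tendsto_ncard_inter_scaledLattice_div_pow hKc hK
  filter_upwards [hlim.eventually_const_lt (half_lt_self hvol),
    hlim.eventually_lt_const (lt_two_mul_self hvol), eventually_gt_atTop 0] with m hlt hgt hm
  have hm : (0 : ℝ) < m ^ d := by positivity
  rw [lt_div_iff₀ hm] at hlt
  rw [div_lt_iff₀ hm] at hgt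
  exact ⟨by linarith, by linarith⟩

end PointCount

section RegularTriangulation

theorem exists_forall_ne_zero_and_pos {M κ : Type*} [AddCommGroup M] [Module ℝ M] [Finite κ]
    (f : κ → Module.Dual ℝ M) (hf : ∀ k, f k ≠ 0) (t : M) :
    ∃ η, ∀ k, f k η ≠ 0 ∧ (0 < f k t → 0 < f k η) := by
  obtain ⟨ω, hω⟩ := Module.Dual.exists_forall_ne_zero_of_forall_exists f fun k ↦ by
    simpa [LinearMap.ext_iff] using hf k
  have persists (k : κ) : ∀ᶠ ε : ℝ in nhdsWithin 0 (Ioi 0),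
      f k (t + ε • ω) ≠ 0 ∧ (0 < f k t → 0 < f k (t + ε • ω)) := by
    have lim : Tendsto (fun ε : ℝ ↦ f k (t + ε • ω)) (nhdsWithin 0 (Ioi 0)) (nhds (f k t)) := by
      have : Continuous fun ε : ℝ ↦ f k (t + ε • ω) := by
        simp only [map_add, map_smul, smul_eq_mul]
        fun_prop
      simpa using (this.tendsto 0).mono_left nhdsWithin_le_nhds
    rcases lt_trichotomy (f k t) 0 with neg | zero | pos
    · filter_upwards [lim.eventually_lt_const neg] with ε hε
      exact ⟨hε.ne, fun pos ↦ absurd pos neg.not_gt⟩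
    · filter_upwards [self_mem_nhdsWithin] with ε (hε : 0 < ε)
      simpa [zero] using ⟨hε.ne', hω k⟩
    · filter_upwards [lim.eventually_const_lt pos] with ε hε
      exact ⟨hε.ne', fun _ ↦ hε⟩
  obtain ⟨ε, hε⟩ := (eventually_all.2 persists).exists
  exact ⟨_, hε⟩

variable {V ι : Type*} [NormedAddCommGroup V] [NormedSpace ℝ V] {s : ι → V} {σ : Finset ι}

/-- The points `s i`, `i ∈ σ`, are the vertices of a full-dimensional simplex. -/
structure IsSimplex (s : ι → V) (σ : Finset ι) : Prop where
  affineIndependent : AffineIndependent ℝ fun i : σ ↦ s i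
  affineSpan_eq_top : affineSpan ℝ (s '' σ) = ⊤

namespace IsSimplex

/-- The simplex as an affine basis of the ambient space. -/
def affineBasis (h : IsSimplex s σ) : AffineBasis σ ℝ V :=
  ⟨fun i ↦ s i, h.affineIndependent, by simpa [image_eq_range] using h.affineSpan_eq_top⟩

@[simp] theorem affineBasis_apply (h : IsSimplex s σ) (i : σ) : h.affineBasis i = s i := rfl

open Classical in
/-- The barycentric coordinate of the vertex `i`, extended by zero to the indices outside `σ`. -/
def coord (h : IsSimplex s σ) (i : ι) : V →ᵃ[ℝ] ℝ :=
  if hi : i ∈ σ then h.affineBasis.coord ⟨i, hi⟩ else 0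

theorem coord_of_mem (h : IsSimplex s σ) {i : ι} (hi : i ∈ σ) :
    h.coord i = h.affineBasis.coord ⟨i, hi⟩ := dif_pos hi

theorem coord_of_notMem (h : IsSimplex s σ) {i : ι} (hi : i ∉ σ) (x : V) : h.coord i x = 0 := by
  rw [coord, dif_neg hi]
  rfl

theorem coord_apply_of_mem [DecidableEq ι] (h : IsSimplex s σ) {j : ι} (hj : j ∈ σ) (i : ι) :
    h.coord i (s j) = if i = j then 1 else 0 := by
  by_cases hi : i ∈ σ
  · rw [h.coord_of_mem hi, ← h.affineBasis_apply ⟨j, hj⟩, AffineBasis.coord_apply]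
    simp only [Subtype.mk.injEq]
  · rw [h.coord_of_notMem hi, if_neg (ne_of_mem_of_not_mem hj hi).symm]

theorem coord_nonneg (h : IsSimplex s σ) {x : V} (hx : x ∈ convexHull ℝ (s '' σ)) (i : ι) :
    0 ≤ h.coord i x := by
  by_cases hi : i ∈ σ
  · rw [h.coord_of_mem hi]
    refine (h.affineBasis.convexHull_eq_nonneg_coord ▸ (?_ : x ∈ convexHull ℝ (range _))) _
    rwa [image_eq_range] at hx
  · exact (h.coord_of_notMem hi x).ge

variable [Fintype ι]

theorem sum_coord_smul {M : Type*} [AddCommGroup M] [Module ℝ M] (h : IsSimplex s σ) (x : V)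
    (f : ι → M) : ∑ i, h.coord i x • f i = ∑ i : σ, h.affineBasis.coord i x • f i := by
  rw [← Finset.sum_subset σ.subset_univ fun i _ hi ↦ by
    rw [h.coord_of_notMem hi, zero_smul], ← Finset.sum_coe_sort]
  exact Finset.sum_congr rfl fun i _ ↦ by rw [h.coord_of_mem i.2]

theorem sum_coord (h : IsSimplex s σ) (x : V) : ∑ i, h.coord i x = 1 := by
  have := h.sum_coord_smul x fun _ ↦ (1 : ℝ)
  simpa only [smul_eq_mul, mul_one, h.affineBasis.sum_coord_apply_eq_one] using this

theorem sum_coord_smul_eq (h : IsSimplex s σ) (x : V) : ∑ i, h.coord i x • s i = x := by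
  simpa using (h.sum_coord_smul x s).trans (h.affineBasis.linear_combination_coord_eq_self x)

/-- The affine function with value `η i` at each vertex `s i` of the simplex. -/
def interpolant (h : IsSimplex s σ) (η : ι → ℝ) : V →ᵃ[ℝ] ℝ :=
  (∑ i, η i • LinearMap.proj i : (ι → ℝ) →ₗ[ℝ] ℝ).toAffineMap.comp (AffineMap.pi h.coord)

theorem interpolant_apply (h : IsSimplex s σ) (η : ι → ℝ) (x : V) :
    h.interpolant η x = ∑ i, h.coord i x * η i := by
  simp [interpolant, mul_comm]

theorem interpolant_apply_of_mem (h : IsSimplex s σ) (η : ι → ℝ) {j : ι} (hj : j ∈ σ) :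
    h.interpolant η (s j) = η j := by
  classical
  simp [interpolant_apply, h.coord_apply_of_mem hj]

end IsSimplex

theorem affineMap_apply_sum_smul {κ : Type*} [Fintype κ] (f : V →ᵃ[ℝ] ℝ) {w : κ → ℝ}
    (hw : ∑ i, w i = 1) (p : κ → V) : f (∑ i, w i • p i) = ∑ i, w i * f (p i) := by
  have := Finset.univ.map_affineCombination p w hw f
  simpa [Finset.affineCombination_eq_linear_combination _ _ _ hw] using this

/-- No affine relation among the points `s i` makes `x` exceptional: `x` avoids every
lower-dimensional flat which they span. -/
def IsGeneric (s : ι → V) (x : V) : Prop :=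
  ∀ σ : Finset ι, affineSpan ℝ (s '' σ) ≠ ⊤ → x ∉ affineSpan ℝ (s '' σ)

theorem ae_isGeneric [Finite ι] [FiniteDimensional ℝ V] [MeasurableSpace V] [BorelSpace V]
    (μ : Measure V) [μ.IsAddHaarMeasure] (s : ι → V) : ∀ᵐ x ∂μ, IsGeneric s x := by
  simp only [IsGeneric, ae_all_iff]
  exact fun σ hσ ↦ measure_eq_zero_iff_ae_notMem.1 (Measure.addHaar_affineSubspace μ _ hσ)

theorem exists_isSimplex_subset {S : Finset ι} (hS : affineSpan ℝ (s '' S) = ⊤) :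
    ∃ σ ⊆ S, IsSimplex s σ := by
  obtain ⟨T, hTS, hT, hind⟩ := exists_affineIndependent ℝ V (s '' S)
  obtain ⟨σ, hσS, hσ⟩ := (surjOn_image s S).mono subset_rfl hTS |>.exists_bijOn_subset
  lift σ to Finset ι using S.finite_toSet.subset hσS
  refine ⟨σ, by exact_mod_cast hσS, ?_, by rw [hσ.image_eq, hT, hS]⟩
  exact hind.comp_embedding ⟨_, hσ.bijective.injective⟩

variable [Fintype ι]

theorem IsGeneric.affineSpan_support_eq_top {x : V} (hx : IsGeneric s x) {w : ι → ℝ}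
    (hw : ∑ i, w i = 1) (hwx : ∑ i, w i • s i = x) {S : Finset ι} (hS : ∀ i, w i ≠ 0 → i ∈ S) :
    affineSpan ℝ (s '' S) = ⊤ := by
  by_contra hne
  refine hx S hne ?_
  have hsum : ∑ i ∈ S, w i = 1 := by
    rw [← hw]
    exact Finset.sum_subset S.subset_univ fun i _ hi ↦ not_not.1 (mt (hS i) hi)
  rw [← hwx, ← Finset.sum_subset S.subset_univ fun i _ hi ↦ by
    rw [not_not.1 (mt (hS i) hi), zero_smul],
    ← Finset.affineCombination_eq_linear_combination _ _ _ hsum]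
  exact affineCombination_mem_affineSpan_image hsum (fun i hi hiS ↦ absurd hi hiS) _

omit [Fintype ι] in
theorem IsGeneric.coord_pos [Finite ι] {x : V} (hx : IsGeneric s x) (h : IsSimplex s σ)
    (hxσ : x ∈ convexHull ℝ (s '' σ)) {i : ι} (hi : i ∈ σ) : 0 < h.coord i x := by
  classical
  have := Fintype.ofFinite ι
  refine (h.coord_nonneg hxσ i).lt_of_ne' fun hzero ↦ ?_
  have facet_spans : affineSpan ℝ (s '' (σ.erase i : Finset ι)) = ⊤ := by
    refine hx.affineSpan_support_eq_top (h.sum_coord x) (h.sum_coord_smul_eq x) fun j hj ↦ ?_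
    refine Finset.mem_erase.2 ⟨?_, by_contra fun hjσ ↦ hj (h.coord_of_notMem hjσ x)⟩
    rintro rfl
    exact hj hzero
  refine h.affineIndependent.notMem_affineSpan_sdiff ⟨i, hi⟩ Set.univ ?_
  convert! AffineSubspace.mem_top ℝ V (s i)
  rw [← facet_spans]
  congr 1
  ext v
  simp only [mem_image, Finset.mem_coe, Finset.mem_erase, Subtype.exists]
  aesop

/-- The ways of writing `x` as a convex combination of the points `s i`. -/
def convexWeights (s : ι → V) (x : V) : Set (ι → ℝ) :=
  {w | w ∈ stdSimplex ℝ ι ∧ ∑ i, w i • s i = x}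

theorem exists_isMinOn_convexWeights {x : V} (hx : x ∈ convexHull ℝ (range s)) (η : ι → ℝ) :
    ∃ w ∈ convexWeights s x, IsMinOn (fun w ↦ ∑ i, w i * η i) (convexWeights s x) w := by
  have nonempty : (convexWeights s x).Nonempty := by
    classical
    have s_eq : s = Fintype.linearCombination ℝ s ∘ fun i ↦ Pi.single i 1 := by
      ext i
      simp [Fintype.linearCombination_apply_single]
    rw [s_eq, range_comp, ← LinearMap.image_convexHull,
      convexHull_rangle_single_eq_stdSimplex] at hx
    obtain ⟨w, hw, rfl⟩ := hx
    exact ⟨w, hw, rfl⟩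
  have compact : IsCompact (convexWeights s x) :=
    (isCompact_stdSimplex ℝ ι).inter_right (isClosed_eq (by fun_prop) continuous_const)
  exact compact.exists_isMinOn nonempty (by fun_prop)

theorem sum_mul_nonneg_of_isMinOn_convexWeights {x : V} {η w v : ι → ℝ}
    (hw : w ∈ convexWeights s x)
    (hmin : IsMinOn (fun w ↦ ∑ i, w i * η i) (convexWeights s x) w)
    (hv : ∑ i, v i = 0) (hvs : ∑ i, v i • s i = 0) (hwv : ∀ i, w i = 0 → 0 ≤ v i) :
    0 ≤ ∑ i, v i * η i := by
  have feasible : ∀ᶠ ε : ℝ in nhdsWithin 0 (Ioi 0), ∀ i, 0 ≤ w i + ε * v i := by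
    refine eventually_all.2 fun i ↦ ?_
    rcases (hw.1.1 i).eq_or_lt with hzero | hpos
    · filter_upwards [self_mem_nhdsWithin] with ε (hε : 0 < ε)
      simpa [← hzero] using mul_nonneg hε.le (hwv i hzero.symm)
    · have lim : Tendsto (fun ε : ℝ ↦ w i + ε * v i) (nhdsWithin 0 (Ioi 0)) (nhds (w i)) := by
        have : Continuous fun ε : ℝ ↦ w i + ε * v i := by fun_prop
        simpa using (this.tendsto 0).mono_left nhdsWithin_le_nhds
      exact (lim.eventually_const_lt hpos).mono fun ε hε ↦ hε.le
  obtain ⟨ε, hε, hεpos⟩ := (feasible.and self_mem_nhdsWithin).exists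
  have mem : (fun i ↦ w i + ε * v i) ∈ convexWeights s x := by
    refine ⟨⟨hε, ?_⟩, ?_⟩
    · rw [Finset.sum_add_distrib, ← Finset.mul_sum, hv, hw.1.2, mul_zero, add_zero]
    · simp_rw [add_smul, mul_smul]
      rw [Finset.sum_add_distrib, ← Finset.smul_sum, hvs, hw.2, smul_zero, add_zero]
  have increase := isMinOn_iff.1 hmin _ mem
  simp only [add_mul, mul_assoc, Finset.sum_add_distrib, ← Finset.mul_sum] at increase
  exact nonneg_of_mul_nonneg_right (by linarith) hεpos

theorem IsSimplex.interpolant_le_of_isMinOn (h : IsSimplex s σ) {x : V} {η w : ι → ℝ}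
    (hw : w ∈ convexWeights s x)
    (hmin : IsMinOn (fun w ↦ ∑ i, w i * η i) (convexWeights s x) w)
    (hσ : ∀ i ∈ σ, w i ≠ 0) (j : ι) :
    h.interpolant η (s j) ≤ η j ∧ (w j ≠ 0 → h.interpolant η (s j) = η j) := by
  classical
  set v : ι → ℝ := Pi.single j 1 - fun i ↦ h.coord i (s j) with v_def
  have v_sum : ∑ i, v i = 0 := by simp [v_def, h.sum_coord]
  have v_smul : ∑ i, v i • s i = 0 := by
    simp [v_def, sub_smul, h.sum_coord_smul_eq, Pi.single_apply]
  have v_mul : ∑ i, v i * η i = η j - h.interpolant η (s j) := by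
    simp [v_def, sub_mul, h.interpolant_apply, Pi.single_apply]
  have v_of_zero (i : ι) (hi : w i = 0) : v i = Pi.single (M := fun _ ↦ ℝ) j 1 i := by
    simp [v_def, h.coord_of_notMem fun hiσ ↦ hσ i hiσ hi]
  have le : 0 ≤ η j - h.interpolant η (s j) := by
    rw [← v_mul]
    refine sum_mul_nonneg_of_isMinOn_convexWeights hw hmin v_sum v_smul fun i hi ↦ ?_
    rw [v_of_zero i hi, Pi.single_apply]
    positivity
  refine ⟨sub_nonneg.1 le, fun hj ↦ le_antisymm (sub_nonneg.1 le) ?_⟩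
  have ge : 0 ≤ ∑ i, (-v) i * η i := by
    refine sum_mul_nonneg_of_isMinOn_convexWeights hw hmin (by simp [v_sum]) (by simp [v_smul])
      fun i hi ↦ ?_
    rw [Pi.neg_apply, v_of_zero i hi, Pi.single_eq_of_ne (by rintro rfl; exact hj hi), neg_zero]
  simp only [Pi.neg_apply, neg_mul, Finset.sum_neg_distrib, v_mul] at ge
  linarith

theorem IsGeneric.exists_isSimplex_mem_convexHull {x : V} (hx : IsGeneric s x)
    (hxs : x ∈ convexHull ℝ (range s)) {η : ι → ℝ}
    (hη : ∀ σ (h : IsSimplex s σ), ∀ j ∉ σ, h.interpolant η (s j) ≠ η j) :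
    ∃ σ, ∃ h : IsSimplex s σ, (∀ j, h.interpolant η (s j) ≤ η j) ∧
      x ∈ convexHull ℝ (s '' σ) := by
  classical
  obtain ⟨w, hw, hmin⟩ := exists_isMinOn_convexWeights hxs η
  obtain ⟨σ, hσ, h⟩ := exists_isSimplex_subset <| hx.affineSpan_support_eq_top hw.1.2 hw.2
    (S := Finset.univ.filter fun i ↦ w i ≠ 0) (by simp)
  have optimal := h.interpolant_le_of_isMinOn hw hmin fun i hi ↦ by simpa using hσ hi
  have support_subset (i : ι) (hi : i ∉ σ) : w i = 0 :=
    by_contra fun hwi ↦ hη σ h i hi ((optimal i).2 hwi)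
  refine ⟨σ, h, fun j ↦ (optimal j).1, ?_⟩
  rw [← hw.2, ← Finset.sum_subset σ.subset_univ fun i _ hi ↦ by rw [support_subset i hi, zero_smul]]
  refine (convex_convexHull ℝ _).sum_mem (fun i _ ↦ hw.1.1 i) ?_ fun i hi ↦
    subset_convexHull ℝ _ (mem_image_of_mem s hi)
  rw [Finset.sum_subset σ.subset_univ fun i _ hi ↦ support_subset i hi, hw.1.2]

theorem IsGeneric.subset_of_mem_convexHull {x : V} (hx : IsGeneric s x) {η : ι → ℝ}
    (hη : ∀ σ (h : IsSimplex s σ), ∀ j ∉ σ, h.interpolant η (s j) ≠ η j) {σ τ : Finset ι}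
    (hσ : IsSimplex s σ) (hτ : IsSimplex s τ) (hση : ∀ j, hσ.interpolant η (s j) ≤ η j)
    (hτη : ∀ j, hτ.interpolant η (s j) ≤ η j) (hxσ : x ∈ convexHull ℝ (s '' σ))
    (hxτ : x ∈ convexHull ℝ (s '' τ)) : σ ⊆ τ := by
  have apply_le {ρ : Finset ι} (hρ : IsSimplex s ρ) (hxρ : x ∈ convexHull ℝ (s '' ρ))
      {a : V →ᵃ[ℝ] ℝ} (ha : ∀ j, a (s j) ≤ η j) (i : ι) :
      hρ.coord i x * a (s i) ≤ hρ.coord i x * η i :=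
    mul_le_mul_of_nonneg_left (ha i) (hρ.coord_nonneg hxρ i)
  have apply_eq {ρ : Finset ι} (hρ : IsSimplex s ρ) (a : V →ᵃ[ℝ] ℝ) :
      a x = ∑ i, hρ.coord i x * a (s i) := by
    rw [← affineMap_apply_sum_smul a (hρ.sum_coord x), hρ.sum_coord_smul_eq]
  have value_eq : ∑ i, hσ.coord i x * hτ.interpolant η (s i) = ∑ i, hσ.coord i x * η i := by
    refine le_antisymm (Finset.sum_le_sum fun i _ ↦ apply_le hσ hxσ hτη i) ?_
    rw [← hσ.interpolant_apply, ← apply_eq hσ, apply_eq hτ, hτ.interpolant_apply η x]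
    exact Finset.sum_le_sum fun i _ ↦ apply_le hτ hxτ hση i
  intro i hi
  by_contra hiτ
  refine hη τ hτ i hiτ (mul_left_cancel₀ (hx.coord_pos hσ hxσ hi).ne' ?_)
  exact (Finset.sum_eq_sum_iff_of_le fun i _ ↦ apply_le hσ hxσ hτη i).1 value_eq i
    (Finset.mem_univ i)

/-- A regular triangulation of the convex hull of the points `s i`: a set `𝒯` of simplices
covering almost every point exactly once, together with the affine functions `a σ` making up the
lower convex envelope of the heights `t`. -/
structure IsRegularTriangulation (s : ι → V) (t : ι → ℝ) (𝒯 : Finset (Finset ι))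
    (a : Finset ι → V →ᵃ[ℝ] ℝ) : Prop where
  isSimplex : ∀ σ ∈ 𝒯, IsSimplex s σ
  apply_le : ∀ σ ∈ 𝒯, ∀ j, a σ (s j) ≤ t j
  apply_eq : ∀ σ ∈ 𝒯, ∀ j ∈ σ, a σ (s j) = t j
  existsUnique : ∀ x ∈ convexHull ℝ (range s), IsGeneric s x →
    ∃! σ, σ ∈ 𝒯 ∧ x ∈ convexHull ℝ (s '' σ)

theorem exists_generic_heights (s : ι → V) (t : ι → ℝ) :
    ∃ η : ι → ℝ, ∀ σ (h : IsSimplex s σ), ∀ j ∉ σ, h.interpolant η (s j) ≠ η j ∧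
      (t j < h.interpolant t (s j) → η j < h.interpolant η (s j)) := by
  classical
  let f (k : {k : Finset ι × ι // IsSimplex s k.1 ∧ k.2 ∉ k.1}) : Module.Dual ℝ (ι → ℝ) :=
    ∑ i, k.2.1.coord i (s k.1.2) • LinearMap.proj i - LinearMap.proj k.1.2
  have f_apply (k) (η : ι → ℝ) : f k η = k.2.1.interpolant η (s k.1.2) - η k.1.2 := by
    simp [f, IsSimplex.interpolant_apply]
  have f_ne_zero (k) : f k ≠ 0 := by
    intro hzero
    have := f_apply k (Pi.single k.1.2 1)
    simp [hzero, IsSimplex.interpolant_apply, k.2.1.coord_of_notMem k.2.2, Pi.single_apply] at this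
  obtain ⟨η, hη⟩ := exists_forall_ne_zero_and_pos f f_ne_zero t
  refine ⟨η, fun σ h j hj ↦ ?_⟩
  simpa only [f_apply, sub_ne_zero, sub_pos] using hη ⟨(σ, j), h, hj⟩

omit [Fintype ι] in
theorem exists_isRegularTriangulation [Finite ι] (s : ι → V) (t : ι → ℝ) :
    ∃ 𝒯 a, IsRegularTriangulation s t 𝒯 a := by
  classical
  have := Fintype.ofFinite ι
  obtain ⟨η, hη⟩ := exists_generic_heights s t
  have hne (σ) (h : IsSimplex s σ) (j) (hj : j ∉ σ) := (hη σ h j hj).1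
  refine ⟨Finset.univ.filter fun σ ↦ ∃ h : IsSimplex s σ, ∀ j, h.interpolant η (s j) ≤ η j,
    fun σ ↦ if h : IsSimplex s σ then h.interpolant t else 0, ?_, ?_, ?_, fun x hxs hx ↦ ?_⟩
  · simp +contextual
  · simp only [Finset.mem_filter, Finset.mem_univ, true_and]
    rintro σ ⟨h, hσ⟩ j
    rw [dif_pos h]
    by_cases hj : j ∈ σ
    · exact (h.interpolant_apply_of_mem t hj).le
    · exact not_lt.1 fun hlt ↦ ((hη σ h j hj).2 hlt).not_ge (hσ j)
  · simp only [Finset.mem_filter, Finset.mem_univ, true_and]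
    rintro σ ⟨h, -⟩ j hj
    rw [dif_pos h, h.interpolant_apply_of_mem t hj]
  · obtain ⟨σ, h, hσ, hxσ⟩ := hx.exists_isSimplex_mem_convexHull hxs hne
    refine ⟨σ, by simpa using ⟨⟨h, hσ⟩, hxσ⟩, ?_⟩
    simp only [Finset.mem_filter, Finset.mem_univ, true_and]
    rintro τ ⟨⟨hτ, hτη⟩, hxτ⟩
    exact (hx.subset_of_mem_convexHull hne hτ h hτη hσ hxτ hxσ).antisymm
      (hx.subset_of_mem_convexHull hne h hτ hσ hτη hxσ hxτ)

end RegularTriangulation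

section SlopeDistribution

variable {V ι ι' : Type*} [NormedAddCommGroup V] [NormedSpace ℝ V] [Finite ι] [Finite ι']
  {s : ι → V} {t : ι → ℝ} {𝒯 : Finset (Finset ι)} {a : Finset ι → V →ᵃ[ℝ] ℝ}
  {s' : ι' → V} {t' : ι' → ℝ} {𝒯' : Finset (Finset ι')} {a' : Finset ι' → V →ᵃ[ℝ] ℝ}

/-- The convex conjugate of the lower envelope of the points `(s i, t i)`, a function of slopes. -/
def conjugate (s : ι → V) (t : ι → ℝ) (y : V →ₗ[ℝ] ℝ) : ℝ := ⨆ i, (y (s i) - t i)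

theorem sub_le_conjugate (s : ι → V) (t : ι → ℝ) (y : V →ₗ[ℝ] ℝ) (i : ι) :
    y (s i) - t i ≤ conjugate s t y :=
  le_ciSup (finite_range fun i ↦ y (s i) - t i).bddAbove i

open Classical in
/-- The distribution of the gradient of a piecewise affine function with pieces `a σ` on the cells
`σ`: the total volume of the cells on which the gradient is `g`. -/
def slopeVolume [MeasurableSpace V] (μ : Measure V) (s : ι → V) (𝒯 : Finset (Finset ι))
    (a : Finset ι → V →ᵃ[ℝ] ℝ) (g : V →ₗ[ℝ] ℝ) : ℝ :=
  ∑ σ ∈ 𝒯 with (a σ).linear = g, μ.real (convexHull ℝ (s '' σ))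

omit [Finite ι] in
theorem sum_measureReal_mul_eq_sum_slopeVolume_mul [MeasurableSpace V] (μ : Measure V)
    {F : (V →ₗ[ℝ] ℝ) → ℝ} {A : Finset (V →ₗ[ℝ] ℝ)} (hA : ∀ σ ∈ 𝒯, (a σ).linear ∈ A) :
    ∑ σ ∈ 𝒯, μ.real (convexHull ℝ (s '' σ)) * F (a σ).linear =
      ∑ g ∈ A, slopeVolume μ s 𝒯 a g * F g := by
  classical
  rw [← Finset.sum_fiberwise_of_maps_to hA]
  refine Finset.sum_congr rfl fun g _ ↦ ?_
  rw [slopeVolume, Finset.sum_mul]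
  exact Finset.sum_congr (by congr) fun σ hσ ↦ by rw [(Finset.mem_filter.1 hσ).2]

/-- The maximum of the affine functions `a σ`, `σ ∈ 𝒯`. -/
def upperEnvelope (𝒯 : Finset (Finset ι)) (a : Finset ι → V →ᵃ[ℝ] ℝ) (x : V) : ℝ :=
  ⨆ σ : 𝒯, a σ x

omit [Finite ι] in
theorem le_upperEnvelope {σ : Finset ι} (hσ : σ ∈ 𝒯) (x : V) : a σ x ≤ upperEnvelope 𝒯 a x :=
  le_ciSup (f := fun σ : 𝒯 ↦ a σ x) (finite_range _).bddAbove ⟨σ, hσ⟩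

omit [Finite ι] in
theorem continuous_upperEnvelope [FiniteDimensional ℝ V] : Continuous (upperEnvelope 𝒯 a) := by
  unfold upperEnvelope
  rcases isEmpty_or_nonempty 𝒯 with hempty | hne
  · simpa only [Real.iSup_of_isEmpty] using continuous_const
  · simp_rw [← Finset.sup'_univ_eq_ciSup]
    exact Continuous.finset_sup'_apply _ fun σ _ ↦ (a σ).continuous_of_finiteDimensional

namespace IsRegularTriangulation

theorem apply_le_of_mem (h : IsRegularTriangulation s t 𝒯 a) {σ : Finset ι} (hσ : σ ∈ 𝒯) {x : V}
    (hx : x ∈ convexHull ℝ (s '' σ)) {f : V →ᵃ[ℝ] ℝ} (hf : ∀ i, f (s i) ≤ t i) : f x ≤ a σ x := by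
  have := Fintype.ofFinite ι
  have hs := h.isSimplex σ hσ
  rw [← hs.sum_coord_smul_eq x, affineMap_apply_sum_smul _ (hs.sum_coord x),
    affineMap_apply_sum_smul _ (hs.sum_coord x)]
  refine Finset.sum_le_sum fun i _ ↦ ?_
  by_cases hi : i ∈ σ
  · rw [h.apply_eq σ hσ i hi]
    exact mul_le_mul_of_nonneg_left (hf i) (hs.coord_nonneg hx i)
  · simp [hs.coord_of_notMem hi]

theorem sub_conjugate_le (h : IsRegularTriangulation s t 𝒯 a) {σ : Finset ι} (hσ : σ ∈ 𝒯) {x : V}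
    (hx : x ∈ convexHull ℝ (s '' σ)) (y : V →ₗ[ℝ] ℝ) : y x - conjugate s t y ≤ a σ x :=
  h.apply_le_of_mem hσ hx (f := y.toAffineMap - AffineMap.const ℝ V (conjugate s t y)) fun i ↦ by
    have := sub_le_conjugate s t y i
    simp only [AffineMap.coe_sub, LinearMap.coe_toAffineMap, AffineMap.coe_const, Pi.sub_apply,
      Function.const_apply]
    linarith

omit [Finite ι] in
theorem nonempty_of_mem (h : IsRegularTriangulation s t 𝒯 a) {σ : Finset ι} (hσ : σ ∈ 𝒯) :
    σ.Nonempty := by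
  by_contra hempty
  have := (h.isSimplex σ hσ).affineSpan_eq_top
  simp [Finset.not_nonempty_iff_eq_empty.1 hempty, AffineSubspace.span_empty] at this

theorem conjugate_linear (h : IsRegularTriangulation s t 𝒯 a) {σ : Finset ι} (hσ : σ ∈ 𝒯) :
    conjugate s t (a σ).linear = -a σ 0 := by
  have apply_eq (x : V) : a σ x = (a σ).linear x + a σ 0 := congrFun (a σ).decomp x
  obtain ⟨i, hi⟩ := h.nonempty_of_mem hσ
  have : Nonempty ι := ⟨i⟩
  refine le_antisymm (ciSup_le fun j ↦ ?_) (le_trans ?_ (sub_le_conjugate s t _ i))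
  · linarith [h.apply_le σ hσ j, apply_eq (s j)]
  · linarith [h.apply_eq σ hσ i hi, apply_eq (s i)]

theorem apply_eq_sub_conjugate (h : IsRegularTriangulation s t 𝒯 a) {σ : Finset ι} (hσ : σ ∈ 𝒯)
    (x : V) : a σ x = (a σ).linear x - conjugate s t (a σ).linear := by
  rw [h.conjugate_linear hσ, sub_neg_eq_add]
  exact congrFun (a σ).decomp x

omit [Finite ι] in
theorem upperEnvelope_apply_le (h : IsRegularTriangulation s t 𝒯 a) (h𝒯 : 𝒯.Nonempty) (i : ι) :
    upperEnvelope 𝒯 a (s i) ≤ t i :=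
  have := h𝒯.to_subtype
  ciSup_le fun σ ↦ h.apply_le σ σ.2 i

theorem upperEnvelope_eq (h : IsRegularTriangulation s t 𝒯 a) {σ : Finset ι} (hσ : σ ∈ 𝒯)
    {x : V} (hx : x ∈ convexHull ℝ (s '' σ)) : upperEnvelope 𝒯 a x = a σ x :=
  have : Nonempty 𝒯 := ⟨σ, hσ⟩
  (ciSup_le fun τ : 𝒯 ↦ h.apply_le_of_mem hσ hx (h.apply_le τ τ.2)).antisymm
    (le_upperEnvelope hσ x)

variable [FiniteDimensional ℝ V] [MeasurableSpace V] [BorelSpace V] (μ : Measure V)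
  [μ.IsAddHaarMeasure]

theorem ae_existsUnique (h : IsRegularTriangulation s t 𝒯 a) : ∀ᵐ x ∂μ,
    x ∈ convexHull ℝ (range s) → ∃! σ, σ ∈ 𝒯 ∧ x ∈ convexHull ℝ (s '' σ) :=
  (ae_isGeneric μ s).mono fun x hx hxs ↦ h.existsUnique x hxs hx

end IsRegularTriangulation

section Uniqueness

/-- The function `F (∇φ)`, where `φ` has the gradient of `a σ` on the cell `σ`. -/
def gradientComp (s : ι → V) (𝒯 : Finset (Finset ι)) (a : Finset ι → V →ᵃ[ℝ] ℝ)
    (F : (V →ₗ[ℝ] ℝ) → ℝ) (x : V) : ℝ :=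
  ∑ σ ∈ 𝒯, (convexHull ℝ (s '' σ)).indicator (fun _ ↦ F (a σ).linear) x

omit [Finite ι] in
theorem gradientComp_eq {F : (V →ₗ[ℝ] ℝ) → ℝ} {x : V} {σ : Finset ι} (hσ : σ ∈ 𝒯)
    (hx : x ∈ convexHull ℝ (s '' σ)) (hunique : ∀ τ ∈ 𝒯, x ∈ convexHull ℝ (s '' τ) → τ = σ) :
    gradientComp s 𝒯 a F x = F (a σ).linear := by
  rw [gradientComp, Finset.sum_eq_single_of_mem σ hσ, indicator_of_mem hx]
  exact fun τ hτ hne ↦ indicator_of_notMem (fun hxτ ↦ hne (hunique τ hτ hxτ)) _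

omit [Finite ι] in
theorem gradientComp_eq_zero {F : (V →ₗ[ℝ] ℝ) → ℝ} {x : V} (hx : x ∉ convexHull ℝ (range s)) :
    gradientComp s 𝒯 a F x = 0 :=
  Finset.sum_eq_zero fun _ _ ↦
    indicator_of_notMem (fun hxσ ↦ hx (convexHull_mono (image_subset_range _ _) hxσ)) _

variable [FiniteDimensional ℝ V] [MeasurableSpace V] [BorelSpace V] {μ : Measure V}
  [μ.IsAddHaarMeasure]

omit [Finite ι] [FiniteDimensional ℝ V] in
theorem integrable_indicator_convexHull_image (σ : Finset ι) (c : ℝ) :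
    Integrable ((convexHull ℝ (s '' σ)).indicator fun _ ↦ c) μ := by
  have compact := (σ.finite_toSet.image s).isCompact_convexHull (𝕜 := ℝ)
  rw [integrable_indicator_iff compact.measurableSet]
  exact integrableOn_const compact.measure_lt_top.ne

omit [Finite ι] [FiniteDimensional ℝ V] in
theorem integrable_gradientComp (F : (V →ₗ[ℝ] ℝ) → ℝ) : Integrable (gradientComp s 𝒯 a F) μ :=
  integrable_finsetSum _ fun σ _ ↦ integrable_indicator_convexHull_image σ _

omit [Finite ι] [FiniteDimensional ℝ V] in
theorem integral_gradientComp (F : (V →ₗ[ℝ] ℝ) → ℝ) :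
    ∫ x, gradientComp s 𝒯 a F x ∂μ =
      ∑ σ ∈ 𝒯, μ.real (convexHull ℝ (s '' σ)) * F (a σ).linear := by
  simp only [gradientComp]
  rw [integral_finsetSum _ fun σ _ ↦ integrable_indicator_convexHull_image σ _]
  refine Finset.sum_congr rfl fun σ _ ↦ ?_
  rw [integral_indicator_const _
    ((σ.finite_toSet.image s).isCompact_convexHull (𝕜 := ℝ)).measurableSet, smul_eq_mul]

theorem IsRegularTriangulation.sum_measureReal_convexHull (h : IsRegularTriangulation s t 𝒯 a) :
    ∑ σ ∈ 𝒯, μ.real (convexHull ℝ (s '' σ)) = μ.real (convexHull ℝ (range s)) := by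
  have ae_eq : gradientComp s 𝒯 a (fun _ ↦ 1) =ᵐ[μ] (convexHull ℝ (range s)).indicator 1 := by
    filter_upwards [h.ae_existsUnique μ] with x hx
    by_cases hxs : x ∈ convexHull ℝ (range s)
    · obtain ⟨σ, ⟨hσ, hxσ⟩, hunique⟩ := hx hxs
      rw [gradientComp_eq hσ hxσ fun ρ hρ hxρ ↦ hunique ρ ⟨hρ, hxρ⟩, indicator_of_mem hxs,
        Pi.one_apply]
    · rw [gradientComp_eq_zero hxs, indicator_of_notMem hxs]
  simpa [integral_gradientComp, integral_indicator_one
    ((finite_range s).isCompact_convexHull (𝕜 := ℝ)).measurableSet] using integral_congr_ae ae_eq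

omit [Finite ι] [Finite ι'] [FiniteDimensional ℝ V] in
theorem integral_gradientComp_eq (hvol : slopeVolume μ s 𝒯 a = slopeVolume μ s' 𝒯' a')
    (F : (V →ₗ[ℝ] ℝ) → ℝ) :
    ∫ x, gradientComp s 𝒯 a F x ∂μ = ∫ x, gradientComp s' 𝒯' a' F x ∂μ := by
  classical
  let A := 𝒯.image (fun σ ↦ (a σ).linear) ∪ 𝒯'.image fun σ ↦ (a' σ).linear
  rw [integral_gradientComp, integral_gradientComp,
    sum_measureReal_mul_eq_sum_slopeVolume_mul μ (A := A) fun σ hσ ↦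
      Finset.mem_union_left _ (Finset.mem_image_of_mem _ hσ),
    sum_measureReal_mul_eq_sum_slopeVolume_mul μ (A := A) fun σ hσ ↦
      Finset.mem_union_right _ (Finset.mem_image_of_mem _ hσ), hvol]

omit [BorelSpace V] [FiniteDimensional ℝ V] in
theorem subset_of_ae_mem {Q A : Set V} (hQ : Convex ℝ Q) (hint : (interior Q).Nonempty)
    (hA : IsClosed A) (hQA : ∀ᵐ x ∂μ, x ∈ Q → x ∈ A) : Q ⊆ A :=
  calc Q ⊆ closure (interior Q) := by
        rw [hQ.closure_interior_eq_closure_of_nonempty_interior hint]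
        exact subset_closure
    _ ⊆ closure (interior Q ∩ {x | x ∈ Q → x ∈ A}) :=
        closure_minimal ((Measure.dense_of_ae hQA).open_subset_closure_inter isOpen_interior)
          isClosed_closure
    _ ⊆ A := closure_minimal (fun _ hx ↦ hx.2 (interior_subset hx.1)) hA

namespace IsRegularTriangulation

variable (μ)

include μ in
theorem sub_conjugate_le_upperEnvelope
    (h : IsRegularTriangulation s t 𝒯 a) (hint : (interior (convexHull ℝ (range s))).Nonempty)
    (y : V →ₗ[ℝ] ℝ) {x : V} (hx : x ∈ convexHull ℝ (range s)) :
    y x - conjugate s t y ≤ upperEnvelope 𝒯 a x := by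
  have closed : IsClosed {x | y x - conjugate s t y ≤ upperEnvelope 𝒯 a x} :=
    isClosed_le (y.continuous_of_finiteDimensional.sub continuous_const) continuous_upperEnvelope
  refine subset_of_ae_mem (μ := μ) (convex_convexHull ℝ _) hint closed ?_ hx
  filter_upwards [h.ae_existsUnique μ] with z hz hzs
  obtain ⟨σ, ⟨hσ, hzσ⟩, -⟩ := hz hzs
  exact (h.sub_conjugate_le hσ hzσ y).trans (le_upperEnvelope hσ z)

include μ in
theorem nonempty (h : IsRegularTriangulation s t 𝒯 a)
    (hint : (interior (convexHull ℝ (range s))).Nonempty) : 𝒯.Nonempty := by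
  by_contra hempty
  obtain ⟨x, hx⟩ := hint.mono interior_subset
  refine subset_of_ae_mem (μ := μ) (A := ∅) (convex_convexHull ℝ _) hint isClosed_empty ?_ hx
  filter_upwards [h.ae_existsUnique μ] with z hz hzs
  obtain ⟨σ, ⟨hσ, -⟩, -⟩ := hz hzs
  exact hempty ⟨σ, hσ⟩

include μ in
theorem conjugate_le (h : IsRegularTriangulation s t 𝒯 a)
    (h' : IsRegularTriangulation s' t' 𝒯' a')
    (hrange : convexHull ℝ (range s) = convexHull ℝ (range s'))
    (hint : (interior (convexHull ℝ (range s))).Nonempty) {c : ℝ}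
    (hc : ∀ x ∈ convexHull ℝ (range s), upperEnvelope 𝒯' a' x ≤ upperEnvelope 𝒯 a x + c)
    (y : V →ₗ[ℝ] ℝ) : conjugate s t y ≤ conjugate s' t' y + c := by
  have h𝒯 := h.nonempty μ hint
  obtain ⟨σ, hσ⟩ := h𝒯
  have : Nonempty ι := (h.nonempty_of_mem hσ).to_type
  refine ciSup_le fun i ↦ ?_
  have hi : s i ∈ convexHull ℝ (range s) := subset_convexHull ℝ _ (mem_range_self i)
  have := h'.sub_conjugate_le_upperEnvelope μ (hrange ▸ hint) y (hrange ▸ hi)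
  linarith [hc _ hi, h.upperEnvelope_apply_le ⟨σ, hσ⟩ i]

end IsRegularTriangulation

variable (h : IsRegularTriangulation s t 𝒯 a) (h' : IsRegularTriangulation s' t' 𝒯' a')
  (hrange : convexHull ℝ (range s) = convexHull ℝ (range s'))
include h h' hrange

theorem ae_upperEnvelope_sub_le :
    ∀ᵐ x ∂μ, x ∈ convexHull ℝ (range s) →
      upperEnvelope 𝒯 a x - upperEnvelope 𝒯' a' x ≤
        gradientComp s 𝒯 a (conjugate s' t' - conjugate s t) x := by
  filter_upwards [h.ae_existsUnique μ, h'.ae_existsUnique μ] with x hx hx' hxs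
  obtain ⟨σ, ⟨hσ, hxσ⟩, hunique⟩ := hx hxs
  obtain ⟨τ, ⟨hτ, hxτ⟩, -⟩ := hx' (hrange ▸ hxs)
  rw [gradientComp_eq hσ hxσ fun ρ hρ hxρ ↦ hunique ρ ⟨hρ, hxρ⟩, Pi.sub_apply,
    h.upperEnvelope_eq hσ hxσ, h'.upperEnvelope_eq hτ hxτ, h.apply_eq_sub_conjugate hσ]
  linarith [h'.sub_conjugate_le hτ hxτ (a σ).linear]

/-- The two bounds of `φ - φ'` given by the subgradient inequalities have equal integrals. -/
theorem ae_upperEnvelope_sub_eq (hvol : slopeVolume μ s 𝒯 a = slopeVolume μ s' 𝒯' a') :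
    ∀ᵐ x ∂μ, x ∈ convexHull ℝ (range s) →
      upperEnvelope 𝒯 a x - upperEnvelope 𝒯' a' x =
        gradientComp s 𝒯 a (conjugate s' t' - conjugate s t) x := by
  set D := conjugate s' t' - conjugate s t
  have neg_gradientComp (x : V) :
      gradientComp s' 𝒯' a' (conjugate s t - conjugate s' t') x = -gradientComp s' 𝒯' a' D x := by
    rw [← neg_sub (conjugate s' t')]
    simp only [gradientComp, Pi.neg_apply, ← Finset.sum_neg_distrib, D]
    exact Finset.sum_congr rfl fun σ _ ↦ congrFun (indicator_neg _ _) x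
  have lower : ∀ᵐ x ∂μ, x ∈ convexHull ℝ (range s) →
      gradientComp s' 𝒯' a' D x ≤ upperEnvelope 𝒯 a x - upperEnvelope 𝒯' a' x := by
    filter_upwards [ae_upperEnvelope_sub_le (μ := μ) h' h hrange.symm] with x hx hxs
    linarith [hx (hrange ▸ hxs), neg_gradientComp x]
  have upper := ae_upperEnvelope_sub_le (μ := μ) h h' hrange
  have le : gradientComp s' 𝒯' a' D ≤ᵐ[μ] gradientComp s 𝒯 a D := by
    filter_upwards [lower, upper] with x hlower hupper
    by_cases hxs : x ∈ convexHull ℝ (range s)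
    · exact (hlower hxs).trans (hupper hxs)
    · rw [gradientComp_eq_zero hxs, gradientComp_eq_zero (hrange ▸ hxs)]
  have eq : gradientComp s' 𝒯' a' D =ᵐ[μ] gradientComp s 𝒯 a D :=
    (integral_eq_iff_of_ae_le (integrable_gradientComp D) (integrable_gradientComp D) le).1
      (integral_gradientComp_eq hvol D).symm
  filter_upwards [lower, upper, eq] with x hlower hupper heq hxs
  exact (hupper hxs).antisymm (heq ▸ hlower hxs)

theorem exists_upperEnvelope_eq_add_const (hint : (interior (convexHull ℝ (range s))).Nonempty)
    (hvol : slopeVolume μ s 𝒯 a = slopeVolume μ s' 𝒯' a') :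
    ∃ c, ∀ x ∈ convexHull ℝ (range s), upperEnvelope 𝒯 a x = upperEnvelope 𝒯' a' x + c := by
  set Q := convexHull ℝ (range s)
  set ψ : V → ℝ := fun x ↦ upperEnvelope 𝒯 a x - upperEnvelope 𝒯' a' x
  have ψ_cont : Continuous ψ := continuous_upperEnvelope.sub continuous_upperEnvelope
  let A := (fun σ ↦ (conjugate s' t' - conjugate s t) (a σ).linear) '' (𝒯 : Set (Finset ι))
  have A_finite : A.Finite := 𝒯.finite_toSet.image _
  have mapsTo : Q ⊆ ψ ⁻¹' A := by
    refine subset_of_ae_mem (μ := μ) (convex_convexHull ℝ _) hint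
      (A_finite.isClosed.preimage ψ_cont) ?_
    filter_upwards [h.ae_existsUnique μ, ae_upperEnvelope_sub_eq h h' hrange hvol]
      with x hx hψ hxs
    obtain ⟨σ, ⟨hσ, hxσ⟩, hunique⟩ := hx hxs
    refine ⟨σ, hσ, ?_⟩
    exact (hψ hxs).trans (gradientComp_eq hσ hxσ fun ρ hρ hxρ ↦ hunique ρ ⟨hρ, hxρ⟩) |>.symm
  have constant : (ψ '' Q).Subsingleton :=
    A_finite.countable.isTotallyDisconnected _ (image_subset_iff.2 mapsTo)
      ((convex_convexHull ℝ _).isPreconnected.image _ ψ_cont.continuousOn)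
  obtain ⟨x₀, hx₀⟩ := hint.mono interior_subset
  refine ⟨ψ x₀, fun x hx ↦ ?_⟩
  rw [← constant (mem_image_of_mem ψ hx) (mem_image_of_mem ψ hx₀), add_sub_cancel]

theorem conjugate_eq_add_const (hint : (interior (convexHull ℝ (range s))).Nonempty)
    (hvol : slopeVolume μ s 𝒯 a = slopeVolume μ s' 𝒯' a') :
    ∃ c, ∀ y, conjugate s t y = conjugate s' t' y + c := by
  obtain ⟨c, hc⟩ := exists_upperEnvelope_eq_add_const h h' hrange hint hvol
  refine ⟨-c, fun y ↦ le_antisymm ?_ ?_⟩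
  · exact h.conjugate_le μ h' hrange hint (fun x hx ↦ by rw [hc x hx, add_neg_cancel_right]) y
  · have := h'.conjugate_le μ h hrange.symm (hrange ▸ hint) (c := c)
      (fun x hx ↦ (hc x (hrange ▸ hx)).le) y
    linarith

end Uniqueness

end SlopeDistribution

section LatticeSimplices

open scoped Matrix

/-- The volume of the standard simplex of dimension `k`. -/
def stdSimplexVolume (k : ℕ) : ℝ :=
  volume.real (convexHull ℝ (range (Fin.cons 0 fun l ↦ Pi.single l 1 : Fin (k + 1) → Fin k → ℝ)))

variable {k : ℕ}

theorem measureReal_convexHull_range (v : Fin (k + 1) → Fin k → ℝ) :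
    volume.real (convexHull ℝ (range v)) =
      |(Matrix.of fun l : Fin k ↦ v l.succ - v 0).det| * stdSimplexVolume k := by
  let f := Matrix.toLin' (Matrix.of fun l : Fin k ↦ v l.succ - v 0).transpose
  have f_single (l : Fin k) : f (Pi.single l 1) = v l.succ - v 0 := by
    ext j
    simp [f]
  have range_eq : range v = (fun x ↦ v 0 + x) ''
      (f '' range (Fin.cons 0 fun l ↦ Pi.single l 1 : Fin (k + 1) → Fin k → ℝ)) := by
    simp only [← range_comp]
    congr 1
    ext l j
    refine Fin.cases ?_ (fun l ↦ ?_) l <;> simp [f_single]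
  have hull_eq : convexHull ℝ (range v) = (fun x ↦ v 0 + x) '' (f '' convexHull ℝ
      (range (Fin.cons 0 fun l ↦ Pi.single l 1 : Fin (k + 1) → Fin k → ℝ))) := by
    rw [f.image_convexHull, range_eq]
    exact (AffineMap.image_convexHull
      (AffineEquiv.constVAdd ℝ (Fin k → ℝ) (v 0)).toAffineMap _).symm
  rw [hull_eq, measureReal_def, image_add_left, measure_preimage_add,
    Measure.addHaar_image_linearMap, ENNReal.toReal_mul, ENNReal.toReal_ofReal (abs_nonneg _),
    LinearMap.det_toLin', Matrix.det_transpose]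
  rfl

theorem stdSimplexVolume_pos (k : ℕ) : 0 < stdSimplexVolume k := by
  refine ENNReal.toReal_pos (Measure.measure_pos_of_nonempty_interior _ ?_).ne'
    ((finite_range _).isCompact_convexHull (𝕜 := ℝ)).measure_lt_top.ne
  rw [interior_convexHull_nonempty_iff_affineSpan_eq_top, Fin.range_cons,
    ← AffineSubspace.coe_eq_univ_iff, affineSpan_insert_zero, ← Submodule.top_coe (R := ℝ),
    SetLike.coe_set_eq]
  simp_rw [← Pi.basisFun_apply]
  exact (Pi.basisFun ℝ (Fin k)).span_eq

theorem linearMap_apply_eq_sum_mul (g : (Fin k → ℝ) →ₗ[ℝ] ℝ) (x : Fin k → ℝ) :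
    g x = ∑ l, x l * g (Pi.single l 1) := by
  conv_lhs => rw [← Finset.univ_sum_single x, map_sum]
  refine Finset.sum_congr rfl fun l _ ↦ ?_
  rw [← smul_eq_mul, ← map_smul, ← Pi.single_smul, smul_eq_mul, mul_one]

variable (i : Fin (k + 1))

/-- The normal vector of the graph, over the hyperplane of the coordinates other than `i`, of an
affine function with linear part `g`. -/
def graphNormal (g : (Fin k → ℝ) →ₗ[ℝ] ℝ) : Fin (k + 1) → ℝ :=
  i.insertNth 1 fun l ↦ -g (Pi.single l 1)

@[simp] theorem graphNormal_apply_self (g : (Fin k → ℝ) →ₗ[ℝ] ℝ) : graphNormal i g i = 1 := by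
  simp [graphNormal]

theorem graphNormal_dotProduct (g : (Fin k → ℝ) →ₗ[ℝ] ℝ) (r : Fin (k + 1) → ℝ) :
    graphNormal i g ⬝ᵥ r = r i - g (i.removeNth r) := by
  rw [linearMap_apply_eq_sum_mul g]
  simp [dotProduct, i.sum_univ_succAbove, graphNormal, Fin.removeNth, sub_eq_add_neg, mul_comm]

theorem graphNormal_injective : Function.Injective (graphNormal i) := by
  intro g g' h
  refine LinearMap.ext fun x ↦ ?_
  have := congrArg (· ⬝ᵥ i.insertNth 0 x) h
  simpa [graphNormal_dotProduct] using this

/-- Adding multiples of the other columns, the `i`-th column becomes `(⟪normal, r⟫, 0, …, 0)`. -/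
theorem det_cons_eq_graphNormal_dotProduct_mul_det {g : (Fin k → ℝ) →ₗ[ℝ] ℝ}
    {w : Fin k → Fin (k + 1) → ℝ} (hw : ∀ l, graphNormal i g ⬝ᵥ w l = 0) (r : Fin (k + 1) → ℝ) :
    |(Matrix.of (Fin.cons r w : Fin (k + 1) → Fin (k + 1) → ℝ)).det| =
      |graphNormal i g ⬝ᵥ r| * |(Matrix.of fun l ↦ i.removeNth (w l)).det| := by
  set M := Matrix.of (Fin.cons r w : Fin (k + 1) → Fin (k + 1) → ℝ)
  have mulVec_zero : (M *ᵥ graphNormal i g) 0 = graphNormal i g ⬝ᵥ r := dotProduct_comm _ _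
  have mulVec_succ (l : Fin k) : (M *ᵥ graphNormal i g) l.succ = 0 :=
    (dotProduct_comm _ _).trans (hw l)
  have det_eq : (M.updateCol i (M *ᵥ graphNormal i g)).det = M.det := by
    have := M.det_updateCol_sum i (graphNormal i g)
    rw [graphNormal_apply_self, one_smul] at this
    rw [← this]
    congr 2
    ext l
    simp [Matrix.mulVec, dotProduct, mul_comm]
  rw [← det_eq, Matrix.det_succ_column _ i, Fin.sum_univ_succ,
    Finset.sum_eq_zero fun l _ ↦ by rw [Matrix.updateCol_self, mulVec_succ, mul_zero, zero_mul],
    add_zero, Matrix.updateCol_self, mulVec_zero, abs_mul, abs_mul, abs_pow, abs_neg, abs_one,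
    one_pow, one_mul]
  congr 3
  ext l j
  simp [M, Fin.removeNth]

end LatticeSimplices

section Integrality

open scoped Matrix

variable {k : ℕ}

/-- The lattice of the points which `W` maps to integer points. -/
def integerPreimage {ι : Type*} [Fintype ι] (W : Matrix ι ι ℝ) : AddSubgroup (ι → ℝ) :=
  (AddSubgroup.pi univ fun _ ↦ (Int.castAddHom ℝ).range).comap W.mulVecLin.toAddMonoidHom

theorem mem_integerPreimage {ι : Type*} [Fintype ι] {W : Matrix ι ι ℝ} {x : ι → ℝ} :
    x ∈ integerPreimage W ↔ ∀ j, ∃ z : ℤ, (z : ℝ) = (W *ᵥ x) j := by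
  simp only [integerPreimage, AddSubgroup.mem_comap, AddSubgroup.mem_pi, mem_univ, true_imp_iff,
    AddMonoidHom.mem_range, Int.coe_castAddHom]
  rfl

theorem exists_int_eq_abs_det_mul_abs_det {ι : Type*} [Fintype ι] [DecidableEq ι]
    {W : Matrix ι ι ℝ} {v : ι → ι → ℝ} (hv : ∀ l, v l ∈ integerPreimage W) :
    ∃ z : ℤ, |W.det| * |(Matrix.of v).det| = z := by
  simp only [mem_integerPreimage] at hv
  choose Z hZ using hv
  refine ⟨|(Matrix.of Z).det|, ?_⟩
  have map_eq : (Matrix.of Z).map Int.cast = Matrix.of v * W.transpose := by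
    ext l j
    simp [hZ, Matrix.mul_apply, Matrix.mulVec, dotProduct, mul_comm]
  rw [Int.cast_abs, Int.cast_det, map_eq, Matrix.det_mul, Matrix.det_transpose, abs_mul, mul_comm]

theorem mem_span_row_of_forall_dotProduct {ι : Type*} [Fintype ι] [DecidableEq ι]
    {W : Matrix ι ι ℝ} (hW : W.det ≠ 0) {u : ι → ℝ}
    (hu : ∀ r ∈ integerPreimage W, ∃ z : ℤ, u ⬝ᵥ r = z) :
    u ∈ Submodule.span ℤ (range W.row) := by
  have mem (j : ι) : W⁻¹.col j ∈ integerPreimage W := by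
    refine mem_integerPreimage.2 fun l ↦ ⟨(1 : Matrix ι ι ℤ) l j, ?_⟩
    have : W *ᵥ W⁻¹.col j = (1 : Matrix ι ι ℝ).col j := by
      rw [← W.mul_nonsing_inv hW.isUnit]
      rfl
    simp [this, Matrix.one_apply]
  choose N hN using fun j ↦ hu _ (mem j)
  have u_eq : u = ∑ j, N j • W.row j :=
    calc u = (u ᵥ* W⁻¹) ᵥ* W := by
          rw [Matrix.vecMul_vecMul, W.nonsing_inv_mul hW.isUnit, Matrix.vecMul_one]
      _ = ∑ j, N j • W.row j := by
          ext l
          simp [Matrix.vecMul, dotProduct, ← hN]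
  rw [u_eq]
  exact Submodule.sum_smul_mem _ _ fun j _ ↦ Submodule.subset_span (mem_range_self j)

variable {W : Matrix (Fin (k + 1)) (Fin (k + 1)) ℝ} (i : Fin (k + 1))

theorem smul_graphNormal_mem_span_row_of_simplex (hW : W.det ≠ 0)
    {p : Fin (k + 1) → Fin (k + 1) → ℝ} (hp : ∀ l, p l ∈ integerPreimage W)
    {g : (Fin k → ℝ) →ₗ[ℝ] ℝ} (hg : ∀ l : Fin k, graphNormal i g ⬝ᵥ (p l.succ - p 0) = 0) :
    (|W.det| / stdSimplexVolume k * volume.real (convexHull ℝ (range fun l ↦ i.removeNth (p l)))) •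
      graphNormal i g ∈ Submodule.span ℤ (range W.row) := by
  refine mem_span_row_of_forall_dotProduct hW fun r hr ↦ ?_
  obtain ⟨z, hz⟩ := exists_int_eq_abs_det_mul_abs_det (W := W)
    (v := Fin.cons r fun l ↦ p l.succ - p 0) <|
    Fin.cases hr fun l ↦ sub_mem (hp l.succ) (hp 0)
  rw [det_cons_eq_graphNormal_dotProduct_mul_det i hg] at hz
  have volume_eq := measureReal_convexHull_range fun l ↦ i.removeNth (p l)
  set c := |W.det| / stdSimplexVolume k *
    volume.real (convexHull ℝ (range fun l ↦ i.removeNth (p l))) with c_def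
  have c_eq : c = |W.det| * |(Matrix.of fun l ↦ i.removeNth (p l.succ - p 0)).det| := by
    rw [c_def, volume_eq, mul_comm |Matrix.det _|, ← mul_assoc,
      div_mul_cancel₀ _ (stdSimplexVolume_pos k).ne']
    rfl
  have abs_eq : |c * (graphNormal i g ⬝ᵥ r)| = |(z : ℝ)| := by
    rw [← hz, c_eq]
    simp only [abs_mul, abs_abs]
    ring
  rw [smul_dotProduct, smul_eq_mul]
  rcases abs_eq_abs.1 abs_eq with pos | neg
  · exact ⟨z, pos⟩
  · exact ⟨-z, by rw [neg, Int.cast_neg]⟩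

variable {ι : Type*} {p : ι → Fin (k + 1) → ℝ} {𝒯 : Finset (Finset ι)}
  {a : Finset ι → (Fin k → ℝ) →ᵃ[ℝ] ℝ}

theorem IsRegularTriangulation.smul_graphNormal_mem_span_row
    (h : IsRegularTriangulation (fun j ↦ i.removeNth (p j)) (fun j ↦ p j i) 𝒯 a)
    (hW : W.det ≠ 0) (hp : ∀ j, p j ∈ integerPreimage W) {σ : Finset ι} (hσ : σ ∈ 𝒯) :
    (|W.det| / stdSimplexVolume k *
        volume.real (convexHull ℝ ((fun j ↦ i.removeNth (p j)) '' σ))) •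
      graphNormal i (a σ).linear ∈ Submodule.span ℤ (range W.row) := by
  have card_eq : Fintype.card σ = k + 1 := by
    simpa using (h.isSimplex σ hσ).affineBasis.card_eq_finrank_add_one
  let e : Fin (k + 1) ≃ σ := (Fintype.equivFinOfCardEq card_eq).symm
  convert! smul_graphNormal_mem_span_row_of_simplex i hW (p := fun l ↦ p (e l))
    (fun l ↦ hp _) (g := (a σ).linear) fun l ↦ ?_ using 6
  · rw [image_eq_range]
    exact (e.surjective.range_comp fun j : σ ↦ i.removeNth (p j)).symm
  · have apply_eq (l : Fin (k + 1)) : a σ (i.removeNth (p (e l))) = p (e l) i :=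
      h.apply_eq σ hσ _ (e l).2
    have linear_eq := (a σ).linearMap_vsub (i.removeNth (p (e l.succ))) (i.removeNth (p (e 0)))
    rw [vsub_eq_sub, vsub_eq_sub, apply_eq, apply_eq] at linear_eq
    rw [graphNormal_dotProduct, Pi.sub_apply, ← linear_eq]
    exact sub_self _

theorem IsRegularTriangulation.slopeVolume_smul_graphNormal_mem_span_row
    (h : IsRegularTriangulation (fun j ↦ i.removeNth (p j)) (fun j ↦ p j i) 𝒯 a)
    (hW : W.det ≠ 0) (hp : ∀ j, p j ∈ integerPreimage W) (g : (Fin k → ℝ) →ₗ[ℝ] ℝ) :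
    (|W.det| / stdSimplexVolume k * slopeVolume volume (fun j ↦ i.removeNth (p j)) 𝒯 a g) •
      graphNormal i g ∈ Submodule.span ℤ (range W.row) := by
  classical
  rw [slopeVolume, Finset.mul_sum, Finset.sum_smul]
  refine sum_mem fun σ hσ ↦ ?_
  obtain ⟨hσ𝒯, rfl⟩ := Finset.mem_filter.1 hσ
  exact h.smul_graphNormal_mem_span_row i hW hp hσ𝒯

end Integrality

section Charts

open scoped Matrix

variable {k : ℕ} (i : Fin (k + 1))

/-- The projection of the points of `Y` to the hyperplane of the coordinates other than `i`. -/
def basePoint (Y : Finset (Fin (k + 1) → ℝ)) (q : Y) : Fin k → ℝ := i.removeNth q.1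

/-- The `i`-th coordinates of the points of `Y`, as heights over the other coordinates. -/
def height (Y : Finset (Fin (k + 1) → ℝ)) (q : Y) : ℝ := q.1 i

open Classical in
/-- The set `X ⊆ [-1, 1] ^ (k + 1)` together with a copy of the vertices of `[-3, 3] ^ k` in the
hyperplane `x i = 4 k + 1`. The new points are so far apart and so high that the lower envelope
over the coordinates other than `i` is defined on a cube which does not depend on `X`, has slopes
bounded independently of `X`, and still has the supporting hyperplanes of `X` of slope at most
`1`. -/
def capped (X : Finset (Fin (k + 1) → ℝ)) : Finset (Fin (k + 1) → ℝ) :=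
  X ∪ (Fintype.piFinset fun _ : Fin k ↦ {-3, 3}).image (i.insertNth (α := fun _ ↦ ℝ) (4 * k + 1))

variable {i} {X X' : Finset (Fin (k + 1) → ℝ)}

theorem mem_capped {q : Fin (k + 1) → ℝ} :
    q ∈ capped i X ↔ q ∈ X ∨ (∀ l, |i.removeNth q l| = 3) ∧ q i = 4 * k + 1 := by
  have abs_eq_three (x : ℝ) : |x| = 3 ↔ x = -3 ∨ x = 3 := by
    rw [abs_eq zero_le_three, or_comm]
  simp only [capped, Finset.mem_union, Finset.mem_image, Fintype.mem_piFinset, Finset.mem_insert,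
    Finset.mem_singleton, ← abs_eq_three]
  refine or_congr_right ⟨?_, fun ⟨hbase, hheight⟩ ↦ ⟨i.removeNth q, hbase, ?_⟩⟩
  · rintro ⟨x, hx, rfl⟩
    simpa using hx
  · rw [← hheight, Fin.insertNth_self_removeNth]

theorem abs_apply_le_one (hX : ∀ q ∈ X, ‖q‖ ≤ 1) {q : Fin (k + 1) → ℝ} (hq : q ∈ X)
    (l : Fin (k + 1)) : |q l| ≤ 1 :=
  (norm_le_pi_norm q l).trans (hX q hq)

theorem convexHull_range_basePoint_capped (hX : ∀ q ∈ X, ‖q‖ ≤ 1) :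
    convexHull ℝ (range (basePoint i (capped i X))) = Metric.closedBall 0 3 := by
  refine subset_antisymm (convexHull_min ?_ (convex_closedBall 0 3)) ?_
  · rintro _ ⟨⟨q, hq⟩, rfl⟩
    rw [mem_closedBall_zero_iff, pi_norm_le_iff_of_nonneg zero_le_three]
    intro l
    rcases mem_capped.1 hq with hq | ⟨hbase, -⟩
    · exact (abs_apply_le_one hX hq _).trans (by norm_num)
    · exact (hbase l).le
  · rw [closedBall_pi 0 zero_le_three]
    simp only [Pi.zero_apply, Real.closedBall_eq_Icc, zero_sub, zero_add]
    rw [← segment_eq_Icc (by norm_num), ← convexHull_pair, ← convexHull_pi]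
    refine convexHull_mono fun x hx ↦ ?_
    refine ⟨⟨i.insertNth (4 * k + 1) x, mem_capped.2 (.inr ⟨fun l ↦ ?_, by simp⟩)⟩,
      Fin.removeNth_insertNth (α := fun _ ↦ ℝ) i _ x⟩
    rcases hx l (mem_univ l) with h | h <;> simp_all

theorem abs_apply_le_mul_sum (g : (Fin k → ℝ) →ₗ[ℝ] ℝ) {x : Fin k → ℝ} {r : ℝ}
    (hx : ∀ l, |x l| ≤ r) : |g x| ≤ r * ∑ l, |g (Pi.single l 1)| := by
  rw [linearMap_apply_eq_sum_mul, Finset.mul_sum]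
  refine (Finset.abs_sum_le_sum_abs _ _).trans (Finset.sum_le_sum fun l _ ↦ ?_)
  rw [abs_mul]
  exact mul_le_mul_of_nonneg_right (hx l) (abs_nonneg _)

theorem exists_abs_eq_apply_eq_mul_sum (g : (Fin k → ℝ) →ₗ[ℝ] ℝ) {r : ℝ} (hr : 0 ≤ r) :
    ∃ x : Fin k → ℝ, (∀ l, |x l| = r) ∧ g x = r * ∑ l, |g (Pi.single l 1)| := by
  refine ⟨fun l ↦ if 0 ≤ g (Pi.single l 1) then r else -r, fun l ↦ ?_, ?_⟩
  · dsimp only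
    split_ifs <;> simp [abs_of_nonneg hr]
  · rw [linearMap_apply_eq_sum_mul, Finset.mul_sum]
    refine Finset.sum_congr rfl fun l _ ↦ ?_
    split_ifs with h
    · rw [abs_of_nonneg h]
    · rw [abs_of_neg (not_le.1 h), neg_mul_comm]

variable {𝒯 : Finset (Finset (capped i X))} {a : Finset (capped i X) → (Fin k → ℝ) →ᵃ[ℝ] ℝ}

theorem sum_abs_linear_le (h : IsRegularTriangulation (basePoint i _) (height i _) 𝒯 a)
    (hX : ∀ q ∈ X, ‖q‖ ≤ 1) {σ : Finset (capped i X)} (hσ : σ ∈ 𝒯) :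
    ∑ l, |(a σ).linear (Pi.single l 1)| ≤ 2 * k + 1 := by
  have apply_eq (x : Fin k → ℝ) : a σ x = (a σ).linear x + a σ 0 := congrFun (a σ).decomp x
  by_cases hσX : ∃ q ∈ σ, q.1 ∈ X
  · obtain ⟨q, hqσ, hqX⟩ := hσX
    obtain ⟨x, hx, hgx⟩ := exists_abs_eq_apply_eq_mul_sum (a σ).linear zero_le_three
    have at_corner := h.apply_le σ hσ
      ⟨i.insertNth (4 * k + 1) x, mem_capped.2 (.inr ⟨by simpa using hx, by simp⟩)⟩
    have at_point := h.apply_eq σ hσ q hqσ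
    rw [apply_eq] at at_corner at_point
    simp only [basePoint, height, Fin.removeNth_insertNth, Fin.insertNth_apply_same, hgx]
      at at_corner at_point
    have slope_le := abs_le.1 (abs_apply_le_mul_sum (a σ).linear (x := i.removeNth q.1)
      fun l ↦ abs_apply_le_one hX hqX _)
    linarith [(abs_le.1 (abs_apply_le_one hX hqX i)).1]
  · push Not at hσX
    have const : a σ = AffineMap.const ℝ _ (4 * k + 1 : ℝ) := by
      refine AffineMap.ext_on (h.isSimplex σ hσ).affineSpan_eq_top ?_
      rintro _ ⟨q, hq, rfl⟩
      rw [h.apply_eq σ hσ q hq]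
      exact ((mem_capped.1 q.2).resolve_left (hσX q hq)).2
    simp only [const, AffineMap.const_linear, LinearMap.zero_apply, abs_zero,
      Finset.sum_const_zero]
    positivity

theorem norm_graphNormal_linear_le (h : IsRegularTriangulation (basePoint i _) (height i _) 𝒯 a)
    (hX : ∀ q ∈ X, ‖q‖ ≤ 1) {σ : Finset (capped i X)} (hσ : σ ∈ 𝒯) :
    ‖graphNormal i (a σ).linear‖ ≤ 2 * k + 1 := by
  refine (pi_norm_le_iff_of_nonneg (by positivity)).2 (i.forall_iff_succAbove.2 ⟨?_, fun l ↦ ?_⟩)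
  · simp
  · rw [graphNormal, Fin.insertNth_apply_succAbove, norm_neg]
    exact (Finset.single_le_sum (f := fun l ↦ |(a σ).linear (Pi.single l 1)|)
      (fun _ _ ↦ abs_nonneg _) (Finset.mem_univ l)).trans (sum_abs_linear_le h hX hσ)

end Charts

section ChartCode

open scoped Matrix Pointwise

variable {k : ℕ} (i : Fin (k + 1))

/-- The cells of a chosen regular triangulation of the capped point set. -/
def cappedCells (X : Finset (Fin (k + 1) → ℝ)) : Finset (Finset (capped i X)) :=
  (exists_isRegularTriangulation (basePoint i (capped i X)) (height i (capped i X))).choose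

/-- The affine pieces, on the cells `cappedCells i X`, of the lower envelope of the capped set. -/
def cappedPiece (X : Finset (Fin (k + 1) → ℝ)) : Finset (capped i X) → (Fin k → ℝ) →ᵃ[ℝ] ℝ :=
  (exists_isRegularTriangulation (basePoint i _) (height i _)).choose_spec.choose

theorem isRegularTriangulation_capped (X : Finset (Fin (k + 1) → ℝ)) :
    IsRegularTriangulation (basePoint i _) (height i _) (cappedCells i X) (cappedPiece i X) :=
  (exists_isRegularTriangulation (basePoint i _) (height i _)).choose_spec.choose_spec

/-- The distribution of the gradient of the lower envelope of the capped set. -/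
def cappedSlopeVolume (X : Finset (Fin (k + 1) → ℝ)) : ((Fin k → ℝ) →ₗ[ℝ] ℝ) → ℝ :=
  slopeVolume volume (basePoint i _) (cappedCells i X) (cappedPiece i X)

open Classical in
/-- The slopes of the lower envelope of the capped set. -/
def cappedSlopes (X : Finset (Fin (k + 1) → ℝ)) : Finset ((Fin k → ℝ) →ₗ[ℝ] ℝ) :=
  (cappedCells i X).image fun σ ↦ (cappedPiece i X σ).linear

open Classical in
/-- The normals of the facets of the lower envelope of the capped set, each scaled by `c` times the
volume of the projection of the facet. -/
def facetNormals (c : ℝ) (X : Finset (Fin (k + 1) → ℝ)) : Finset (Fin (k + 1) → ℝ) :=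
  (cappedSlopes i X).image fun g ↦ (c * cappedSlopeVolume i X g) • graphNormal i g

variable {i} {X X' : Finset (Fin (k + 1) → ℝ)} {c : ℝ}

theorem mem_cappedSlopes_of_ne_zero {g : (Fin k → ℝ) →ₗ[ℝ] ℝ} (hg : cappedSlopeVolume i X g ≠ 0) :
    g ∈ cappedSlopes i X := by
  classical
  obtain ⟨σ, hσ, -⟩ := Finset.exists_ne_zero_of_sum_ne_zero hg
  obtain ⟨hσX, rfl⟩ := Finset.mem_filter.1 hσ
  exact Finset.mem_image_of_mem _ hσX

theorem cappedSlopeVolume_eq_of_mem_facetNormals (hc : c ≠ 0) {g : (Fin k → ℝ) →ₗ[ℝ] ℝ}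
    (hg : cappedSlopeVolume i X g ≠ 0)
    (hmem : (c * cappedSlopeVolume i X g) • graphNormal i g ∈ facetNormals i c X') :
    cappedSlopeVolume i X' g = cappedSlopeVolume i X g := by
  classical
  obtain ⟨g', -, hg'⟩ := Finset.mem_image.1 hmem
  have volume_eq : c * cappedSlopeVolume i X' g' = c * cappedSlopeVolume i X g := by
    simpa using congrFun hg' i
  rw [volume_eq] at hg'
  obtain rfl := graphNormal_injective i (smul_right_injective _ (mul_ne_zero hc hg) hg')
  exact mul_left_cancel₀ hc volume_eq

theorem cappedSlopeVolume_eq (hc : c ≠ 0) (h : facetNormals i c X = facetNormals i c X') :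
    cappedSlopeVolume i X = cappedSlopeVolume i X' := by
  classical
  have mem {Y : Finset (Fin (k + 1) → ℝ)} {g} (hg : cappedSlopeVolume i Y g ≠ 0) :
      (c * cappedSlopeVolume i Y g) • graphNormal i g ∈ facetNormals i c Y :=
    Finset.mem_image_of_mem _ (mem_cappedSlopes_of_ne_zero hg)
  ext g
  by_cases hg : cappedSlopeVolume i X g = 0
  · by_contra hne
    have hg' : cappedSlopeVolume i X' g ≠ 0 := fun hg' ↦ hne (hg.trans hg'.symm)
    exact hne (cappedSlopeVolume_eq_of_mem_facetNormals hc hg' (h ▸ mem hg'))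
  · exact (cappedSlopeVolume_eq_of_mem_facetNormals hc hg (h ▸ mem hg)).symm

theorem facetNormals_subset_span_row {M : Matrix (Fin (k + 1)) (Fin (k + 1)) ℝ} (hM : M.det ≠ 0)
    {t : ℝ} (ht : 0 < t) (hX : ∀ q ∈ capped i X, q ∈ integerPreimage (t • M)) :
    (facetNormals i (t ^ k * |M.det| / stdSimplexVolume k) X : Set (Fin (k + 1) → ℝ)) ⊆
      Submodule.span ℤ (range M.row) := by
  classical
  intro u hu
  obtain ⟨g, -, rfl⟩ := Finset.mem_image.1 hu
  have det_eq : (t • M).det = t * (t ^ k * M.det) := by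
    rw [Matrix.det_smul, Fintype.card_fin]
    ring
  have mem := (isRegularTriangulation_capped i X).slopeVolume_smul_graphNormal_mem_span_row i
    (p := Subtype.val) (W := t • M) (by rw [det_eq]; positivity) (fun q ↦ hX q q.2) g
  rw [show range (t • M).row = t • range M.row from range_smul t M.row,
    Submodule.span_smul] at mem
  obtain ⟨v, hv, v_eq⟩ := mem
  convert hv
  refine smul_right_injective _ ht.ne' (Eq.trans ?_ v_eq.symm)
  beta_reduce
  rw [smul_smul, det_eq, abs_mul, abs_mul, abs_of_pos ht, abs_of_pos (pow_pos ht k),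
    cappedSlopeVolume]
  unfold basePoint
  congr 1
  ring

theorem sum_norm_facetNormals_le (hc : 0 ≤ c) (hX : ∀ q ∈ X, ‖q‖ ≤ 1) :
    ∑ u ∈ facetNormals i c X, ‖u‖ ≤ c * ((2 * k + 1) * 6 ^ k) := by
  classical
  have h := isRegularTriangulation_capped i X
  have cube_volume : volume.real (convexHull ℝ (range (basePoint i (capped i X)))) = 6 ^ k := by
    rw [convexHull_range_basePoint_capped hX, measureReal_def, Real.volume_pi_closedBall]
    · norm_num
    · exact zero_le_three
  have slopeVolume_nonneg (g) : 0 ≤ cappedSlopeVolume i X g :=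
    Finset.sum_nonneg fun σ _ ↦ measureReal_nonneg
  calc ∑ u ∈ facetNormals i c X, ‖u‖
      ≤ ∑ g ∈ cappedSlopes i X, ‖(c * cappedSlopeVolume i X g) • graphNormal i g‖ :=
        Finset.sum_image_le_of_nonneg fun u _ ↦ norm_nonneg u
    _ = ∑ g ∈ cappedSlopes i X, cappedSlopeVolume i X g * (c * ‖graphNormal i g‖) := by
        refine Finset.sum_congr rfl fun g _ ↦ ?_
        rw [norm_smul, Real.norm_of_nonneg (mul_nonneg hc (slopeVolume_nonneg g))]
        ring
    _ = ∑ σ ∈ cappedCells i X, volume.real (convexHull ℝ (basePoint i (capped i X) '' σ)) *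
          (c * ‖graphNormal i (cappedPiece i X σ).linear‖) :=
        (sum_measureReal_mul_eq_sum_slopeVolume_mul volume (F := fun g ↦ c * ‖graphNormal i g‖)
          fun σ hσ ↦ Finset.mem_image_of_mem (fun σ ↦ (cappedPiece i X σ).linear) hσ).symm
    _ ≤ ∑ σ ∈ cappedCells i X, volume.real (convexHull ℝ (basePoint i (capped i X) '' σ)) *
          (c * (2 * k + 1)) := by
        gcongr with σ hσ
        exact norm_graphNormal_linear_le h hX hσ
    _ = c * ((2 * k + 1) * 6 ^ k) := by
        rw [← Finset.sum_mul, h.sum_measureReal_convexHull, cube_volume]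
        ring

end ChartCode

section Recovery

open scoped Matrix

variable {k : ℕ} {i : Fin (k + 1)} {X X' : Finset (Fin (k + 1) → ℝ)} {c : ℝ}

/-- At the slope `(3, …, 3)` the highest point of `[-3, 3] ^ k` dominates. -/
theorem conjugate_capped_three_smul_sum_proj (hk : k ≠ 0) (hX : ∀ q ∈ X, ‖q‖ ≤ 1) :
    conjugate (basePoint i (capped i X)) (height i (capped i X))
      ((3 : ℝ) • ∑ l, LinearMap.proj l) = 5 * k - 1 := by
  have one_le : (1 : ℝ) ≤ k := by exact_mod_cast Nat.one_le_iff_ne_zero.2 hk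
  let corner : capped i X := ⟨i.insertNth (4 * k + 1) fun _ ↦ 3, mem_capped.2 (.inr (by simp))⟩
  have : Nonempty (capped i X) := ⟨corner⟩
  have sum_le (q : Fin (k + 1) → ℝ) {r : ℝ} (hq : ∀ l, |i.removeNth q l| ≤ r) :
      ∑ l, i.removeNth q l ≤ k * r := by
    simpa using Finset.sum_le_card_nsmul Finset.univ _ r fun l _ ↦ (abs_le.1 (hq l)).2
  refine le_antisymm (ciSup_le fun ⟨q, hq⟩ ↦ ?_) ?_
  · simp only [basePoint, height, LinearMap.smul_apply, LinearMap.sum_apply, LinearMap.proj_apply,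
      smul_eq_mul]
    rcases mem_capped.1 hq with hqX | ⟨hbase, hheight⟩
    · linarith [sum_le q fun l ↦ abs_apply_le_one hX hqX _,
        (abs_le.1 (abs_apply_le_one hX hqX i)).1]
    · linarith [sum_le q fun l ↦ (hbase l).le]
  · convert! sub_le_conjugate (basePoint i (capped i X)) (height i (capped i X)) _ corner using 1
    simp [basePoint, height, corner]
    ring

theorem conjugate_capped_eq (hk : k ≠ 0) (hX : ∀ q ∈ X, ‖q‖ ≤ 1) (hX' : ∀ q ∈ X', ‖q‖ ≤ 1)
    (hc : c ≠ 0) (h : facetNormals i c X = facetNormals i c X') :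
    conjugate (basePoint i (capped i X)) (height i (capped i X)) =
      conjugate (basePoint i (capped i X')) (height i (capped i X')) := by
  have range_eq := convexHull_range_basePoint_capped (i := i) hX
  obtain ⟨b, hb⟩ := conjugate_eq_add_const (isRegularTriangulation_capped i X)
    (isRegularTriangulation_capped i X')
    (range_eq.trans (convexHull_range_basePoint_capped hX').symm)
    (by
      rw [range_eq, interior_closedBall _ three_ne_zero]
      exact Metric.nonempty_ball.2 zero_lt_three)
    (cappedSlopeVolume_eq hc h)
  have b_eq_zero : b = 0 := by
    have := hb ((3 : ℝ) • ∑ l, LinearMap.proj l)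
    rw [conjugate_capped_three_smul_sum_proj hk hX,
      conjugate_capped_three_smul_sum_proj hk hX'] at this
    linarith
  ext y
  rw [hb, b_eq_zero, add_zero]

theorem exists_graphNormal_dotProduct_le (hX' : ∀ q ∈ X', ‖q‖ ≤ 1) (hX'ne : X'.Nonempty)
    (hconj : conjugate (basePoint i (capped i X)) (height i (capped i X)) =
      conjugate (basePoint i (capped i X')) (height i (capped i X')))
    {y : (Fin k → ℝ) →ₗ[ℝ] ℝ} (hy : ∀ l, |y (Pi.single l 1)| ≤ 1) {q : Fin (k + 1) → ℝ}
    (hq : q ∈ X) : ∃ q' ∈ X', graphNormal i y ⬝ᵥ q' ≤ graphNormal i y ⬝ᵥ q := by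
  have le_conjugate := sub_le_conjugate (basePoint i (capped i X)) (height i (capped i X)) y
    ⟨q, mem_capped.2 (.inl hq)⟩
  obtain ⟨q', hq'⟩ := hX'ne
  have : Nonempty (capped i X') := ⟨⟨q', mem_capped.2 (.inl hq')⟩⟩
  obtain ⟨⟨p, hp⟩, hmax⟩ := exists_eq_ciSup_of_finite
    (f := fun p ↦ y (basePoint i (capped i X') p) - height i (capped i X') p)
  rw [hconj, conjugate, ← hmax] at le_conjugate
  simp only [basePoint, height] at le_conjugate
  simp only [graphNormal_dotProduct]
  rcases mem_capped.1 hp with hpX | ⟨hbase, hheight⟩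
  · exact ⟨p, hpX, by linarith⟩
  · have sum_le : ∑ l, |y (Pi.single l 1)| ≤ k := by
      simpa using Finset.sum_le_card_nsmul Finset.univ _ 1 fun l _ ↦ hy l
    have corner_le := abs_le.1 (abs_apply_le_mul_sum y fun l ↦ (hbase l).le)
    have point_le := abs_le.1 <| abs_apply_le_mul_sum y (x := i.removeNth q')
      fun l ↦ abs_apply_le_one hX' hq' _
    refine ⟨q', hq', ?_⟩
    have := (abs_le.1 (abs_apply_le_one hX' hq' i)).2
    linarith

end Recovery

section HullRecovery

open scoped Matrix Pointwise

variable {k : ℕ} {X X' : Finset (Fin (k + 1) → ℝ)} {c : ℝ}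

theorem exists_eq_smul_graphNormal {N : Fin (k + 1) → ℝ} (hN : N ≠ 0) :
    ∃ i, ∃ y : (Fin k → ℝ) →ₗ[ℝ] ℝ,
      (∀ l, |y (Pi.single l 1)| ≤ 1) ∧ N i ≠ 0 ∧ N = N i • graphNormal i y := by
  obtain ⟨i, hi⟩ := Finite.exists_max fun i ↦ |N i|
  have hNi : N i ≠ 0 := by
    intro hzero
    refine hN (funext fun j ↦ abs_nonpos_iff.1 ?_)
    simpa [hzero] using hi j
  refine ⟨i, ∑ l, (-(N (i.succAbove l) / N i)) • LinearMap.proj l, fun l ↦ ?_, hNi, ?_⟩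
  · simpa [Pi.single_apply, abs_div] using div_le_one_of_le₀ (hi _) (abs_nonneg _)
  · refine funext (i.forall_iff_succAbove.2 ⟨by simp, fun l ↦ ?_⟩)
    simp [graphNormal, Pi.single_apply, mul_div_cancel₀ _ hNi]

theorem exists_dotProduct_le_of_facetNormals_eq (hk : k ≠ 0) (hX : ∀ q ∈ X, ‖q‖ ≤ 1)
    (hX' : ∀ q ∈ X', ‖q‖ ≤ 1) (hX'ne : X'.Nonempty) (hc : c ≠ 0)
    (h : ∀ i, facetNormals i c X = facetNormals i c X')
    (hneg : ∀ i, facetNormals i c (-X) = facetNormals i c (-X'))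
    {N : Fin (k + 1) → ℝ} (hN : N ≠ 0) {q : Fin (k + 1) → ℝ} (hq : q ∈ X) :
    ∃ q' ∈ X', N ⬝ᵥ q' ≤ N ⬝ᵥ q := by
  have norm_neg_le {Y : Finset (Fin (k + 1) → ℝ)} (hY : ∀ q ∈ Y, ‖q‖ ≤ 1) :
      ∀ q ∈ -Y, ‖q‖ ≤ 1 := fun q hq ↦ norm_neg q ▸ hY _ (Finset.mem_neg'.1 hq)
  obtain ⟨i, y, hy, hNi, hNy⟩ := exists_eq_smul_graphNormal hN
  rw [hNy]
  simp only [smul_dotProduct, smul_eq_mul]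
  rcases hNi.lt_or_gt with neg | pos
  · obtain ⟨q', hq', hle⟩ := exists_graphNormal_dotProduct_le (norm_neg_le hX') hX'ne.neg
      (conjugate_capped_eq hk (norm_neg_le hX) (norm_neg_le hX') hc (hneg i)) hy
      (Finset.neg_mem_neg hq)
    refine ⟨-q', Finset.mem_neg'.1 hq', mul_le_mul_of_nonpos_left ?_ neg.le⟩
    rw [dotProduct_neg] at hle ⊢
    linarith
  · obtain ⟨q', hq', hle⟩ := exists_graphNormal_dotProduct_le hX' hX'ne
      (conjugate_capped_eq hk hX hX' hc (h i)) hy hq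
    exact ⟨q', hq', mul_le_mul_of_nonneg_left hle pos.le⟩

theorem convexHull_subset_of_facetNormals_eq (hk : k ≠ 0) (hX : ∀ q ∈ X, ‖q‖ ≤ 1)
    (hX' : ∀ q ∈ X', ‖q‖ ≤ 1) (hX'ne : X'.Nonempty) (hc : c ≠ 0)
    (h : ∀ i, facetNormals i c X = facetNormals i c X')
    (hneg : ∀ i, facetNormals i c (-X) = facetNormals i c (-X')) :
    convexHull ℝ (X : Set (Fin (k + 1) → ℝ)) ⊆ convexHull ℝ X' := by
  refine convexHull_min (fun q hq ↦ ?_) (convex_convexHull ℝ _)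
  by_contra hqX'
  obtain ⟨f, u, hfq, hf⟩ := geometric_hahn_banach_point_closed (convex_convexHull ℝ _)
    (X'.finite_toSet.isCompact_convexHull (𝕜 := ℝ)).isClosed hqX'
  have apply_lt (q' : Fin (k + 1) → ℝ) (hq' : q' ∈ X') : f q < f q' :=
    hfq.trans (hf q' (subset_convexHull ℝ _ hq'))
  have dotProduct_eq (x : Fin (k + 1) → ℝ) : (fun j ↦ f (Pi.single j 1)) ⬝ᵥ x = f x :=
    (dotProduct_comm _ _).trans
      (linearMap_apply_eq_sum_mul (f : (Fin (k + 1) → ℝ) →ₗ[ℝ] ℝ) x).symm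
  have normal_ne_zero : (fun j ↦ f (Pi.single j 1)) ≠ 0 := by
    intro hzero
    obtain ⟨q', hq'⟩ := hX'ne
    refine (apply_lt q' hq').ne ?_
    rw [← dotProduct_eq, ← dotProduct_eq, hzero, zero_dotProduct, zero_dotProduct]
  obtain ⟨q', hq', hle⟩ :=
    exists_dotProduct_le_of_facetNormals_eq hk hX hX' hX'ne hc h hneg normal_ne_zero hq
  rw [dotProduct_eq, dotProduct_eq] at hle
  exact (apply_lt q' hq').not_ge hle

theorem convexHull_eq_of_facetNormals_eq (hk : k ≠ 0) (hX : ∀ q ∈ X, ‖q‖ ≤ 1)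
    (hX' : ∀ q ∈ X', ‖q‖ ≤ 1) (hXne : X.Nonempty) (hX'ne : X'.Nonempty) (hc : c ≠ 0)
    (h : ∀ i, facetNormals i c X = facetNormals i c X')
    (hneg : ∀ i, facetNormals i c (-X) = facetNormals i c (-X')) :
    convexHull ℝ (X : Set (Fin (k + 1) → ℝ)) = convexHull ℝ X' :=
  (convexHull_subset_of_facetNormals_eq hk hX hX' hX'ne hc h hneg).antisymm
    (convexHull_subset_of_facetNormals_eq hk hX' hX hXne hc (fun i ↦ (h i).symm)
      fun i ↦ (hneg i).symm)

end HullRecovery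

section WeightedSubsets

variable {ι : Type*} {A : Finset ι} {w : ι → ℝ}

/-- The Chernoff bound for the partition function `∏ (1 + exp (-τ w))`. -/
theorem card_filter_sum_le_exp {τ : ℝ} (hτ : 0 ≤ τ) (S : ℝ) :
    (({D ∈ A.powerset | ∑ u ∈ D, w u ≤ S}).card : ℝ) ≤
      Real.exp (τ * S + ∑ u ∈ A, Real.exp (-(τ * w u))) := by
  calc (({D ∈ A.powerset | ∑ u ∈ D, w u ≤ S}).card : ℝ)
      ≤ ∑ D ∈ A.powerset with ∑ u ∈ D, w u ≤ S, Real.exp (τ * S - τ * ∑ u ∈ D, w u) := by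
        rw [Finset.card_eq_sum_ones, Nat.cast_sum]
        refine Finset.sum_le_sum fun D hD ↦ ?_
        rw [Nat.cast_one]
        exact Real.one_le_exp (sub_nonneg.2 (by gcongr; exact (Finset.mem_filter.1 hD).2))
    _ ≤ ∑ D ∈ A.powerset, Real.exp (τ * S - τ * ∑ u ∈ D, w u) :=
        Finset.sum_le_sum_of_subset_of_nonneg (Finset.filter_subset _ _)
          fun _ _ _ ↦ (Real.exp_pos _).le
    _ = Real.exp (τ * S) * ∏ u ∈ A, (1 + Real.exp (-(τ * w u))) := by
        rw [Finset.prod_one_add, Finset.mul_sum]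
        refine Finset.sum_congr rfl fun D _ ↦ ?_
        rw [← Real.exp_sum, ← Real.exp_add, Finset.sum_neg_distrib, Finset.mul_sum, sub_eq_add_neg]
    _ ≤ Real.exp (τ * S) * ∏ u ∈ A, Real.exp (Real.exp (-(τ * w u))) := by
        gcongr with u
        rw [add_comm]
        exact Real.add_one_le_exp _
    _ = Real.exp (τ * S + ∑ u ∈ A, Real.exp (-(τ * w u))) := by
        rw [← Real.exp_sum, Real.exp_add]

theorem summable_add_one_pow_mul_exp_neg (n : ℕ) :
    Summable fun l : ℕ ↦ ((l : ℝ) + 1) ^ n * Real.exp (-l) := by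
  have := ((summable_nat_add_iff 1).2 (Real.summable_pow_mul_exp_neg_nat_mul n one_pos)).mul_left
    (Real.exp 1)
  refine this.congr fun l ↦ ?_
  rw [mul_left_comm, ← Real.exp_add]
  push_cast
  ring_nf

theorem sum_exp_neg_le {κ : ℝ} {n : ℕ} (hw : ∀ u ∈ A, 0 ≤ w u)
    (hA : ∀ l : ℕ, (({u ∈ A | w u ≤ l + 1}).card : ℝ) ≤ κ * (l + 1) ^ n) :
    ∑ u ∈ A, Real.exp (-w u) ≤ κ * ∑' l : ℕ, ((l : ℝ) + 1) ^ n * Real.exp (-l) := by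
  classical
  have κ_nonneg : 0 ≤ κ := by simpa using (Nat.cast_nonneg _).trans (hA 0)
  have fiber_le (l : ℕ) : ∑ u ∈ A with ⌊w u⌋₊ = l, Real.exp (-w u) ≤
      κ * (((l : ℝ) + 1) ^ n * Real.exp (-l)) := by
    calc ∑ u ∈ A with ⌊w u⌋₊ = l, Real.exp (-w u)
        ≤ ({u ∈ A | ⌊w u⌋₊ = l}).card • Real.exp (-l) := by
          refine Finset.sum_le_card_nsmul _ _ _ fun u hu ↦ ?_
          obtain ⟨huA, rfl⟩ := Finset.mem_filter.1 hu
          exact Real.exp_le_exp.2 (neg_le_neg (Nat.floor_le (hw u huA)))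
      _ ≤ ({u ∈ A | w u ≤ l + 1}).card * Real.exp (-l) := by
          rw [nsmul_eq_mul]
          gcongr with u
          rintro rfl
          exact (Nat.lt_floor_add_one _).le
      _ ≤ κ * (l + 1) ^ n * Real.exp (-l) := by
          gcongr
          exact hA l
      _ = κ * (((l : ℝ) + 1) ^ n * Real.exp (-l)) := mul_assoc _ _ _
  calc ∑ u ∈ A, Real.exp (-w u)
      = ∑ l ∈ A.image fun u ↦ ⌊w u⌋₊, ∑ u ∈ A with ⌊w u⌋₊ = l, Real.exp (-w u) :=
        (Finset.sum_fiberwise_of_maps_to (fun u hu ↦ Finset.mem_image_of_mem _ hu) _).symm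
    _ ≤ ∑ l ∈ A.image fun u ↦ ⌊w u⌋₊, κ * (((l : ℝ) + 1) ^ n * Real.exp (-l)) :=
        Finset.sum_le_sum fun l _ ↦ fiber_le l
    _ ≤ κ * ∑' l : ℕ, ((l : ℝ) + 1) ^ n * Real.exp (-l) := by
        rw [← Finset.mul_sum]
        gcongr
        exact (summable_add_one_pow_mul_exp_neg n).sum_le_tsum _ fun _ _ ↦ by positivity

end WeightedSubsets

section BoundedSubsets

theorem div_rpow_eq {S δ : ℝ} (hS : 0 < S) (hδ : 0 < δ) (n : ℕ) :
    S / (S * δ) ^ ((1 : ℝ) / (n + 1)) = (S ^ n / δ) ^ ((1 : ℝ) / (n + 1)) := by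
  have S_eq := Real.pow_rpow_inv_natCast hS.le n.succ_ne_zero
  rw [Nat.cast_succ, inv_eq_one_div] at S_eq
  rw [div_eq_iff (by positivity), ← Real.mul_rpow (by positivity) (by positivity)]
  convert! S_eq.symm using 2
  field_simp
  exact (pow_succ S n).symm

variable {V : Type*} [NormedAddCommGroup V]

/-- The finite subsets of `Λ` whose elements have norms adding up to at most `S`; when `Λ` is a
lattice, these are an analogue of the partitions of an integer into distinct parts. -/
def boundedSubsets (Λ : Set V) (S : ℝ) : Set (Finset V) := {D | ↑D ⊆ Λ ∧ ∑ u ∈ D, ‖u‖ ≤ S}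

theorem boundedSubsets_eq {Λ : Set V} {S : ℝ} {A : Finset V}
    (hA : (A : Set V) = Metric.closedBall 0 S ∩ Λ) :
    boundedSubsets Λ S = ({D ∈ A.powerset | ∑ u ∈ D, ‖u‖ ≤ S} : Finset (Finset V)) := by
  ext D
  simp only [boundedSubsets, mem_ofPred_eq, Finset.coe_filter, Finset.mem_powerset,
    ← Finset.coe_subset, hA, subset_inter_iff]
  refine ⟨fun ⟨hD, hsum⟩ ↦ ⟨⟨fun u hu ↦ ?_, hD⟩, hsum⟩, fun ⟨⟨_, hD⟩, hsum⟩ ↦ ⟨hD, hsum⟩⟩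
  rw [mem_closedBall_zero_iff]
  exact (Finset.single_le_sum (f := fun u : V ↦ ‖u‖) (fun u _ ↦ norm_nonneg u) hu).trans hsum

variable [NormedSpace ℝ V] {ι : Type*} [Finite ι] (b : Module.Basis ι ℝ V)

theorem finite_boundedSubsets_span (S : ℝ) :
    (boundedSubsets (Submodule.span ℤ (range b) : Set V) S).Finite := by
  rw [boundedSubsets_eq (finite_closedBall_inter_span b 0 S).coe_toFinset]
  exact Finset.finite_toSet _

theorem log_ncard_boundedSubsets_span_le {τ κ : ℝ} (hτ : 0 < τ) {n : ℕ}
    (hκ : ∀ l : ℕ, ∀ T : Finset V, ↑T ⊆ Metric.closedBall 0 ((l + 1) / τ) ∩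
      (Submodule.span ℤ (range b) : Set V) → (T.card : ℝ) ≤ κ * (l + 1) ^ n)
    {S : ℝ} (hS : 0 ≤ S) :
    Real.log (boundedSubsets (Submodule.span ℤ (range b) : Set V) S).ncard ≤
      τ * S + κ * ∑' l : ℕ, ((l : ℝ) + 1) ^ n * Real.exp (-l) := by
  obtain ⟨A, hA⟩ := (finite_closedBall_inter_span b 0 S).exists_finset_coe
  have sum_le : ∑ u ∈ A, Real.exp (-(τ * ‖u‖)) ≤
      κ * ∑' l : ℕ, ((l : ℝ) + 1) ^ n * Real.exp (-l) := by
    refine sum_exp_neg_le (fun u _ ↦ by positivity) fun l ↦ hκ l _ fun u hu ↦ ?_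
    obtain ⟨huA, hu⟩ := Finset.mem_filter.1 hu
    refine ⟨?_, (hA.subset huA).2⟩
    rwa [mem_closedBall_zero_iff, le_div_iff₀' hτ]
  rw [boundedSubsets_eq hA, ncard_coe_finset]
  refine (Real.log_le_log ?_ (card_filter_sum_le_exp hτ.le S)).trans ?_
  · exact_mod_cast Finset.card_pos.2 ⟨∅, by simpa using hS⟩
  · rw [Real.log_exp]
    gcongr

variable [MeasurableSpace V] [BorelSpace V] (μ : Measure V) [μ.IsAddHaarMeasure]

/-- The exponent comes from taking `τ` with `τ ^ (n + 1) = 1 / (S * covolume)` in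
`log_ncard_boundedSubsets_span_le`, which balances the two terms of the bound. -/
theorem exists_forall_eventually_log_ncard_boundedSubsets_span_le :
    ∃ C : ℝ, 0 < C ∧ ∀ b : Module.Basis ι ℝ V, ∀ᶠ S in atTop,
      Real.log (boundedSubsets (Submodule.span ℤ (range b) : Set V) S).ncard ≤
        C * (S ^ Module.finrank ℝ V / μ.real (ZSpan.fundamentalDomain b)) ^
          ((1 : ℝ) / (Module.finrank ℝ V + 1)) := by
  set n := Module.finrank ℝ V
  refine ⟨1 + 2 ^ n * μ.real (Metric.ball 0 1) * ∑' l : ℕ, ((l : ℝ) + 1) ^ n * Real.exp (-l),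
    by positivity, fun b ↦ ?_⟩
  have := Module.Finite.of_basis b
  set δ := μ.real (ZSpan.fundamentalDomain b)
  have δ_pos : 0 < δ := measureReal_fundamentalDomain_pos b μ
  have : (0 : ℝ) < n + 1 := by positivity
  have radius_tendsto : Tendsto (fun S : ℝ ↦ (S * δ) ^ ((1 : ℝ) / (n + 1))) atTop atTop :=
    (tendsto_rpow_atTop (by positivity)).comp (tendsto_id.atTop_mul_const δ_pos)
  obtain ⟨r₀, hr₀⟩ := eventually_atTop.1 (eventually_card_le b μ)
  filter_upwards [radius_tendsto.eventually_ge_atTop r₀, eventually_gt_atTop 0] with S hS S_pos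
  set r := (S * δ) ^ ((1 : ℝ) / (n + 1))
  have r_pos : 0 < r := by positivity
  have r_pow : r ^ (n + 1) = S * δ := by
    have := Real.rpow_inv_natCast_pow (n := n + 1) (x := S * δ) (by positivity) (by positivity)
    rwa [inv_eq_one_div, Nat.cast_add_one] at this
  have S_div_r : S / r = (S ^ n / δ) ^ ((1 : ℝ) / (n + 1)) := div_rpow_eq S_pos δ_pos n
  have := log_ncard_boundedSubsets_span_le b (τ := r⁻¹)
    (κ := 2 ^ n * μ.real (Metric.ball 0 1) * (S / r)) (n := n) (by positivity)
    (fun l T hT ↦ ?_) S_pos.le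
  · rw [← S_div_r]
    refine this.trans_eq ?_
    ring
  · rw [div_inv_eq_mul] at hT
    refine (hr₀ _ ?_ T hT).trans_eq ?_
    · nlinarith [Nat.cast_nonneg (α := ℝ) l]
    · have r_pow_div : r ^ n / δ = S / r := by
        rwa [div_eq_div_iff δ_pos.ne' r_pos.ne', ← pow_succ]
      rw [← r_pow_div, mul_pow, mul_pow]
      ring

end BoundedSubsets

section UnitPolytopes

open scoped Matrix Pointwise

variable {k : ℕ}

theorem monotone_log_natCast : Monotone fun n : ℕ ↦ Real.log n := fun a b hab ↦ by
  rcases a.eq_zero_or_pos with rfl | ha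
  · simpa using Real.log_natCast_nonneg b
  · exact Real.log_le_log (by positivity) (by exact_mod_cast hab)

/-- The polytopes in `[-1, 1] ^ (k + 1)` with vertices in the lattice of the points which `W` maps
to integer points. -/
def unitPolytopes (W : Matrix (Fin (k + 1)) (Fin (k + 1)) ℝ) : Set (Set (Fin (k + 1) → ℝ)) :=
  {P | ∃ X : Finset (Fin (k + 1) → ℝ), X.Nonempty ∧ (∀ q ∈ X, ‖q‖ ≤ 1) ∧
    (∀ q ∈ X, q ∈ integerPreimage W) ∧ P = convexHull ℝ (X : Set (Fin (k + 1) → ℝ))}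

theorem intCast_mem_integerPreimage {ι : Type*} [Fintype ι] (M : Matrix ι ι ℤ) (t : ℕ)
    (z : ι → ℤ) : (fun l ↦ (z l : ℝ)) ∈ integerPreimage ((t : ℝ) • M.map ((↑) : ℤ → ℝ)) :=
  mem_integerPreimage.2 fun j ↦ ⟨((t • M) *ᵥ z) j, by simp [Matrix.mulVec, dotProduct]⟩

variable {M : Matrix (Fin (k + 1)) (Fin (k + 1)) ℤ} {t : ℕ} {X : Finset (Fin (k + 1) → ℝ)}

theorem mem_integerPreimage_of_mem_capped {i : Fin (k + 1)}
    (hX : ∀ q ∈ X, q ∈ integerPreimage ((t : ℝ) • M.map ((↑) : ℤ → ℝ))) {q : Fin (k + 1) → ℝ}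
    (hq : q ∈ capped i X) : q ∈ integerPreimage ((t : ℝ) • M.map ((↑) : ℤ → ℝ)) := by
  rcases mem_capped.1 hq with hq | ⟨hbase, hheight⟩
  · exact hX q hq
  have exists_int : ∀ l, ∃ z : ℤ, (z : ℝ) = q l := by
    refine i.forall_iff_succAbove.2 ⟨⟨4 * k + 1, by rw [hheight]; push_cast; rfl⟩, fun l ↦ ?_⟩
    rcases (abs_eq zero_le_three).1 (hbase l) with h | h
    · exact ⟨3, by rw [Int.cast_ofNat]; exact h.symm⟩
    · exact ⟨-3, by rw [Int.cast_neg, Int.cast_ofNat]; exact h.symm⟩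
  choose z hz using exists_int
  obtain rfl : (fun l ↦ (z l : ℝ)) = q := funext hz
  exact intCast_mem_integerPreimage M t z

theorem facetNormals_mem_boundedSubsets (hM : (M.map ((↑) : ℤ → ℝ)).det ≠ 0) (ht : t ≠ 0)
    (hX : ∀ q ∈ X, ‖q‖ ≤ 1) (hXM : ∀ q ∈ X, q ∈ integerPreimage ((t : ℝ) • M.map ((↑) : ℤ → ℝ)))
    (i : Fin (k + 1)) :
    facetNormals i ((t : ℝ) ^ k * |(M.map ((↑) : ℤ → ℝ)).det| / stdSimplexVolume k) X ∈
      boundedSubsets (Submodule.span ℤ (range (M.map ((↑) : ℤ → ℝ)).row) : Set (Fin (k + 1) → ℝ))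
        ((t : ℝ) ^ k * (|(M.map ((↑) : ℤ → ℝ)).det| *
          ((2 * k + 1) * 6 ^ k / stdSimplexVolume k))) := by
  have := stdSimplexVolume_pos k
  refine ⟨facetNormals_subset_span_row hM (by positivity)
      fun _ hq ↦ mem_integerPreimage_of_mem_capped hXM hq,
    (sum_norm_facetNormals_le (by positivity) hX).trans_eq ?_⟩
  ring

theorem finite_unitPolytopes_and_ncard_le (hk : k ≠ 0) {W : Matrix (Fin (k + 1)) (Fin (k + 1)) ℝ}
    {c : ℝ} (hc : c ≠ 0) {𝒟 : Set (Finset (Fin (k + 1) → ℝ))} (h𝒟 : 𝒟.Finite)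
    (hcode : ∀ X : Finset (Fin (k + 1) → ℝ), (∀ q ∈ X, ‖q‖ ≤ 1) →
      (∀ q ∈ X, q ∈ integerPreimage W) → ∀ i, facetNormals i c X ∈ 𝒟) :
    (unitPolytopes W).Finite ∧ (unitPolytopes W).ncard ≤ 𝒟.ncard ^ (2 * (k + 1)) := by
  classical
  choose! X hXne hX hXW hP using fun P (hP : P ∈ unitPolytopes W) ↦ hP
  set 𝒯 := (Fintype.piFinset fun _ : Fin (k + 1) ↦ h𝒟.toFinset) with h𝒯
  set code : Set (Fin (k + 1) → ℝ) → _ := fun P ↦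
    (fun i ↦ facetNormals i c (X P), fun i ↦ facetNormals i c (-X P))
  have mapsTo : MapsTo code (unitPolytopes W) ↑(𝒯 ×ˢ 𝒯) := by
    intro P hP
    simp only [code, h𝒯, Finset.coe_product, mem_prod, Finset.mem_coe, Fintype.mem_piFinset,
      Finite.mem_toFinset]
    refine ⟨hcode _ (hX P hP) (hXW P hP), hcode _ (fun q hq ↦ ?_) fun q hq ↦ ?_⟩
    · exact norm_neg q ▸ hX P hP _ (Finset.mem_neg'.1 hq)
    · exact neg_mem_iff.1 (hXW P hP _ (Finset.mem_neg'.1 hq))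
  have injOn : InjOn code (unitPolytopes W) := by
    intro P hPW P' hPW' h
    obtain ⟨hpos, hneg⟩ := Prod.ext_iff.1 h
    rw [hP P hPW, hP P' hPW']
    exact convexHull_eq_of_facetNormals_eq hk (hX P hPW) (hX P' hPW') (hXne P hPW)
      (hXne P' hPW') hc (congrFun hpos) (congrFun hneg)
  refine ⟨(Finset.finite_toSet _).of_injOn mapsTo injOn,
    (ncard_le_ncard_of_injOn code mapsTo injOn (Finset.finite_toSet _)).trans_eq ?_⟩
  rw [ncard_coe_finset, Finset.card_product, h𝒯, Fintype.card_piFinset_const,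
    ← ncard_eq_toFinset_card _ h𝒟, ← pow_add, ← two_mul]

theorem exists_basis_eq_row {ι : Type*} [Fintype ι] [DecidableEq ι] {A : Matrix ι ι ℝ}
    (hA : A.det ≠ 0) : ∃ b : Module.Basis ι ℝ (ι → ℝ), ⇑b = A.row ∧
      volume.real (ZSpan.fundamentalDomain b) = |A.det| := by
  have rows := Matrix.linearIndependent_rows_of_det_ne_zero hA
  refine ⟨.mk rows (rows.span_eq_top_of_card_eq_finrank' (by simp)).ge, Module.Basis.coe_mk _ _, ?_⟩
  rw [measureReal_def, ZSpan.volume_fundamentalDomain, ENNReal.toReal_ofReal (abs_nonneg _),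
    Module.Basis.coe_mk]
  rfl

theorem finite_unitPolytopes_and_log_ncard_le (hk : k ≠ 0)
    (hM : (M.map ((↑) : ℤ → ℝ)).det ≠ 0) (ht : t ≠ 0) :
    (unitPolytopes ((t : ℝ) • M.map ((↑) : ℤ → ℝ))).Finite ∧
      Real.log (unitPolytopes ((t : ℝ) • M.map ((↑) : ℤ → ℝ))).ncard ≤
        2 * (k + 1) * Real.log (boundedSubsets
          (Submodule.span ℤ (range (M.map ((↑) : ℤ → ℝ)).row) : Set (Fin (k + 1) → ℝ))
          ((t : ℝ) ^ k * (|(M.map ((↑) : ℤ → ℝ)).det| *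
            ((2 * k + 1) * 6 ^ k / stdSimplexVolume k)))).ncard := by
  obtain ⟨b, hb, -⟩ := exists_basis_eq_row hM
  have := stdSimplexVolume_pos k
  obtain ⟨finite, ncard_le⟩ := finite_unitPolytopes_and_ncard_le hk
    (c := (t : ℝ) ^ k * |(M.map ((↑) : ℤ → ℝ)).det| / stdSimplexVolume k) (by positivity)
    (finite_boundedSubsets_span b _)
    fun X hX hXM i ↦ hb ▸ facetNormals_mem_boundedSubsets hM ht hX hXM i
  refine ⟨finite, (monotone_log_natCast ncard_le).trans_eq ?_⟩
  simp only [Nat.cast_pow, Real.log_pow, hb]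
  push_cast
  rfl

theorem exists_forall_eventually_log_ncard_unitPolytopes_le (hk : k ≠ 0) :
    ∃ C : ℝ, 0 < C ∧ ∀ M : Matrix (Fin (k + 1)) (Fin (k + 1)) ℤ,
      (M.map ((↑) : ℤ → ℝ)).det ≠ 0 → ∀ᶠ t : ℕ in atTop,
        Real.log (unitPolytopes ((t : ℝ) • M.map ((↑) : ℤ → ℝ))).ncard ≤
          C * ((t : ℝ) ^ (k + 1) * |(M.map ((↑) : ℤ → ℝ)).det|) ^ ((k : ℝ) / (k + 2)) := by
  obtain ⟨C, hC, hbound⟩ := exists_forall_eventually_log_ncard_boundedSubsets_span_le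
    (V := Fin (k + 1) → ℝ) (ι := Fin (k + 1)) volume
  set a := (2 * k + 1) * 6 ^ k / stdSimplexVolume k
  have := stdSimplexVolume_pos k
  have : 0 < a := by positivity
  refine ⟨2 * (k + 1) * (C * (a ^ (k + 1)) ^ ((1 : ℝ) / (k + 2))), by positivity, fun M hM ↦ ?_⟩
  obtain ⟨b, hb, hvol⟩ := exists_basis_eq_row hM
  set δ := |(M.map ((↑) : ℤ → ℝ)).det|
  have δ_pos : 0 < δ := abs_pos.2 hM
  have size_tendsto : Tendsto (fun t : ℕ ↦ (t : ℝ) ^ k * (δ * a)) atTop atTop :=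
    ((tendsto_pow_atTop hk).comp tendsto_natCast_atTop_atTop).atTop_mul_const (by positivity)
  filter_upwards [size_tendsto.eventually (hbound b), eventually_ne_atTop 0] with t ht ht0
  rw [hvol, hb, Module.finrank_fin_fun, Nat.cast_add_one, add_assoc, one_add_one_eq_two] at ht
  have size_eq : ((t : ℝ) ^ k * (δ * a)) ^ (k + 1) / δ =
      a ^ (k + 1) * ((t : ℝ) ^ (k + 1) * δ) ^ k := by
    rw [div_eq_iff δ_pos.ne']
    simp only [mul_pow, ← pow_mul, pow_succ]
    ring
  refine (finite_unitPolytopes_and_log_ncard_le hk hM ht0).2.trans ?_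
  rw [mul_assoc (2 * ((k : ℝ) + 1))]
  gcongr
  refine ht.trans_eq ?_
  rw [size_eq, Real.mul_rpow (by positivity) (by positivity), mul_assoc,
    ← Real.rpow_natCast _ k, ← Real.rpow_mul (by positivity), mul_one_div]

end UnitPolytopes

section RationalFrame

open scoped Matrix Topology

theorem tendsto_intFloor_natCast_mul_div (x : ℝ) :
    Tendsto (fun D : ℕ ↦ (⌊D * x⌋ : ℝ) / D) atTop (𝓝 x) := by
  have lower : Tendsto (fun D : ℕ ↦ x - 1 / (D : ℝ)) atTop (𝓝 x) := by
    simpa using tendsto_const_nhds.sub (tendsto_one_div_atTop_nhds_zero_nat (𝕜 := ℝ))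
  refine tendsto_of_tendsto_of_tendsto_of_le_of_le' lower tendsto_const_nhds ?_ ?_ <;>
    filter_upwards [eventually_gt_atTop 0] with D hD
  · have hD : (0 : ℝ) < D := by exact_mod_cast hD
    rw [le_div_iff₀ hD, sub_mul, one_div_mul_cancel hD.ne']
    linarith [Int.lt_floor_add_one (D * x)]
  · have hD : (0 : ℝ) < D := by exact_mod_cast hD
    rw [div_le_iff₀ hD]
    linarith [Int.floor_le (D * x)]

theorem tendsto_nonsing_inv_mul {α ι : Type*} [Fintype ι] [DecidableEq ι] {l : Filter α}
    {A : α → Matrix ι ι ℝ} {T : Matrix ι ι ℝ} (hT : T.det ≠ 0) (hA : Tendsto A l (𝓝 T)) :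
    Tendsto (fun a ↦ (A a)⁻¹ * T) l (𝓝 1) := by
  have continuousAt_inv : ContinuousAt Ring.inverse T.det := by
    rw [Ring.inverse_eq_inv']
    exact continuousAt_inv₀ hT
  rw [← Matrix.nonsing_inv_mul T hT.isUnit]
  exact ((continuousAt_matrix_inv T continuousAt_inv).tendsto.comp hA).mul tendsto_const_nhds

theorem inv_smul_matrix {ι 𝕜 : Type*} [Fintype ι] [DecidableEq ι] [Field 𝕜] {A : Matrix ι ι 𝕜}
    (hA : A.det ≠ 0) {c : 𝕜} (hc : c ≠ 0) : (c • A)⁻¹ = c⁻¹ • A⁻¹ :=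
  A.inv_smul' (Units.mk0 c hc) hA.isUnit

theorem exists_int_matrix_approx {ι : Type*} [Fintype ι] [DecidableEq ι] {T : Matrix ι ι ℝ}
    (hT : T.det ≠ 0) :
    ∃ M : Matrix ι ι ℤ, ∃ D : ℝ, 0 < D ∧ (M.map ((↑) : ℤ → ℝ)).det ≠ 0 ∧
      (∀ i j, |((M.map ((↑) : ℤ → ℝ))⁻¹ * D • T) i j| ≤ 2) ∧
      |(M.map ((↑) : ℤ → ℝ)).det| ≤ 2 * |(D • T).det| := by
  set A : ℕ → Matrix ι ι ℝ := fun D ↦ .of fun i j ↦ (⌊D * T i j⌋ : ℝ) / D with A_def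
  have A_tendsto : Tendsto A atTop (𝓝 T) :=
    tendsto_pi_nhds.2 fun i ↦ tendsto_pi_nhds.2 fun j ↦ tendsto_intFloor_natCast_mul_div _
  have det_tendsto : Tendsto (fun D ↦ (A D).det) atTop (𝓝 T.det) :=
    (continuous_id.matrix_det.tendsto T).comp A_tendsto
  have entry_le : ∀ᶠ D in atTop, ∀ i j, |((A D)⁻¹ * T) i j| ≤ 2 := by
    refine eventually_all.2 fun i ↦ eventually_all.2 fun j ↦ ?_
    refine ((tendsto_pi_nhds.1 (tendsto_pi_nhds.1 (tendsto_nonsing_inv_mul hT A_tendsto) i) j).abs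
      |>.eventually_lt_const (u := 2) ?_).mono fun D hD ↦ hD.le
    rw [Matrix.one_apply]
    split_ifs <;> norm_num
  have det_le : ∀ᶠ D in atTop, |(A D).det| < 2 * |T.det| :=
    det_tendsto.abs.eventually_lt_const (by linarith [abs_pos.2 hT])
  obtain ⟨D, hD, hdet, hentry, hle⟩ := ((eventually_gt_atTop 0).and
    ((det_tendsto.eventually_ne hT).and (entry_le.and det_le))).exists
  have hD : (0 : ℝ) < D := by exact_mod_cast hD
  have map_eq : (Matrix.of fun i j ↦ ⌊D * T i j⌋).map ((↑) : ℤ → ℝ) = (D : ℝ) • A D := by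
    ext i j
    simp [A_def, mul_div_cancel₀ _ hD.ne']
  refine ⟨.of fun i j ↦ ⌊D * T i j⌋, D, hD, ?_, ?_, ?_⟩ <;> rw [map_eq]
  · rw [Matrix.det_smul]
    positivity
  · rwa [inv_smul_matrix hdet hD.ne', smul_mul_smul_comm, inv_mul_cancel₀ hD.ne', one_smul]
  · rw [Matrix.det_smul, Matrix.det_smul, abs_mul, abs_mul]
    nlinarith [abs_nonneg ((D : ℝ) ^ Fintype.card ι)]

theorem norm_mulVec_le_of_abs_le {ι κ : Type*} [Fintype ι] [Fintype κ] {A : Matrix ι κ ℝ}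
    {v : κ → ℝ} {a b : ℝ} (ha : 0 ≤ a) (hb : 0 ≤ b) (hA : ∀ i j, |A i j| ≤ a)
    (hv : ∀ j, |v j| ≤ b) : ‖A *ᵥ v‖ ≤ Fintype.card κ * (a * b) := by
  refine (pi_norm_le_iff_of_nonneg (by positivity)).2 fun i ↦ ?_
  calc |∑ j, A i j * v j|
    _ ≤ ∑ j, |A i j * v j| := Finset.abs_sum_le_sum_abs _ _
    _ ≤ ∑ _j : κ, a * b := Finset.sum_le_sum fun j _ ↦ by
      rw [abs_mul]
      exact mul_le_mul (hA i j) (hv j) (abs_nonneg _) ha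
    _ = Fintype.card κ * (a * b) := by
      rw [Finset.sum_const, nsmul_eq_mul, Finset.card_univ]

variable {d : ℕ} {K : Set (E d)}

theorem exists_int_matrix_norm_inv_mulVec_sub_le (hd : d ≠ 0) (hKc : IsCompact K)
    (hK : Convex ℝ K) (hint : (interior K).Nonempty) :
    ∃ M : Matrix (Fin d) (Fin d) ℤ, ∃ s : ℝ, 0 < s ∧ (M.map ((↑) : ℤ → ℝ)).det ≠ 0 ∧
      (∀ y ∈ K, ∀ y' ∈ K, ‖(M.map ((↑) : ℤ → ℝ))⁻¹ *ᵥ (y - y').ofLp‖ ≤ s) ∧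
      s ^ d * |(M.map ((↑) : ℤ → ℝ)).det| ≤ 2 * (4 * d) ^ d * d ^ d * volume.real K := by
  obtain ⟨x₀, -, φ, -, hφ, -, hdet⟩ := exists_linearEquiv_abs_symm_le_one hd hKc hK hint
  set e := (EuclideanSpace.basisFun (Fin d) ℝ).toBasis
  set T := LinearMap.toMatrix e e φ
  have det_T : T.det = LinearMap.det (φ : E d →ₗ[ℝ] E d) := LinearMap.det_toMatrix e _
  obtain ⟨M, D, hD, hM, hentry, hMdet⟩ := exists_int_matrix_approx (T := T)
    (det_T ▸ φ.isUnit_det'.ne_zero)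
  have d_pos : (0 : ℝ) < d := by positivity
  refine ⟨M, 4 * d / D, by positivity, hM, fun y hy y' hy' ↦ ?_, ?_⟩
  · set w := φ.symm (y - y')
    have w_le : ∀ i, |w i| ≤ 2 := fun i ↦ by
      have : w i = φ.symm (y - x₀) i - φ.symm (y' - x₀) i := by
        rw [← PiLp.sub_apply, ← map_sub, sub_sub_sub_cancel_right]
      rw [this]
      linarith [abs_sub (φ.symm (y - x₀) i) (φ.symm (y' - x₀) i), hφ y hy i, hφ y' hy' i]
    have sub_eq : (y - y').ofLp = T *ᵥ w.ofLp := by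
      rw [← φ.apply_symm_apply (y - y')]
      exact (LinearMap.toMatrix_mulVec_repr e e (φ : E d →ₗ[ℝ] E d) w).symm
    have mulVec_eq : (M.map ((↑) : ℤ → ℝ))⁻¹ *ᵥ (y - y').ofLp =
        D⁻¹ • ((M.map ((↑) : ℤ → ℝ))⁻¹ * D • T) *ᵥ w.ofLp := by
      rw [Matrix.mul_smul, Matrix.smul_mulVec, inv_smul_smul₀ hD.ne', sub_eq, Matrix.mulVec_mulVec]
    rw [mulVec_eq, norm_smul, norm_inv, Real.norm_of_nonneg hD.le, inv_mul_le_iff₀ hD,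
      mul_div_cancel₀ _ hD.ne']
    refine (norm_mulVec_le_of_abs_le zero_le_two zero_le_two hentry w_le).trans_eq ?_
    rw [Fintype.card_fin]
    ring
  · rw [Matrix.det_smul, Fintype.card_fin, det_T, abs_mul, abs_of_pos (pow_pos hD d)] at hMdet
    calc (4 * d / D) ^ d * |(M.map ((↑) : ℤ → ℝ)).det|
      _ ≤ (4 * d / D) ^ d * (2 * (D ^ d * (d ^ d * volume.real K))) := by
        gcongr
        exact hMdet.trans (by gcongr)
      _ = 2 * (4 * d) ^ d * d ^ d * volume.real K := by
        rw [div_pow]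
        field_simp

end RationalFrame

section UpperBound

open scoped Matrix

theorem ncard_latticePolytopes_le {k m : ℕ} {K : Set (E (k + 1))}
    {W : Matrix (Fin (k + 1)) (Fin (k + 1)) ℝ} (hW : W.det ≠ 0) (hm : m ≠ 0)
    (hK : ∀ y ∈ K, ∀ y' ∈ K, ‖(m : ℝ) • W⁻¹ *ᵥ (y - y').ofLp‖ ≤ 1)
    (hfin : (unitPolytopes W).Finite) :
    (latticePolytopes (k + 1) m K).ncard ≤ (unitPolytopes W).ncard := by
  classical
  rcases (K ∩ scaledLattice (k + 1) m).eq_empty_or_nonempty with hempty | ⟨y₀, hy₀, hy₀m⟩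
  · suffices latticePolytopes (k + 1) m K = ∅ by simp [this]
    refine eq_empty_of_forall_notMem fun P hP ↦ ?_
    obtain ⟨F, hF, hFsub, -⟩ := exists_subset_of_mem_latticePolytopes hP
    exact (hempty ▸ hFsub) hF.choose_spec
  have hm : (m : ℝ) ≠ 0 := Nat.cast_ne_zero.2 hm
  set chart : E (k + 1) →ₗ[ℝ] (Fin (k + 1) → ℝ) :=
    (m : ℝ) • W⁻¹.mulVecLin ∘ₗ (WithLp.linearEquiv 2 ℝ (Fin (k + 1) → ℝ)).toLinearMap
  set g : E (k + 1) →ᵃ[ℝ] (Fin (k + 1) → ℝ) :=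
    chart.toAffineMap - AffineMap.const ℝ _ (chart y₀)
  have g_apply : ∀ y, g y = (m : ℝ) • W⁻¹ *ᵥ (y - y₀).ofLp := fun y ↦ (map_sub chart y y₀).symm
  have mulVec_g : ∀ y, W *ᵥ g y = (m : ℝ) • (y - y₀).ofLp := fun y ↦ by
    rw [g_apply, Matrix.mulVec_smul, Matrix.mulVec_mulVec, Matrix.mul_nonsing_inv _ hW.isUnit,
      Matrix.one_mulVec]
  have g_injective : Function.Injective g := fun y y' h ↦ by
    have := congrArg (W *ᵥ ·) h
    simp only [mulVec_g] at this
    exact sub_left_injective (WithLp.ofLp_injective 2 (smul_right_injective _ hm this))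
  refine ncard_le_ncard_of_injOn (image g) (fun P hP ↦ ?_) g_injective.image_injective.injOn hfin
  obtain ⟨F, hF, hFsub, rfl⟩ := exists_subset_of_mem_latticePolytopes hP
  refine ⟨F.image g, hF.image g, Finset.forall_mem_image.2 fun y hy ↦ ?_,
    Finset.forall_mem_image.2 fun y hy ↦ mem_integerPreimage.2 fun j ↦ ?_, ?_⟩
  · exact g_apply y ▸ hK y (hFsub hy).1 y₀ hy₀
  · obtain ⟨z, hz⟩ := (hFsub hy).2 j
    obtain ⟨z₀, hz₀⟩ := hy₀m j
    refine ⟨z - z₀, ?_⟩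
    rw [mulVec_g, Pi.smul_apply, PiLp.sub_apply, hz, hz₀, smul_eq_mul, ← sub_div,
      mul_div_cancel₀ _ hm, Int.cast_sub]
  · rw [AffineMap.image_convexHull, Finset.coe_image]

theorem eventually_log_ncard_latticePolytopes_le_of_frame {k : ℕ} {K : Set (E (k + 1))}
    {M : Matrix (Fin (k + 1)) (Fin (k + 1)) ℤ} {s C : ℝ} (hk : k ≠ 0) (hs : 0 < s) (hC : 0 ≤ C)
    (hM : (M.map ((↑) : ℤ → ℝ)).det ≠ 0)
    (hK : ∀ y ∈ K, ∀ y' ∈ K, ‖(M.map ((↑) : ℤ → ℝ))⁻¹ *ᵥ (y - y').ofLp‖ ≤ s)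
    (hunit : ∀ᶠ t : ℕ in atTop, Real.log (unitPolytopes ((t : ℝ) • M.map ((↑) : ℤ → ℝ))).ncard ≤
      C * ((t : ℝ) ^ (k + 1) * |(M.map ((↑) : ℤ → ℝ)).det|) ^ ((k : ℝ) / (k + 2))) :
    ∀ᶠ m : ℕ in atTop, Real.log (latticePolytopes (k + 1) m K).ncard ≤
      C * ((2 * m) ^ (k + 1) * (s ^ (k + 1) * |(M.map ((↑) : ℤ → ℝ)).det|)) ^
        ((k : ℝ) / (k + 2)) := by
  have ms_tendsto : Tendsto (fun m : ℕ ↦ m * s) atTop atTop :=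
    tendsto_natCast_atTop_atTop.atTop_mul_const hs
  filter_upwards [(tendsto_nat_ceil_atTop.comp ms_tendsto).eventually hunit,
    ms_tendsto.eventually_ge_atTop 1, eventually_ne_atTop 0] with m hm ms_ge hm0
  simp only [Function.comp_apply] at hm
  set t := ⌈m * s⌉₊
  have ms_le : m * s ≤ t := Nat.le_ceil _
  have t_pos : (0 : ℝ) < t := by linarith
  have t_le : (t : ℝ) ≤ 2 * m * s := by linarith [Nat.ceil_lt_add_one (zero_le_one.trans ms_ge)]
  have ht : t ≠ 0 := by exact_mod_cast t_pos.ne'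
  have det_ne : ((t : ℝ) • M.map ((↑) : ℤ → ℝ)).det ≠ 0 := by
    rw [Matrix.det_smul]
    positivity
  have norm_le : ∀ y ∈ K, ∀ y' ∈ K,
      ‖(m : ℝ) • ((t : ℝ) • M.map ((↑) : ℤ → ℝ))⁻¹ *ᵥ (y - y').ofLp‖ ≤ 1 := fun y hy y' hy' ↦ by
    rw [inv_smul_matrix hM t_pos.ne', Matrix.smul_mulVec, norm_smul, norm_smul,
      Real.norm_natCast, norm_inv, Real.norm_natCast, mul_left_comm, inv_mul_le_iff₀ t_pos, mul_one]
    exact (mul_le_mul_of_nonneg_left (hK y hy y' hy') m.cast_nonneg).trans ms_le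
  refine (monotone_log_natCast (ncard_latticePolytopes_le det_ne hm0 norm_le
    (finite_unitPolytopes_and_log_ncard_le hk hM ht).1)).trans (hm.trans ?_)
  rw [← mul_assoc _ (s ^ (k + 1)), ← mul_pow]
  gcongr

theorem exists_forall_eventually_log_ncard_latticePolytopes_le {d : ℕ} (hd : 2 ≤ d) :
    ∃ C : ℝ, 0 < C ∧ ∀ K : Set (E d), IsCompact K → Convex ℝ K → (interior K).Nonempty →
      ∀ᶠ m : ℕ in atTop, Real.log (latticePolytopes d m K).ncard ≤
        C * (m ^ d * volume.real K) ^ (((d : ℝ) - 1) / (d + 1)) := by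
  obtain ⟨k, rfl⟩ : ∃ k, d = k + 1 := ⟨d - 1, by omega⟩
  have hk : k ≠ 0 := by omega
  obtain ⟨C, hC, hbound⟩ := exists_forall_eventually_log_ncard_unitPolytopes_le hk
  set a : ℝ := 2 ^ (k + 1) * (2 * (4 * (k + 1)) ^ (k + 1) * (k + 1) ^ (k + 1))
  have a_pos : 0 < a := by positivity
  have exponent_eq : (((k + 1 : ℕ) : ℝ) - 1) / ((k + 1 : ℕ) + 1) = (k : ℝ) / (k + 2) := by
    push_cast
    ring
  refine ⟨C * a ^ ((k : ℝ) / (k + 2)), by positivity, fun K hKc hK hint ↦ ?_⟩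
  obtain ⟨M, s, hs, hM, hMK, hvol⟩ :=
    exists_int_matrix_norm_inv_mulVec_sub_le (Nat.add_one_ne_zero k) hKc hK hint
  filter_upwards [eventually_log_ncard_latticePolytopes_le_of_frame hk hs hC.le hM hMK
    (hbound M hM)] with m hm
  rw [exponent_eq, mul_assoc, ← Real.mul_rpow a_pos.le (by positivity)]
  refine hm.trans (mul_le_mul_of_nonneg_left
    (Real.rpow_le_rpow (by positivity) ?_ (by positivity)) hC.le)
  calc (2 * (m : ℝ)) ^ (k + 1) * (s ^ (k + 1) * |(M.map ((↑) : ℤ → ℝ)).det|)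
    _ ≤ (2 * (m : ℝ)) ^ (k + 1) * (2 * (4 * (k + 1)) ^ (k + 1) * (k + 1) ^ (k + 1) *
        volume.real K) := by
      rw [Nat.cast_add_one] at hvol
      exact mul_le_mul_of_nonneg_left hvol (by positivity)
    _ = a * (m ^ (k + 1) * volume.real K) := by ring

end UpperBound

/-- Theorem 2.2: for every convex body `K ⊆ ℝ^d`, if `n` is the number of points of
`(1/m)ℤ^d` in `K`, then `c₁ n^{(d-1)/(d+1)} ≤ log |𝒫_m(K)| ≤ c₂ n^{(d-1)/(d+1)}`
for constants `c₁, c₂ > 0` depending only on `d` and all sufficiently large `m`. -/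
theorem log_number_of_lattice_polytopes (d : ℕ) (hd : 2 ≤ d) :
    ∃ c₁ c₂ : ℝ, 0 < c₁ ∧ 0 < c₂ ∧
      ∀ (K : Set (E d)), IsCompact K → Convex ℝ K → (interior K).Nonempty →
        ∃ M : ℕ, ∀ m : ℕ, M ≤ m →
          c₁ * ((K ∩ scaledLattice d m).ncard : ℝ) ^ (((d : ℝ) - 1) / ((d : ℝ) + 1)) ≤
              Real.log ((latticePolytopes d m K).ncard) ∧
          Real.log ((latticePolytopes d m K).ncard) ≤
              c₂ * ((K ∩ scaledLattice d m).ncard : ℝ) ^ (((d : ℝ) - 1) / ((d : ℝ) + 1)) := by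
  obtain ⟨c, hc, lower⟩ := exists_forall_eventually_le_log_ncard_latticePolytopes hd
  obtain ⟨C, hC, upper⟩ := exists_forall_eventually_log_ncard_latticePolytopes_le hd
  set p := ((d : ℝ) - 1) / ((d : ℝ) + 1)
  have hd_cast : (2 : ℝ) ≤ d := by exact_mod_cast hd
  have p_nonneg : 0 ≤ p := div_nonneg (by linarith) (by positivity)
  refine ⟨c / 2 ^ p, C * 2 ^ p, by positivity, by positivity, fun K hKc hK hint ↦
    eventually_atTop.1 ?_⟩
  filter_upwards [lower K hKc hK hint, upper K hKc hK hint,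
    eventually_ncard_inter_scaledLattice_mem_Icc hKc hK hint]
    with m hlower hupper ⟨le_count, count_le⟩
  set N := ((K ∩ scaledLattice d m).ncard : ℝ)
  set v := (m : ℝ) ^ d * volume.real K
  have v_nonneg : 0 ≤ v := by positivity
  constructor
  · calc c / 2 ^ p * N ^ p
      _ ≤ c / 2 ^ p * (2 * v) ^ p := by gcongr
      _ = c * v ^ p := by rw [Real.mul_rpow zero_le_two v_nonneg]; field_simp
      _ ≤ _ := hlower
  · calc Real.log (latticePolytopes d m K).ncard
      _ ≤ C * v ^ p := hupper
      _ ≤ C * (2 * N) ^ p := by gcongr; linarith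
      _ = C * 2 ^ p * N ^ p := by rw [Real.mul_rpow zero_le_two (by positivity), mul_assoc]
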